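/- arXiv:1306.3910 — 2 statements merged into one kernel-verified Lean document; each statement's English description precedes it below -/
import Mathlib

section
/- Let r > 1/√2 be a real number and let X be a finite set of n points in Euclidean 4-space, each of norm r (i.e., X lies on the sphere S³_r of radius r centered at the origin), such that ‖x − y‖ ≤ 1 for all x, y ∈ X. Then the number of unordered pairs {x, y} ⊆ X with ‖x − y‖ = 1 is at most 2n − 2. -/
attribute [local instance] Classical.propDecidable

/-- The set of unordered pairs of points of `X` at distance exactly `1`
(the edges of the diameter graph of `X`, when `X` has diameter at most `1`). -/
noncomputable def unitPairs (X : Finset (EuclideanSpace ℝ (Fin 4))) :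
    Finset (Finset (EuclideanSpace ℝ (Fin 4))) :=
  (X.powersetCard 2).filter (fun s => ∀ x ∈ s, ∀ y ∈ s, x ≠ y → ‖x - y‖ = 1)

/-!
Gnomonic projection from the center turns the configuration into a centrally symmetric drawing
without crossings, on a two-dimensional sphere, of the bipartite double cover of the diameter graph
`G`. Since the double cover is simple and bipartite, its faces have at least four sides.
Instead of Euler's formula, which would need the topology of the sphere, the count uses the space of
real flows on `G`, whose dimension is at least `e - v + 1`. Summing the angles of the drawing seen
from a point, weighted by a flow, gives a linear functional of the flow that changes only when the
point crosses the drawing, and then by the flow through the crossed edge. The values of this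
functional at the two sides of the `2e` darts therefore span the dual of the flow space; going
around the corners of a face and passing to the antipode, each of them appears, up to sign, for at
least eight of the `4e` pairs of a dart and a side. Hence `e - v + 1 ≤ e / 2`, provided that all
degrees are at least three; vertices of smaller degree are removed one at a time.
-/

open Matrix Filter Topology Set

section Counting

theorem mul_finrank_span_range_le_card {K M ι : Type*} [DivisionRing K] [AddCommGroup M]
    [Module K M] [Fintype ι] {f : ι → M} {k : ℕ}
    (hf : ∀ i, f i ≠ 0 → k ≤ (Finset.univ.filter fun j => f j = f i ∨ f j = -f i).card) :
    k * Module.finrank K (Submodule.span K (range f)) ≤ Fintype.card ι := by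
  obtain ⟨b, hb, hspan, hli⟩ := exists_linearIndependent K (range f)
  have : Fintype b := ((finite_range f).subset hb).fintype
  have eq_of_eq_neg : ∀ m ∈ b, ∀ m' ∈ b, m = -m' → m = m' := fun m hm m' hm' h =>
    congrArg Subtype.val (hli.eq_of_smul_apply_eq_smul_apply (1 : K) (-1) ⟨m, hm⟩ ⟨m', hm'⟩
      one_ne_zero (by simpa using h))
  rw [← hspan, finrank_span_set_eq_card hli, mul_comm, ← Finset.card_univ,
    ← mul_one Finset.univ.card]
  refine Finset.card_mul_le_card_mul (fun m j => f j = m ∨ f j = -m) (fun m hm => ?_)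
    (fun j _ => Finset.card_le_one.2 fun m hm m' hm' => ?_)
  · obtain ⟨i, rfl⟩ := hb (mem_toFinset.1 hm)
    exact hf i (hli.ne_zero ⟨f i, mem_toFinset.1 hm⟩)
  · simp only [Finset.mem_bipartiteBelow, mem_toFinset] at hm hm'
    obtain ⟨hmb, h | h⟩ := hm <;> obtain ⟨hmb', h' | h'⟩ := hm'
    · exact h.symm.trans h'
    · exact eq_of_eq_neg m hmb m' hmb' (h.symm.trans h')
    · exact (eq_of_eq_neg m' hmb' m hmb (h'.symm.trans h)).symm
    · exact neg_injective (h.symm.trans h')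

variable {V : Type*} [Fintype V] (G : SimpleGraph V)

/-- The real flows (circulations) on `G`: antisymmetric functions on darts that satisfy
Kirchhoff's law at every vertex. -/
def flowSpace : Submodule ℝ (G.Dart → ℝ) where
  carrier := {c | (∀ d, c d.symm = -c d) ∧ ∀ v, ∑ d with d.fst = v, c d = 0}
  add_mem' ha hb := ⟨fun d => by simp [ha.1, hb.1, add_comm],
    fun v => by simp [Finset.sum_add_distrib, ha.2, hb.2]⟩
  zero_mem' := by simp
  smul_mem' t c hc := ⟨fun d => by simp [hc.1],
    fun v => by simp [← Finset.mul_sum, hc.2]⟩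

variable {G}

theorem flow_symm (c : flowSpace G) (d : G.Dart) : c.1 d.symm = -c.1 d :=
  c.2.1 d

theorem flow_sum_fst_eq_zero (c : flowSpace G) (v : V) : ∑ d with d.fst = v, c.1 d = 0 :=
  c.2.2 v

theorem sum_fst_mul_flow (c : flowSpace G) (f : V → ℝ) :
    ∑ d : G.Dart, f d.fst * c.1 d = 0 := by
  rw [← Finset.sum_fiberwise Finset.univ fun d : G.Dart => d.fst]
  refine Finset.sum_eq_zero fun v _ => ?_
  rw [Finset.sum_congr rfl fun d hd => by rw [(Finset.mem_filter.1 hd).2], ← Finset.mul_sum,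
    flow_sum_fst_eq_zero, mul_zero]

theorem sum_symm_mul_flow (c : flowSpace G) (f : G.Dart → ℝ) :
    ∑ d : G.Dart, f d.symm * c.1 d = -∑ d, f d * c.1 d := by
  rw [← Equiv.sum_comp SimpleGraph.Dart.symm_involutive.toPerm, ← Finset.sum_neg_distrib]
  simp [flow_symm]

variable (G) in
/-- A function on darts, summed over the two darts of each edge and over the darts leaving each
vertex; antisymmetry and Kirchhoff's law say that both families of sums vanish. -/
noncomputable def edgeVertexSums : (G.Dart → ℝ) →ₗ[ℝ] (G.edgeSet → ℝ) × (V → ℝ) :=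
  LinearMap.prod (LinearMap.pi fun e => ∑ d with d.edge = e.1, LinearMap.proj d)
    (LinearMap.pi fun v => ∑ d with d.fst = v, LinearMap.proj d)

theorem ker_edgeVertexSums_le : LinearMap.ker (edgeVertexSums G) ≤ flowSpace G := by
  intro c hc
  simp only [edgeVertexSums, LinearMap.ker_prod, Submodule.mem_inf, LinearMap.mem_ker,
    funext_iff, LinearMap.pi_apply, LinearMap.sum_apply, LinearMap.proj_apply, Pi.zero_apply,
    Subtype.forall] at hc
  refine ⟨fun d => ?_, hc.2⟩
  have := hc.1 d.edge d.edge_mem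
  have hfib : Finset.univ.filter (fun d' : G.Dart => d'.edge = d.edge) = {d, d.symm} := by
    ext d'
    simpa using SimpleGraph.dart_edge_eq_iff d' d
  rw [hfib, Finset.sum_pair d.symm_ne.symm] at this
  linarith

theorem edgeVertexSums_sum_eq (c : G.Dart → ℝ) :
    ∑ e, (edgeVertexSums G c).1 e = ∑ v, (edgeVertexSums G c).2 v := by
  have hedge : ∑ e : G.edgeSet, ∑ d with d.edge = e.1, c d = ∑ d, c d := by
    rw [← Finset.sum_fiberwise Finset.univ (fun d : G.Dart => (⟨d.edge, d.edge_mem⟩ : G.edgeSet)) c]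
    simp only [Subtype.ext_iff]
  simpa [edgeVertexSums, hedge] using
    (Finset.sum_fiberwise Finset.univ (fun d : G.Dart => d.fst) c).symm

theorem card_edgeFinset_add_one_le [Nonempty V] :
    G.edgeFinset.card + 1 ≤ Module.finrank ℝ (flowSpace G) + Fintype.card V := by
  have range_ne_top : LinearMap.range (edgeVertexSums G) ≠ ⊤ := by
    rw [Ne, Submodule.eq_top_iff']
    intro h
    obtain ⟨v⟩ := ‹Nonempty V›
    obtain ⟨c, hc⟩ := h (0, Pi.single v 1)
    have := edgeVertexSums_sum_eq c
    simp [hc] at this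
  have hrange := Submodule.finrank_lt range_ne_top
  have hker := Submodule.finrank_mono (ker_edgeVertexSums_le (G := G))
  have hnullity := LinearMap.finrank_range_add_finrank_ker (edgeVertexSums G)
  rw [Module.finrank_prod, Module.finrank_fintype_fun_eq_card, Module.finrank_fintype_fun_eq_card,
    ← SimpleGraph.edgeFinset_card] at hrange
  rw [Module.finrank_fintype_fun_eq_card, G.dart_card_eq_twice_card_edges] at hnullity
  omega

theorem span_range_eq_top_of_forall_eq_zero {K M ι : Type*} [Field K] [AddCommGroup M]
    [Module K M] [FiniteDimensional K M] {f : ι → Module.Dual K M}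
    (hf : ∀ m, (∀ i, f i m = 0) → m = 0) : Submodule.span K (range f) = ⊤ := by
  rw [← Subspace.dualCoannihilator_dualAnnihilator_eq (W := Submodule.span K (range f)),
    (Submodule.eq_bot_iff _).2 fun m hm => hf m fun i => (Submodule.mem_dualCoannihilator _).1 hm _
      (Submodule.subset_span (mem_range_self i)), Submodule.dualAnnihilator_bot]

section Corners

variable {M : Type*} [AddCommGroup M] {w : G.Dart × Bool → M}
  (symm : ∀ d s, w (d.symm, s) = -w (d, s))
  (corner : ∀ d s, ∃ d', d'.fst = d.fst ∧ d'.snd ≠ d.snd ∧ w (d, s) = w (d', !s))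
include symm corner

theorem four_le_card_fiber_of_corner (i : G.Dart × Bool) :
    4 ≤ (Finset.univ.filter fun j => w j = w i).card := by
  obtain ⟨d, s⟩ := i
  obtain ⟨d', -, hd', hw⟩ := corner d s
  obtain ⟨e, he, -, hwe⟩ := corner d.symm s
  obtain ⟨f, hf, -, hwf⟩ := corner d'.symm (!s)
  change e.fst = d.snd at he
  change f.fst = d'.snd at hf
  rw [Bool.not_not] at hwf
  have hwe' : w (e.symm, !s) = w (d, s) := by rw [symm, ← hwe, symm, neg_neg]
  have hwf' : w (f.symm, s) = w (d, s) := by rw [symm, ← hwf, symm, neg_neg, hw]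
  have hfd : f.symm ≠ d := fun h => hd' (by rw [← h, ← hf]; rfl)
  have hed : e.symm ≠ d' := fun h => hd' (by rw [← h, ← he]; rfl)
  have hcard :
      ({(d, s), (d', !s), (e.symm, !s), (f.symm, s)} : Finset (G.Dart × Bool)).card = 4 := by
    rw [Finset.card_insert_of_notMem, Finset.card_insert_of_notMem, Finset.card_insert_of_notMem,
      Finset.card_singleton] <;> simp [hfd.symm, hed.symm]
  rw [← hcard]
  refine Finset.card_le_card fun j hj => Finset.mem_filter.2 ⟨Finset.mem_univ j, ?_⟩
  simp only [Finset.mem_insert, Finset.mem_singleton] at hj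
  obtain rfl | rfl | rfl | rfl := hj
  exacts [rfl, hw.symm, hwe', hwf']

theorem eight_le_card_fiber_or_neg_of_corner [IsAddTorsionFree M] {i : G.Dart × Bool}
    (hi : w i ≠ 0) : 8 ≤ (Finset.univ.filter fun j => w j = w i ∨ w j = -w i).card := by
  have hfiber := four_le_card_fiber_of_corner symm corner i
  have hneg := four_le_card_fiber_of_corner symm corner (i.1.symm, i.2)
  rw [symm, Prod.mk.eta] at hneg
  rw [Finset.filter_or, Finset.card_union_of_disjoint]
  · omega
  · exact Finset.disjoint_filter.2 fun j _ h h' => hi (self_eq_neg.1 (h.symm.trans h'))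

end Corners

/-- By `jump` the functionals at the sides of the darts span the dual of the flow space; by `symm`
and `corner` each of them occurs, up to sign, at least eight times. -/
theorem card_edgeFinset_add_two_le_of_corner [Nonempty V]
    {w : G.Dart × Bool → Module.Dual ℝ (flowSpace G)} {κ : ℝ} (hκ : κ ≠ 0)
    (jump : ∀ d c, w (d, true) c - w (d, false) c = κ * c.1 d)
    (symm : ∀ d s, w (d.symm, s) = -w (d, s))
    (corner : ∀ d s, ∃ d', d'.fst = d.fst ∧ d'.snd ≠ d.snd ∧ w (d, s) = w (d', !s)) :
    G.edgeFinset.card + 2 ≤ 2 * Fintype.card V := by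
  have hspan : Submodule.span ℝ (range w) = ⊤ :=
    span_range_eq_top_of_forall_eq_zero fun c hc => Subtype.ext <| funext fun d => by
      simpa [hc, hκ] using (jump d c).symm
  have := IsAddTorsionFree.of_isTorsionFree ℝ (Module.Dual ℝ (flowSpace G))
  have hdim := mul_finrank_span_range_le_card (K := ℝ)
    fun i hi => eight_le_card_fiber_or_neg_of_corner symm corner (i := i) hi
  rw [hspan, finrank_top, Subspace.dual_finrank_eq, Fintype.card_prod, Fintype.card_bool,
    G.dart_card_eq_twice_card_edges] at hdim
  have := card_edgeFinset_add_one_le (G := G)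
  omega

end Counting

section Turn

theorem dotProduct_self_pos {v : Fin 3 → ℝ} (hv : v ≠ 0) : 0 < v ⬝ᵥ v :=
  dotProduct_star_self_pos_iff.2 hv

theorem exists_eq_smul_add_smul_of_triple_product_eq_zero {p v w : Fin 3 → ℝ}
    (hvw : v ⨯₃ w ≠ 0) (hp : p ⬝ᵥ v ⨯₃ w = 0) : ∃ a b : ℝ, p = a • v + b • w := by
  have hne := (dotProduct_self_pos hvw).ne'
  refine ⟨(v ⨯₃ w ⬝ᵥ v ⨯₃ w)⁻¹ * (p ⬝ᵥ w ⨯₃ (v ⨯₃ w)),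
    (v ⨯₃ w ⬝ᵥ v ⨯₃ w)⁻¹ * (p ⬝ᵥ (v ⨯₃ w) ⨯₃ v), ?_⟩
  have expansion : (v ⨯₃ w ⬝ᵥ v ⨯₃ w) • p = (p ⬝ᵥ w ⨯₃ (v ⨯₃ w)) • v +
      (p ⬝ᵥ (v ⨯₃ w) ⨯₃ v) • w + (p ⬝ᵥ v ⨯₃ w) • v ⨯₃ w := by
    ext i
    fin_cases i <;> simp only [cross_apply, vec3_dotProduct, cons_val, Pi.add_apply, Pi.smul_apply,
      smul_eq_mul, Fin.zero_eta, Fin.mk_one, Fin.reduceFinMk] <;> ring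
  rw [hp, zero_smul, add_zero] at expansion
  rw [mul_smul, mul_smul, ← smul_add, ← expansion, inv_smul_smul₀ hne]

/-- The complex number whose argument is the angle from `v` to `w` seen along the axis `p`: the
real part compares the projections of `v` and `w` to the plane orthogonal to `p`, turned by a right
angle, and the imaginary part is normalized so that `turn` is multiplicative, see `turn_mul`. -/
noncomputable def turn (p v w : Fin 3 → ℝ) : ℂ :=
  ⟨p ⨯₃ v ⬝ᵥ p ⨯₃ w, √(p ⬝ᵥ p) * (p ⬝ᵥ v ⨯₃ w)⟩

theorem turn_mul (p v w s : Fin 3 → ℝ) :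
    turn p v w * turn p w s = turn p w w * turn p v s := by
  have hsq : √(p ⬝ᵥ p) ^ 2 = p ⬝ᵥ p := Real.sq_sqrt (by simpa using dotProduct_star_self_nonneg p)
  apply Complex.ext
  · have : p ⨯₃ v ⬝ᵥ p ⨯₃ w * (p ⨯₃ w ⬝ᵥ p ⨯₃ s) -
        p ⬝ᵥ p * ((p ⬝ᵥ v ⨯₃ w) * (p ⬝ᵥ w ⨯₃ s)) = p ⨯₃ w ⬝ᵥ p ⨯₃ w * (p ⨯₃ v ⬝ᵥ p ⨯₃ s) := by
      simp only [cross_apply, vec3_dotProduct, cons_val]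
      ring
    simp only [turn, Complex.mul_re, cross_self, dotProduct_zero, mul_zero, zero_mul, sub_zero]
    linear_combination this - (p ⬝ᵥ v ⨯₃ w) * (p ⬝ᵥ w ⨯₃ s) * hsq
  · have : p ⨯₃ v ⬝ᵥ p ⨯₃ w * (p ⬝ᵥ w ⨯₃ s) + (p ⬝ᵥ v ⨯₃ w) * (p ⨯₃ w ⬝ᵥ p ⨯₃ s) =
        p ⨯₃ w ⬝ᵥ p ⨯₃ w * (p ⬝ᵥ v ⨯₃ s) := by
      simp only [cross_apply, vec3_dotProduct, cons_val]
      ring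
    simp only [turn, Complex.mul_im, cross_self, dotProduct_zero, mul_zero, zero_mul, add_zero]
    linear_combination √(p ⬝ᵥ p) * this

theorem turn_self (p v : Fin 3 → ℝ) : turn p v v = (p ⨯₃ v ⬝ᵥ p ⨯₃ v : ℝ) := by
  apply Complex.ext <;> simp [turn]

open ComplexConjugate in
theorem turn_swap (p v w : Fin 3 → ℝ) : turn p w v = conj (turn p v w) := by
  apply Complex.ext
  · simp [turn, dotProduct_comm]
  · simp only [turn, ← cross_anticomm v w, dotProduct_neg, mul_neg, Complex.conj_im]

open ComplexConjugate in
theorem turn_neg_axis (p v w : Fin 3 → ℝ) : turn (-p) v w = conj (turn p v w) := by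
  apply Complex.ext <;> simp [turn, -cross_anticomm]

theorem turn_neg_right (p v w : Fin 3 → ℝ) : turn p v (-w) = -turn p v w := by
  apply Complex.ext <;> simp [turn, -cross_anticomm]

theorem turn_ne_zero_iff {p v w : Fin 3 → ℝ} :
    turn p v w ≠ 0 ↔ p ⨯₃ v ≠ 0 ∧ p ⨯₃ w ≠ 0 := by
  have h := turn_mul p v w v
  rw [turn_swap p v w, Complex.mul_conj, turn_self, turn_self, ← Complex.ofReal_mul,
    Complex.ofReal_inj] at h
  rw [Ne, ← Complex.normSq_eq_zero, h, mul_eq_zero, dotProduct_self_eq_zero,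
    dotProduct_self_eq_zero, not_or, and_comm]

theorem exists_arg_turn_eq {p v w e : Fin 3 → ℝ} (hvw : turn p v w ≠ 0) (he : p ⨯₃ e ≠ 0) :
    ∃ k : ℤ, Complex.arg (turn p v w) =
      Complex.arg (turn p e w) - Complex.arg (turn p e v) + 2 * Real.pi * k := by
  obtain ⟨hv, -⟩ := turn_ne_zero_iff.1 hvw
  have hadd : (Complex.arg (turn p v w) : Real.Angle) =
      Complex.arg (turn p e w) - Complex.arg (turn p e v) := by
    rw [eq_sub_iff_add_eq, add_comm, ← Complex.arg_mul_coe_angle (turn_ne_zero_iff.2 ⟨he, hv⟩) hvw,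
      turn_mul, turn_self, Complex.arg_real_mul _ (dotProduct_self_pos hv)]
  obtain ⟨k, hk⟩ := Real.Angle.angle_eq_iff_two_pi_dvd_sub.1 hadd
  exact ⟨k, sub_eq_iff_eq_add'.1 hk⟩

theorem exists_arg_turn_neg_right_eq {p v w : Fin 3 → ℝ} (hvw : turn p v w ≠ 0) :
    ∃ k : ℤ, Complex.arg (turn p v (-w)) =
      Complex.arg (turn p v w) + Real.pi + 2 * Real.pi * k := by
  have hadd : (Complex.arg (turn p v (-w)) : Real.Angle) = Complex.arg (turn p v w) + Real.pi := by
    rw [turn_neg_right, Complex.arg_neg_coe_angle hvw]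
  obtain ⟨k, hk⟩ := Real.Angle.angle_eq_iff_two_pi_dvd_sub.1 hadd
  exact ⟨k, sub_eq_iff_eq_add'.1 hk⟩

theorem continuous_cross (v : Fin 3 → ℝ) : Continuous fun p => p ⨯₃ v :=
  (crossProduct.flip v).continuous_of_finiteDimensional

theorem continuous_turn (v w : Fin 3 → ℝ) : Continuous fun p => turn p v w :=
  Complex.equivRealProdCLM.symm.continuous.comp
    (((continuous_cross v).dotProduct (continuous_cross w)).prodMk
      ((continuous_id.dotProduct continuous_id).sqrt.mul
        (continuous_id.dotProduct continuous_const)))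

theorem turn_mem_slitPlane_of_triple_product_ne_zero {p v w : Fin 3 → ℝ}
    (h : p ⬝ᵥ v ⨯₃ w ≠ 0) : turn p v w ∈ Complex.slitPlane := by
  have hp : p ≠ 0 := fun hp => h (by simp [hp])
  exact Or.inr (mul_ne_zero (Real.sqrt_ne_zero'.2 (dotProduct_self_pos hp)) h)

theorem turn_mem_slitPlane_of_notMem_cone {p v w : Fin 3 → ℝ} (hvw : v ⨯₃ w ≠ 0)
    (hp : ∀ a b : ℝ, 0 ≤ a → 0 ≤ b → p ≠ a • v + b • w)
    (hp' : ∀ a b : ℝ, 0 ≤ a → 0 ≤ b → -p ≠ a • v + b • w) : turn p v w ∈ Complex.slitPlane := by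
  by_cases h : p ⬝ᵥ v ⨯₃ w = 0
  · obtain ⟨a, b, rfl⟩ := exists_eq_smul_add_smul_of_triple_product_eq_zero hvw h
    have hab : a * b < 0 := by
      by_contra! hab
      obtain ⟨ha, hb⟩ | ⟨ha, hb⟩ := mul_nonneg_iff.1 hab
      · exact hp a b ha hb rfl
      · exact hp' (-a) (-b) (neg_nonneg.2 ha) (neg_nonneg.2 hb) (by simp [add_comm])
    have hre : (turn (a • v + b • w) v w).re = -(a * b) * (v ⨯₃ w ⬝ᵥ v ⨯₃ w) := by
      simp only [turn, cross_apply, vec3_dotProduct, cons_val, Pi.add_apply, Pi.smul_apply,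
        smul_eq_mul]
      ring
    exact Or.inl (hre ▸ mul_pos (neg_pos.2 hab) (dotProduct_self_pos hvw))
  · exact turn_mem_slitPlane_of_triple_product_ne_zero h

theorem tendsto_arg_turn_sub_arg_turn {p v n : Fin 3 → ℝ} (h : 0 < n ⬝ᵥ v ⨯₃ p) :
    Tendsto (fun τ : ℝ => Complex.arg (turn (p + τ • n) v p) - Complex.arg (turn (p - τ • n) v p))
      (𝓝[>] 0) (𝓝 Real.pi) := by
  let g : ℝ → ℂ := fun τ => ⟨(p + τ • n) ⨯₃ v ⬝ᵥ n ⨯₃ p,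
    √((p + τ • n) ⬝ᵥ (p + τ • n)) * (n ⬝ᵥ v ⨯₃ p)⟩
  have hturn : ∀ τ, turn (p + τ • n) v p = τ * g τ := by
    intro τ
    have him : (p + τ • n) ⬝ᵥ v ⨯₃ p = τ * (n ⬝ᵥ v ⨯₃ p) := by simp
    apply Complex.ext
    · simp [g, turn]
    · simp only [g, turn, him, Complex.im_ofReal_mul]
      ring
  have hg : Continuous g := by
    have hline : Continuous fun τ : ℝ => p + τ • n := by fun_prop
    exact Complex.equivRealProdCLM.symm.continuous.comp
      ((((continuous_cross v).comp hline).dotProduct continuous_const).prodMk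
        ((hline.dotProduct hline).sqrt.mul continuous_const))
  have hg0 : 0 < (g 0).im := by
    have hp : p ≠ 0 := by rintro rfl; simp at h
    simpa [g] using mul_pos (Real.sqrt_pos.2 (dotProduct_self_pos hp)) h
  have harg : ContinuousAt (fun τ => Complex.arg (g τ)) 0 :=
    ContinuousAt.comp (g := Complex.arg) (Complex.continuousAt_arg (Or.inr hg0.ne')) hg.continuousAt
  have hneg : Tendsto (fun τ : ℝ => -τ) (𝓝 0) (𝓝 0) := by simpa using tendsto_neg (0 : ℝ)
  have hlim : Tendsto (fun τ : ℝ => Complex.arg (g τ) - Complex.arg (g (-τ)) + Real.pi) (𝓝[>] 0)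
      (𝓝 Real.pi) := by
    have := (harg.tendsto.sub (harg.tendsto.comp hneg)).add_const Real.pi
    rw [sub_self, zero_add] at this
    exact this.mono_left nhdsWithin_le_nhds
  have him_pos : ∀ᶠ τ : ℝ in 𝓝 0, 0 < (g (-τ)).im :=
    ((Complex.continuous_im.comp hg).tendsto 0 |>.comp hneg).eventually (lt_mem_nhds hg0)
  refine hlim.congr' ?_
  filter_upwards [self_mem_nhdsWithin, nhdsWithin_le_nhds him_pos] with τ hτ hpos
  have hsub : turn (p - τ • n) v p = τ * -g (-τ) := by
    rw [sub_eq_add_neg, ← neg_smul, hturn, Complex.ofReal_neg, neg_mul, mul_neg]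
  rw [hturn, hsub, Complex.arg_real_mul _ hτ, Complex.arg_real_mul _ hτ,
    Complex.arg_neg_eq_arg_sub_pi_of_im_pos hpos]
  ring

theorem smul_add_smul_add_smul_ne_of_div_le_div {e p q r : Fin 3 → ℝ} {σ a b s x y : ℝ}
    (hep : e ⨯₃ p ≠ 0) (hq : 0 < σ * (q ⬝ᵥ e ⨯₃ p))
    (hr : 0 < σ * (r ⬝ᵥ e ⨯₃ p) → (e ⨯₃ p ⬝ᵥ e ⨯₃ r) / (σ * (r ⬝ᵥ e ⨯₃ p)) ≤
      (e ⨯₃ p ⬝ᵥ e ⨯₃ q) / (σ * (q ⬝ᵥ e ⨯₃ p)))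
    (ha : 0 < a) (hb : 0 < b) (hy : 0 ≤ y) : s • e + (a • p + b • q) ≠ x • e + y • r := by
  intro h
  have htriple : b * (σ * (q ⬝ᵥ e ⨯₃ p)) = y * (σ * (r ⬝ᵥ e ⨯₃ p)) := by
    have := congrArg (fun v => σ * (v ⬝ᵥ e ⨯₃ p)) h
    simp only [add_dotProduct, smul_dotProduct, dot_self_cross, dot_cross_self, smul_eq_mul] at this
    linarith
  have hproj : a * (e ⨯₃ p ⬝ᵥ e ⨯₃ p) + b * (e ⨯₃ p ⬝ᵥ e ⨯₃ q) = y * (e ⨯₃ p ⬝ᵥ e ⨯₃ r) := by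
    have := congrArg (fun v => e ⨯₃ p ⬝ᵥ e ⨯₃ v) h
    simpa only [map_add, map_smul, cross_self, smul_zero, zero_add, dotProduct_add,
      dotProduct_smul, smul_eq_mul] using this
  have hr_pos : 0 < σ * (r ⬝ᵥ e ⨯₃ p) := pos_of_mul_pos_right (htriple ▸ mul_pos hb hq) hy
  have hle := (div_le_div_iff₀ hr_pos hq).1 (hr hr_pos)
  have hpos := mul_pos (mul_pos ha (dotProduct_self_pos hep)) hq
  have hneg : a * (e ⨯₃ p ⬝ᵥ e ⨯₃ p) * (σ * (q ⬝ᵥ e ⨯₃ p)) ≤ 0 := by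
    linear_combination mul_le_mul_of_nonneg_left hle hy + (σ * (q ⬝ᵥ e ⨯₃ p)) * hproj -
      (e ⨯₃ p ⬝ᵥ e ⨯₃ q) * htriple
  exact hneg.not_gt hpos

end Turn

section Drawing

variable {V M : Type*} {G : SimpleGraph V} [AddCommGroup M] [Module ℝ M]

/-- The cone spanned by the images of the darts leaving `x`; in a drawing it plays the role of the
vertex `x`. -/
def edgeCone (u : G.Dart → M) (x : V) : PointedCone ℝ M :=
  PointedCone.hull ℝ (u '' {d | d.fst = x})

theorem map_mem_edgeCone (u : G.Dart → M) (d : G.Dart) : u d ∈ edgeCone u d.fst :=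
  Submodule.subset_span ⟨d, rfl, rfl⟩

theorem edgeCone_le_span (u : G.Dart → M) (x : V) :
    edgeCone u x ≤ (Submodule.span ℝ (range u)).restrictScalars _ :=
  Submodule.span_le.2 ((image_subset_range u _).trans Submodule.subset_span)

theorem edgeCone_comp {N : Type*} [AddCommGroup N] [Module ℝ N] (f : M →ₗ[ℝ] N)
    (u : G.Dart → M) (x : V) : edgeCone (f ∘ u) x = (edgeCone u x).map f := by
  rw [edgeCone, edgeCone, PointedCone.map, PointedCone.hull, Submodule.map_span, image_comp]
  rfl

variable [Fintype V]

/-- The sum of the images of the darts leaving `x`, an interior direction of `edgeCone u x`. -/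
noncomputable def hub (u : G.Dart → M) (x : V) : M :=
  ∑ d with d.fst = x, u d

/-- A conical, centrally symmetric drawing of the bipartite double cover of `G` without crossings:
the two copies of a vertex `x` are the opposite cones `edgeCone u x` and `-edgeCone u x`, and the
edge of a dart `d` is the segment from `hub u d.fst` to `-hub u d.snd` through `u d`. The rays
`u d` are the only contacts between the cones. -/
structure IsAntipodalDrawing (u : G.Dart → M) : Prop where
  map_symm : ∀ d, u d.symm = -u d
  add_ne_smul : ∀ {d d' : G.Dart}, d'.fst = d.fst → d' ≠ d →
    ∀ q ∈ edgeCone u d.fst, ∀ k : ℝ, u d' + q ≠ k • u d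
  disjoint : ∀ {x y}, x ≠ y → Disjoint (edgeCone u x) (edgeCone u y)
  eq_smul_of_neg_mem : ∀ {x y}, x ≠ y → ∀ {p}, p ∈ edgeCone u x → -p ∈ edgeCone u y →
    p = 0 ∨ ∃ d : G.Dart, d.fst = x ∧ d.snd = y ∧ ∃ t : ℝ, p = t • u d
  three_le_degree : ∀ x, 3 ≤ G.degree x

theorem hub_mem_edgeCone (u : G.Dart → M) (x : V) : hub u x ∈ edgeCone u x :=
  Submodule.sum_mem _ fun d hd => (Finset.mem_filter.1 hd).2 ▸ map_mem_edgeCone u d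

namespace IsAntipodalDrawing

variable {u : G.Dart → M} (hu : IsAntipodalDrawing u)
include hu

theorem map {N : Type*} [AddCommGroup N] [Module ℝ N] {f : M →ₗ[ℝ] N}
    (hf : InjOn f (Submodule.span ℝ (range u))) : IsAntipodalDrawing (f ∘ u) where
  map_symm d := by simp [hu.map_symm]
  add_ne_smul {d d'} hfst hne q hq k := by
    rw [edgeCone_comp] at hq
    obtain ⟨q', hq', rfl⟩ := PointedCone.mem_map.1 hq
    have hmem (d : G.Dart) : u d ∈ Submodule.span ℝ (range u) :=
      Submodule.subset_span (mem_range_self d)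
    simpa only [Function.comp, ← map_add, ← map_smul] using
      hf.ne (add_mem (hmem d') (edgeCone_le_span u _ hq')) (Submodule.smul_mem _ k (hmem d))
        (hu.add_ne_smul hfst hne q' hq' k)
  disjoint {x y} hxy := by
    rw [edgeCone_comp, edgeCone_comp, Submodule.disjoint_def]
    rintro _ ⟨p, hp, rfl⟩ ⟨q, hq, hqp⟩
    obtain rfl := hf (edgeCone_le_span u y hq) (edgeCone_le_span u x hp) hqp
    simp [(Submodule.disjoint_def.1 (hu.disjoint hxy)) q hp hq]
  eq_smul_of_neg_mem {x y} hxy p hp hneg := by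
    rw [edgeCone_comp] at hp hneg
    obtain ⟨p', hp', rfl⟩ := PointedCone.mem_map.1 hp
    obtain ⟨q, hq, hqp⟩ := PointedCone.mem_map.1 hneg
    rw [← map_neg] at hqp
    obtain rfl := hf (edgeCone_le_span u y hq) (neg_mem (edgeCone_le_span u x hp')) hqp
    obtain rfl | ⟨d, hx, hy, t, rfl⟩ := hu.eq_smul_of_neg_mem hxy hp' hq
    · exact Or.inl (map_zero f)
    · exact Or.inr ⟨d, hx, hy, t, by simp⟩
  three_le_degree := hu.three_le_degree

theorem exists_dart_snd_ne_snd_ne (x a b : V) :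
    ∃ d : G.Dart, d.fst = x ∧ d.snd ≠ a ∧ d.snd ≠ b := by
  obtain ⟨y, hy, hyab⟩ := Finset.exists_mem_notMem_of_card_lt_card (s := {a, b})
    (t := G.neighborFinset x) (Finset.card_le_two.trans_lt (hu.three_le_degree x))
  simp only [Finset.mem_insert, Finset.mem_singleton, not_or] at hyab
  exact ⟨⟨(x, y), (G.mem_neighborFinset x y).1 hy⟩, rfl, hyab⟩

theorem exists_dart_ne (d : G.Dart) : ∃ d' : G.Dart, d'.fst = d.fst ∧ d' ≠ d := by
  obtain ⟨d', hfst, hne, -⟩ := hu.exists_dart_snd_ne_snd_ne d.fst d.snd d.snd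
  exact ⟨d', hfst, fun h => hne (h ▸ rfl)⟩

theorem map_ne_zero (d : G.Dart) : u d ≠ 0 := by
  obtain ⟨d', hfst, hne⟩ := hu.exists_dart_ne d
  simpa using hu.add_ne_smul hfst.symm hne.symm 0 (zero_mem _) 0

theorem neg_map_notMem_edgeCone (d : G.Dart) : -u d ∉ edgeCone u d.fst := by
  obtain ⟨d', hfst, hne⟩ := hu.exists_dart_ne d
  intro h
  exact hu.add_ne_smul hfst.symm hne.symm (-u d) (hfst ▸ h) 0 (by simp)

theorem eq_zero_of_neg_mem {x : V} {p : M} (hp : p ∈ edgeCone u x) (hp' : -p ∈ edgeCone u x) :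
    p = 0 := by
  induction hp using Submodule.span_induction with
  | mem p hp =>
    obtain ⟨d, rfl, rfl⟩ := hp
    exact absurd hp' (hu.neg_map_notMem_edgeCone d)
  | zero => rfl
  | add p q hp hq ihp ihq =>
    have hneg_p : -p ∈ edgeCone u x := by
      have := (edgeCone u x).add_mem hq hp'
      rwa [neg_add_rev, add_neg_cancel_left] at this
    have hneg_q : -q ∈ edgeCone u x := by
      have := (edgeCone u x).add_mem hp hp'
      rwa [neg_add, add_neg_cancel_left] at this
    rw [ihp hneg_p, ihq hneg_q, add_zero]
  | smul a p _ ih =>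
    obtain rfl | ha := eq_or_ne a 0
    · exact zero_smul _ p
    · rw [ih (by simpa [ha] using Submodule.smul_mem _ a⁻¹ hp'), smul_zero]

theorem eq_zero_of_smul_hub_add_eq_smul {d : G.Dart} {s k : ℝ} (hs : 0 ≤ s) {q : M}
    (hq : q ∈ edgeCone u d.fst) (h : s • hub u d.fst + q = k • u d) : s = 0 := by
  by_contra hne
  obtain ⟨d', hfst, hd'⟩ := hu.exists_dart_ne d
  obtain ⟨q', hq', hhub⟩ : ∃ q' ∈ edgeCone u d.fst, hub u d.fst = u d' + q' := by
    refine ⟨_, ?_, (Finset.add_sum_erase _ u (by simpa using hfst)).symm⟩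
    exact Submodule.sum_mem _ fun d'' hd'' =>
      (Finset.mem_filter.1 (Finset.mem_of_mem_erase hd'')).2 ▸ map_mem_edgeCone u d''
  refine hu.add_ne_smul hfst hd' (q' + s⁻¹ • q)
    (add_mem hq' (PointedCone.smul_mem _ (inv_nonneg.2 hs) hq)) (s⁻¹ * k) ?_
  rw [← add_assoc, ← hhub, mul_smul, ← h, smul_add, inv_smul_smul₀ hne]

theorem map_ne_smul_hub_add_smul {d d' : G.Dart} (hfst : d'.fst = d.fst) (hne : d' ≠ d)
    {a b : ℝ} (ha : 0 ≤ a) (hb : 0 ≤ b) : u d ≠ a • hub u d'.fst + b • u d' := by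
  intro h
  rw [hfst] at h
  have hmem : b • u d' ∈ edgeCone u d.fst :=
    hfst ▸ PointedCone.smul_mem _ hb (map_mem_edgeCone u d')
  obtain rfl : a = 0 :=
    hu.eq_zero_of_smul_hub_add_eq_smul ha hmem (h.symm.trans (one_smul ℝ _).symm)
  rw [zero_smul, zero_add] at h
  refine hu.add_ne_smul hfst.symm hne.symm 0 (zero_mem _) b ?_
  rw [add_zero, h]

theorem dart_eq_of_map_eq_smul {d d' : G.Dart} (hfst : d'.fst = d.fst) {t : ℝ}
    (h : u d' = t • u d) : d' = d :=
  by_contra fun hne => hu.add_ne_smul hfst hne 0 (zero_mem _) t (by rw [add_zero, h])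

theorem linearIndependent_hub_map (d : G.Dart) :
    LinearIndependent ℝ ![hub u d.fst, u d] := by
  rw [LinearIndependent.pair_symm_iff, LinearIndependent.pair_iff' (hu.map_ne_zero d)]
  intro k h
  exact one_ne_zero (hu.eq_zero_of_smul_hub_add_eq_smul zero_le_one (zero_mem _)
    (by rw [one_smul, add_zero, h]))

end IsAntipodalDrawing

end Drawing

section Winding

variable {V : Type*} [Fintype V] {G : SimpleGraph V} {u : G.Dart → Fin 3 → ℝ}

/-- The angle under which the segment from `hub u d.fst` to `u d`, the first half of the edge
drawn for `d`, is seen from the axis through `p`. -/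
noncomputable def dartAngle (u : G.Dart → Fin 3 → ℝ) (p : Fin 3 → ℝ) (d : G.Dart) : ℝ :=
  Complex.arg (turn p (hub u d.fst) (u d))

/-- The points outside the drawing and its antipodal image; this is stronger than not lying on
them, in the form in which `dartAngle` is continuous. -/
def offDrawing (u : G.Dart → Fin 3 → ℝ) : Set (Fin 3 → ℝ) :=
  {p | ∀ d, turn p (hub u d.fst) (u d) ∈ Complex.slitPlane}

/-- The total angle, weighted by a flow, under which the drawing is seen from `p`: the analogue of a
winding number. -/
noncomputable def winding (u : G.Dart → Fin 3 → ℝ) (p : Fin 3 → ℝ) :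
    Module.Dual ℝ (flowSpace G) :=
  ∑ d, dartAngle u p d • LinearMap.proj d ∘ₗ (flowSpace G).subtype

theorem winding_apply (u : G.Dart → Fin 3 → ℝ) (p : Fin 3 → ℝ) (c : flowSpace G) :
    winding u p c = ∑ d, dartAngle u p d * c.1 d := by
  simp [winding, LinearMap.sum_apply]

theorem dartAngle_neg {p : Fin 3 → ℝ} (hp : p ∈ offDrawing u) (d : G.Dart) :
    dartAngle u (-p) d = -dartAngle u p d := by
  rw [dartAngle, turn_neg_axis, Complex.arg_conj, if_neg (Complex.mem_slitPlane_iff_arg.1 (hp d)).1,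
    dartAngle]

theorem winding_neg {p : Fin 3 → ℝ} (hp : p ∈ offDrawing u) : winding u (-p) = -winding u p := by
  ext c
  simp [winding_apply, dartAngle_neg hp]

theorem continuousAt_dartAngle {p : Fin 3 → ℝ} {d : G.Dart}
    (hp : turn p (hub u d.fst) (u d) ∈ Complex.slitPlane) :
    ContinuousAt (fun q => dartAngle u q d) p :=
  ContinuousAt.comp (g := Complex.arg) (Complex.continuousAt_arg hp)
    (continuous_turn _ _).continuousAt

theorem continuousOn_winding_apply (c : flowSpace G) :
    ContinuousOn (fun p => winding u p c) (offDrawing u) := by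
  simp only [winding_apply]
  exact continuousOn_finsetSum _ fun d _ =>
    ContinuousOn.mul (fun p hp => (continuousAt_dartAngle (hp d)).continuousWithinAt)
      continuousOn_const

/-- Kirchhoff's law cancels the angles of the hubs and antisymmetry those of the `u d`, so that
only the `2π` and `π` ambiguities remain. -/
theorem exists_winding_apply_eq (hsymm : ∀ d, u d.symm = -u d) {p : Fin 3 → ℝ}
    (hp : p ∈ offDrawing u) (c : flowSpace G) :
    ∃ n : G.Dart → ℤ, winding u p c = ∑ d, Real.pi / 2 * n d * c.1 d := by
  cases isEmpty_or_nonempty G.Dart with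
  | inl _ => exact ⟨0, by simp [winding_apply]⟩
  | inr h =>
  obtain ⟨d₀⟩ := h
  have hturn := fun d => turn_ne_zero_iff.1 (Complex.slitPlane_ne_zero (hp d))
  set e := hub u d₀.fst
  have he : p ⨯₃ e ≠ 0 := (hturn d₀).1
  choose k hk using fun d => exists_arg_turn_eq (turn_ne_zero_iff.2 (hturn d)) he
  choose m hm using fun d =>
    exists_arg_turn_neg_right_eq (turn_ne_zero_iff.2 ⟨he, (hturn d).2⟩)
  have hhub := sum_fst_mul_flow c fun v => Complex.arg (turn p e (hub u v))
  have hsum := sum_symm_mul_flow c fun d => Complex.arg (turn p e (u d))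
  simp only [hsymm, hm, add_mul, Finset.sum_add_distrib] at hsum
  refine ⟨fun d => 4 * k d - 1 - 2 * m d, ?_⟩
  simp only [winding_apply, dartAngle, hk, add_mul, sub_mul, Finset.sum_add_distrib,
    Finset.sum_sub_distrib, hhub]
  simp only [Int.cast_sub, Int.cast_mul, Int.cast_ofNat, Int.cast_one, mul_sub, sub_mul,
    Finset.sum_sub_distrib]
  simp only [mul_assoc, mul_left_comm (_ : ℝ) (4 : ℝ), mul_left_comm _ (2 : ℝ),
    ← Finset.mul_sum] at hsum ⊢
  linarith

theorem winding_eq_of_isPreconnected (hsymm : ∀ d, u d.symm = -u d) {S : Set (Fin 3 → ℝ)}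
    (hS : IsPreconnected S) (hoff : S ⊆ offDrawing u) {p q : Fin 3 → ℝ} (hp : p ∈ S) (hq : q ∈ S) :
    winding u p = winding u q := by
  ext c
  have hcountable : (range fun n : G.Dart → ℤ => ∑ d, Real.pi / 2 * n d * c.1 d).Countable :=
    countable_range _
  refine hcountable.isTotallyDisconnected _ ?_
    (hS.image _ ((continuousOn_winding_apply c).mono hoff)) (mem_image_of_mem _ hp)
    (mem_image_of_mem _ hq)
  rintro _ ⟨p, hp, rfl⟩
  obtain ⟨n, hn⟩ := exists_winding_apply_eq hsymm (hoff hp) c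
  exact ⟨n, hn.symm⟩

namespace IsAntipodalDrawing

variable (hu : IsAntipodalDrawing u)
include hu

theorem hub_cross_map_ne_zero (d : G.Dart) : hub u d.fst ⨯₃ u d ≠ 0 :=
  crossProduct_ne_zero_iff_linearIndependent.2 (hu.linearIndependent_hub_map d)

theorem turn_map_mem_slitPlane {d d' : G.Dart} (hd : d' ≠ d) (hd' : d' ≠ d.symm) :
    turn (u d) (hub u d'.fst) (u d') ∈ Complex.slitPlane := by
  have cone_subset : ∀ a b : ℝ, 0 ≤ a → 0 ≤ b → a • hub u d'.fst + b • u d' ∈ edgeCone u d'.fst :=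
    fun a b ha hb => add_mem (PointedCone.smul_mem _ ha (hub_mem_edgeCone u _))
      (PointedCone.smul_mem _ hb (map_mem_edgeCone u d'))
  refine turn_mem_slitPlane_of_notMem_cone (hu.hub_cross_map_ne_zero d')
    (fun a b ha hb h => ?_) (fun a b ha hb h => ?_)
  · by_cases hfst : d'.fst = d.fst
    · exact hu.map_ne_smul_hub_add_smul hfst hd ha hb h
    · exact hu.map_ne_zero d ((Submodule.disjoint_def.1 (hu.disjoint hfst)) _
        (h ▸ cone_subset a b ha hb) (map_mem_edgeCone u d))
  · have hmem : -u d ∈ edgeCone u d'.fst := h ▸ cone_subset a b ha hb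
    by_cases hfst : d.fst = d'.fst
    · exact hu.neg_map_notMem_edgeCone d (hfst ▸ hmem)
    obtain h0 | ⟨d'', hfst', hsnd, t, ht⟩ :=
      hu.eq_smul_of_neg_mem hfst (map_mem_edgeCone u d) hmem
    · exact hu.map_ne_zero d h0
    · obtain rfl := hu.dart_eq_of_map_eq_smul hfst'.symm ht
      exact hu.map_ne_smul_hub_add_smul (d := d.symm) hsnd.symm hd' ha hb
        ((hu.map_symm d).trans h)

end IsAntipodalDrawing

/-- The direction in which the edge of `d` is crossed at `u d`, along the bisector of its two
halves; the factors are the lengths which make `dartNormal_symm` hold. -/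
noncomputable def dartNormal (u : G.Dart → Fin 3 → ℝ) (d : G.Dart) : Fin 3 → ℝ :=
  √(hub u d.snd ⨯₃ u d ⬝ᵥ hub u d.snd ⨯₃ u d) • hub u d.fst ⨯₃ u d +
    √(hub u d.fst ⨯₃ u d ⬝ᵥ hub u d.fst ⨯₃ u d) • hub u d.snd ⨯₃ u d

/-- The linear form separating, at `u d`, the side of the hubs of `d` from the opposite side. -/
noncomputable def dartConormal (u : G.Dart → Fin 3 → ℝ) (d : G.Dart) : Fin 3 → ℝ :=
  u d ⨯₃ dartNormal u d

/-- The cone of the points which are close to the first half of the edge of `d`, on the side given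
by the sign of `σ`, when they are close to `u d`. -/
def dartWedge (u : G.Dart → Fin 3 → ℝ) (d : G.Dart) (σ : ℝ) : Set (Fin 3 → ℝ) :=
  {p | 0 ≤ dartConormal u d ⬝ᵥ p ∧ 0 < σ * (p ⬝ᵥ hub u d.fst ⨯₃ u d)}

/-- Up to a positive factor, the cotangent of the angle at the common hub from `d` to `d'`, counted
in the direction given by the sign of `σ`. -/
noncomputable def dartSlope (u : G.Dart → Fin 3 → ℝ) (d : G.Dart) (σ : ℝ) (d' : G.Dart) : ℝ :=
  (hub u d.fst ⨯₃ u d ⬝ᵥ hub u d.fst ⨯₃ u d') / (σ * (u d' ⬝ᵥ hub u d.fst ⨯₃ u d))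

theorem convex_dartWedge (u : G.Dart → Fin 3 → ℝ) (d : G.Dart) (σ : ℝ) :
    Convex ℝ (dartWedge u d σ) := by
  rintro p ⟨hp, hp'⟩ q ⟨hq, hq'⟩ a b ha hb hab
  constructor
  · simp only [dotProduct_add, dotProduct_smul, smul_eq_mul]
    positivity
  · have hcombo : σ * ((a • p + b • q) ⬝ᵥ hub u d.fst ⨯₃ u d) =
        a * (σ * (p ⬝ᵥ hub u d.fst ⨯₃ u d)) + b * (σ * (q ⬝ᵥ hub u d.fst ⨯₃ u d)) := by
      simp only [add_dotProduct, smul_dotProduct, smul_eq_mul]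
      ring
    rw [hcombo]
    exact convex_Ioi (0 : ℝ) hp' hq' ha hb hab

theorem dartConormal_dotProduct_map (u : G.Dart → Fin 3 → ℝ) (d : G.Dart) :
    dartConormal u d ⬝ᵥ u d = 0 := by
  rw [dotProduct_comm, dartConormal, dot_self_cross]

theorem dartConormal_dotProduct_dartNormal (u : G.Dart → Fin 3 → ℝ) (d : G.Dart) :
    dartConormal u d ⬝ᵥ dartNormal u d = 0 := by
  rw [dotProduct_comm, dartConormal, dot_cross_self]

namespace IsAntipodalDrawing

variable (hu : IsAntipodalDrawing u)
include hu

theorem hub_snd_cross_map_ne_zero (d : G.Dart) : hub u d.snd ⨯₃ u d ≠ 0 := by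
  have := hu.hub_cross_map_ne_zero d.symm
  rwa [hu.map_symm, map_neg, neg_ne_zero] at this

theorem dartNormal_symm (d : G.Dart) : dartNormal u d.symm = -dartNormal u d := by
  simp only [dartNormal, hu.map_symm, SimpleGraph.Dart.symm_toProd, Prod.fst_swap,
    Prod.snd_swap, map_neg, neg_dotProduct_neg, smul_neg, neg_add_rev]

theorem dartConormal_symm (d : G.Dart) : dartConormal u d.symm = dartConormal u d := by
  simp [dartConormal, hu.dartNormal_symm, hu.map_symm, -cross_anticomm]

theorem smul_hub_add_smul_hub_ne {d : G.Dart} {a b : ℝ} (ha : 0 < a) (hb : 0 ≤ b) (k : ℝ) :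
    a • hub u d.fst + b • hub u d.snd ≠ k • u d := by
  intro h
  have hmem : a • hub u d.fst + |k| • u d ∈ edgeCone u d.fst :=
    add_mem (PointedCone.smul_mem _ ha.le (hub_mem_edgeCone u _))
      (PointedCone.smul_mem _ (abs_nonneg k) (map_mem_edgeCone u d))
  have hneg : -(a • hub u d.fst + |k| • u d) =
      b • hub u d.symm.fst + (k + |k|) • u d.symm := by
    rw [hu.map_symm, eq_sub_of_add_eq h]
    simp only [SimpleGraph.Dart.symm_toProd, Prod.fst_swap]
    module
  have hneg_mem : -(a • hub u d.fst + |k| • u d) ∈ edgeCone u d.symm.fst :=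
    hneg ▸ add_mem (PointedCone.smul_mem _ hb (hub_mem_edgeCone u _))
      (PointedCone.smul_mem _ (by linarith [neg_abs_le k]) (map_mem_edgeCone u d.symm))
  obtain ⟨t, ht⟩ : ∃ t : ℝ, a • hub u d.fst + |k| • u d = t • u d := by
    obtain h0 | ⟨d', hfst, hsnd, ht⟩ := hu.eq_smul_of_neg_mem d.adj.ne hmem hneg_mem
    · exact ⟨0, by rw [h0, zero_smul]⟩
    · obtain rfl : d' = d := SimpleGraph.Dart.ext _ _ (Prod.ext hfst hsnd)
      exact ht
  exact ha.ne' (hu.eq_zero_of_smul_hub_add_eq_smul ha.le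
    (PointedCone.smul_mem _ (abs_nonneg k) (map_mem_edgeCone u d)) ht)

theorem dartNormal_ne_zero (d : G.Dart) : dartNormal u d ≠ 0 := by
  set a := hub u d.fst ⨯₃ u d
  set b := hub u d.snd ⨯₃ u d
  have ha : 0 < √(a ⬝ᵥ a) := Real.sqrt_pos.2 (dotProduct_self_pos (hu.hub_cross_map_ne_zero d))
  have hb : 0 < √(b ⬝ᵥ b) :=
    Real.sqrt_pos.2 (dotProduct_self_pos (hu.hub_snd_cross_map_ne_zero d))
  have hcross : dartNormal u d =
      -(u d ⨯₃ (√(b ⬝ᵥ b) • hub u d.fst + √(a ⬝ᵥ a) • hub u d.snd)) := by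
    rw [cross_anticomm, LinearMap.map_add₂, LinearMap.map_smul₂, LinearMap.map_smul₂]
    rfl
  rw [hcross, neg_ne_zero, crossProduct_ne_zero_iff_linearIndependent,
    LinearIndependent.pair_iff' (hu.map_ne_zero d)]
  exact fun k hk => hu.smul_hub_add_smul_hub_ne hb ha.le k hk.symm

theorem dartNormal_dotProduct_pos (d : G.Dart) :
    0 < dartNormal u d ⬝ᵥ hub u d.fst ⨯₃ u d := by
  have hn := dotProduct_self_pos (hu.dartNormal_ne_zero d)
  set a := hub u d.fst ⨯₃ u d
  set b := hub u d.snd ⨯₃ u d with hb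
  have hdef : dartNormal u d = √(b ⬝ᵥ b) • a + √(a ⬝ᵥ a) • b := rfl
  have haa : √(a ⬝ᵥ a) ^ 2 = a ⬝ᵥ a := Real.sq_sqrt (by simpa using dotProduct_star_self_nonneg a)
  have hbb : √(b ⬝ᵥ b) ^ 2 = b ⬝ᵥ b := Real.sq_sqrt (by simpa using dotProduct_star_self_nonneg b)
  have hnn : dartNormal u d ⬝ᵥ dartNormal u d = 2 * √(b ⬝ᵥ b) * (dartNormal u d ⬝ᵥ a) := by
    simp only [hdef, add_dotProduct, dotProduct_add, smul_dotProduct, dotProduct_smul, smul_eq_mul,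
      dotProduct_comm b a]
    linear_combination (b ⬝ᵥ b) * haa - (a ⬝ᵥ a) * hbb
  rw [hnn] at hn
  exact pos_of_mul_pos_right hn (by positivity)

theorem dartConormal_dotProduct_hub_fst_pos (d : G.Dart) :
    0 < dartConormal u d ⬝ᵥ hub u d.fst := by
  rw [dotProduct_comm, dartConormal, triple_product_permutation, triple_product_permutation]
  exact hu.dartNormal_dotProduct_pos d

theorem dartConormal_dotProduct_hub_snd_pos (d : G.Dart) :
    0 < dartConormal u d ⬝ᵥ hub u d.snd :=
  hu.dartConormal_symm d ▸ hu.dartConormal_dotProduct_hub_fst_pos d.symm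

theorem eventually_turn_symm_mem_slitPlane (d : G.Dart) :
    ∀ᶠ p in 𝓝 (u d), 0 ≤ dartConormal u d ⬝ᵥ p → p ⬝ᵥ hub u d.fst ⨯₃ u d ≠ 0 →
      turn p (hub u d.symm.fst) (u d.symm) ∈ Complex.slitPlane := by
  set b := hub u d.snd ⨯₃ u d
  have hb : b ≠ 0 := hu.hub_snd_cross_map_ne_zero d
  have hside : ∀ᶠ p in 𝓝 (u d), 0 < b ⬝ᵥ hub u d.snd ⨯₃ p := by
    have : Continuous fun p => b ⬝ᵥ hub u d.snd ⨯₃ p :=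
      continuous_const.dotProduct (crossProduct (hub u d.snd)).continuous_of_finiteDimensional
    exact this.continuousAt.eventually (lt_mem_nhds (dotProduct_self_pos hb))
  filter_upwards [hside] with p hp hN htriple
  rw [hu.map_symm]
  refine turn_mem_slitPlane_of_notMem_cone (by rwa [map_neg, neg_ne_zero]) ?_ ?_ <;>
    rintro s t hs ht h <;> simp only [SimpleGraph.Dart.symm_toProd, Prod.fst_swap] at h
  · rw [h, map_add, map_smul, map_smul, cross_self, map_neg, smul_zero, zero_add, smul_neg,
      dotProduct_neg, dotProduct_smul, smul_eq_mul] at hp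
    nlinarith [dotProduct_self_pos hb]
  · have hs0 : s = 0 := by
      rw [← neg_neg p, h, dotProduct_neg, dotProduct_add, dotProduct_smul, dotProduct_smul,
        dotProduct_neg, dartConormal_dotProduct_map, neg_zero, smul_zero, add_zero,
        smul_eq_mul] at hN
      nlinarith [hu.dartConormal_dotProduct_hub_snd_pos d]
    rw [← neg_neg p, h, hs0, zero_smul, zero_add, smul_neg, neg_neg, smul_dotProduct,
      dot_cross_self, smul_zero] at htriple
    exact htriple rfl

theorem eventually_mem_offDrawing (d : G.Dart) :
    ∀ᶠ p in 𝓝 (u d), 0 ≤ dartConormal u d ⬝ᵥ p → p ⬝ᵥ hub u d.fst ⨯₃ u d ≠ 0 →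
      p ∈ offDrawing u := by
  have hdart : ∀ d', ∀ᶠ p in 𝓝 (u d), 0 ≤ dartConormal u d ⬝ᵥ p →
      p ⬝ᵥ hub u d.fst ⨯₃ u d ≠ 0 → turn p (hub u d'.fst) (u d') ∈ Complex.slitPlane := by
    intro d'
    by_cases hd : d' = d
    · subst hd
      exact .of_forall fun p _ htriple => turn_mem_slitPlane_of_triple_product_ne_zero htriple
    by_cases hd' : d' = d.symm
    · subst hd'
      exact hu.eventually_turn_symm_mem_slitPlane d
    · exact ((continuous_turn _ _).continuousAt.eventually (Complex.isOpen_slitPlane.mem_nhds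
        (hu.turn_map_mem_slitPlane hd hd'))).mono fun p hp _ _ => hp
  filter_upwards [eventually_all.2 hdart] with p hp hN htriple d' using hp d' hN htriple

theorem eventually_mem_offDrawing_nhdsWithin (d : G.Dart) (σ : ℝ) :
    ∀ᶠ p in 𝓝[dartWedge u d σ] u d, p ∈ offDrawing u := by
  refine eventually_nhdsWithin_iff.2 ((hu.eventually_mem_offDrawing d).mono fun p hp hpW => ?_)
  exact hp hpW.1 (right_ne_zero_of_mul hpW.2.ne')

theorem exists_eventually_winding_eq (d : G.Dart) (σ : ℝ) :
    ∃ W, ∀ᶠ p in 𝓝[dartWedge u d σ] u d, winding u p = W := by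
  obtain ⟨ε, hε, hoff⟩ := Metric.mem_nhdsWithin_iff.1 (hu.eventually_mem_offDrawing_nhdsWithin d σ)
  have hmem : Metric.ball (u d) ε ∩ dartWedge u d σ ∈ 𝓝[dartWedge u d σ] u d :=
    inter_mem (mem_nhdsWithin_of_mem_nhds (Metric.ball_mem_nhds _ hε)) self_mem_nhdsWithin
  obtain hempty | ⟨q, hq⟩ := (Metric.ball (u d) ε ∩ dartWedge u d σ).eq_empty_or_nonempty
  · exact ⟨0, mem_of_superset hmem (by simp [hempty])⟩
  · have hS := ((convex_ball (u d) ε).inter (convex_dartWedge u d σ)).isPreconnected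
    exact ⟨winding u q, mem_of_superset hmem fun p hp =>
      winding_eq_of_isPreconnected hu.map_symm hS hoff hp hq⟩

theorem tendsto_add_smul_dartNormal (d : G.Dart) {σ : ℝ} (hσ : σ ≠ 0) :
    Tendsto (fun τ : ℝ => u d + (τ * σ) • dartNormal u d) (𝓝[>] 0)
      (𝓝[dartWedge u d σ] u d) := by
  refine tendsto_nhdsWithin_iff.2 ⟨?_, ?_⟩
  · have : Continuous fun τ : ℝ => u d + (τ * σ) • dartNormal u d := by fun_prop
    exact (this.tendsto' 0 (u d) (by simp)).mono_left nhdsWithin_le_nhds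
  · filter_upwards [self_mem_nhdsWithin] with τ hτ
    constructor
    · simp [dartConormal_dotProduct_map, dartConormal_dotProduct_dartNormal]
    · rw [add_dotProduct, dot_cross_self, zero_add, smul_dotProduct, smul_eq_mul]
      have := hu.dartNormal_dotProduct_pos d
      have hτ : 0 < τ := hτ
      calc 0 < τ * σ ^ 2 * (dartNormal u d ⬝ᵥ hub u d.fst ⨯₃ u d) := by positivity
        _ = _ := by ring

theorem tendsto_add_smul_hub_add_sq_smul (d : G.Dart) {v : Fin 3 → ℝ} {σ : ℝ}
    (hv : 0 < σ * (v ⬝ᵥ hub u d.fst ⨯₃ u d)) :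
    Tendsto (fun t : ℝ => u d + t • hub u d.fst + t ^ 2 • v) (𝓝[>] 0)
      (𝓝[dartWedge u d σ] u d) := by
  refine tendsto_nhdsWithin_iff.2 ⟨?_, ?_⟩
  · have : Continuous fun t : ℝ => u d + t • hub u d.fst + t ^ 2 • v := by fun_prop
    exact (this.tendsto' 0 (u d) (by simp)).mono_left nhdsWithin_le_nhds
  · have hlim : Tendsto (fun t : ℝ => dartConormal u d ⬝ᵥ hub u d.fst +
        t * (dartConormal u d ⬝ᵥ v)) (𝓝[>] 0) (𝓝 (dartConormal u d ⬝ᵥ hub u d.fst)) := by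
      have : Continuous fun t : ℝ => dartConormal u d ⬝ᵥ hub u d.fst +
        t * (dartConormal u d ⬝ᵥ v) := by fun_prop
      exact (this.tendsto' 0 _ (by simp)).mono_left nhdsWithin_le_nhds
    filter_upwards [self_mem_nhdsWithin,
      hlim.eventually (lt_mem_nhds (hu.dartConormal_dotProduct_hub_fst_pos d))] with t ht hpos
    have ht : 0 < t := ht
    constructor
    · rw [dotProduct_add, dotProduct_add, dotProduct_smul, dotProduct_smul,
        dartConormal_dotProduct_map]
      calc 0 ≤ t * (dartConormal u d ⬝ᵥ hub u d.fst + t * (dartConormal u d ⬝ᵥ v)) := by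
            positivity
        _ = _ := by simp only [smul_eq_mul]; ring
    · rw [add_dotProduct, add_dotProduct, smul_dotProduct, smul_dotProduct, dot_cross_self,
        dot_self_cross]
      calc 0 < t ^ 2 * (σ * (v ⬝ᵥ hub u d.fst ⨯₃ u d)) := by positivity
        _ = _ := by simp only [smul_eq_mul]; ring

/-- The value of `winding u` close to `u d` on the side given by the sign of `σ`. -/
noncomputable def sideWinding (d : G.Dart) (σ : ℝ) : Module.Dual ℝ (flowSpace G) :=
  (hu.exists_eventually_winding_eq d σ).choose

theorem eventually_winding_eq_sideWinding (d : G.Dart) (σ : ℝ) :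
    ∀ᶠ p in 𝓝[dartWedge u d σ] u d, winding u p = hu.sideWinding d σ :=
  (hu.exists_eventually_winding_eq d σ).choose_spec

theorem sideWinding_symm (d : G.Dart) {σ : ℝ} (hσ : σ ≠ 0) :
    hu.sideWinding d.symm σ = -hu.sideWinding d σ := by
  have hd := (hu.tendsto_add_smul_dartNormal d hσ).eventually
    ((hu.eventually_winding_eq_sideWinding d σ).and (hu.eventually_mem_offDrawing_nhdsWithin d σ))
  have hd' := (hu.tendsto_add_smul_dartNormal d.symm hσ).eventually
    (hu.eventually_winding_eq_sideWinding d.symm σ)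
  obtain ⟨τ, ⟨hτ, hoff⟩, hτ'⟩ := (hd.and hd').exists
  rw [← hτ', ← hτ, ← winding_neg hoff, hu.map_symm, hu.dartNormal_symm, smul_neg, ← neg_add]

theorem eventually_add_smul_dartNormal (d : G.Dart) :
    ∀ᶠ τ : ℝ in 𝓝[>] 0,
      (u d + τ • dartNormal u d ∈ offDrawing u ∧ u d - τ • dartNormal u d ∈ offDrawing u) ∧
      winding u (u d + τ • dartNormal u d) = hu.sideWinding d 1 ∧
      winding u (u d - τ • dartNormal u d) = hu.sideWinding d (-1) := by
  have h := fun σ hσ => (hu.tendsto_add_smul_dartNormal d (σ := σ) hσ).eventually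
    ((hu.eventually_mem_offDrawing_nhdsWithin d σ).and (hu.eventually_winding_eq_sideWinding d σ))
  filter_upwards [h 1 one_ne_zero, h (-1) (neg_ne_zero.2 one_ne_zero)] with τ h₁ h₂
  rw [mul_one] at h₁
  rw [mul_neg_one, neg_smul, ← sub_eq_add_neg] at h₂
  exact ⟨⟨h₁.1, h₂.1⟩, h₁.2, h₂.2⟩

theorem tendsto_dartAngle_sub (d : G.Dart) :
    Tendsto (fun τ : ℝ => dartAngle u (u d + τ • dartNormal u d) d -
      dartAngle u (u d - τ • dartNormal u d) d) (𝓝[>] 0) (𝓝 Real.pi) :=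
  tendsto_arg_turn_sub_arg_turn (hu.dartNormal_dotProduct_pos d)

theorem tendsto_dartAngle_symm_sub (d : G.Dart) :
    Tendsto (fun τ : ℝ => dartAngle u (u d + τ • dartNormal u d) d.symm -
      dartAngle u (u d - τ • dartNormal u d) d.symm) (𝓝[>] 0) (𝓝 (-Real.pi)) := by
  refine (hu.tendsto_dartAngle_sub d.symm).neg.congr' ?_
  filter_upwards [hu.eventually_add_smul_dartNormal d] with τ hτ
  rw [hu.map_symm, hu.dartNormal_symm, smul_neg, ← neg_add, ← neg_sub', dartAngle_neg hτ.1.1,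
    dartAngle_neg hτ.1.2]
  ring

theorem tendsto_dartAngle_sub_of_ne {d d' : G.Dart} (hd : d' ≠ d) (hd' : d' ≠ d.symm) :
    Tendsto (fun τ : ℝ => dartAngle u (u d + τ • dartNormal u d) d' -
      dartAngle u (u d - τ • dartNormal u d) d') (𝓝[>] 0) (𝓝 0) := by
  have hcont : ContinuousAt (fun p => dartAngle u p d') (u d) :=
    continuousAt_dartAngle (hu.turn_map_mem_slitPlane hd hd')
  have hadd : Continuous fun τ : ℝ => u d + τ • dartNormal u d := by fun_prop
  have hsub : Continuous fun τ : ℝ => u d - τ • dartNormal u d := by fun_prop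
  have hlim := (hcont.tendsto.comp (hadd.tendsto' 0 (u d) (by simp))).sub
    (hcont.tendsto.comp (hsub.tendsto' 0 (u d) (by simp)))
  rw [sub_self] at hlim
  exact hlim.mono_left nhdsWithin_le_nhds

theorem sideWinding_sub_apply (d : G.Dart) (c : flowSpace G) :
    hu.sideWinding d 1 c - hu.sideWinding d (-1) c = 2 * Real.pi * c.1 d := by
  let jump : G.Dart → ℝ := Pi.single d Real.pi - Pi.single d.symm Real.pi
  have hjump : ∀ d', Tendsto (fun τ : ℝ => dartAngle u (u d + τ • dartNormal u d) d' -
      dartAngle u (u d - τ • dartNormal u d) d') (𝓝[>] 0) (𝓝 (jump d')) := by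
    intro d'
    by_cases hd : d' = d
    · subst hd
      simpa [jump, d'.symm_ne.symm] using hu.tendsto_dartAngle_sub d'
    by_cases hd' : d' = d.symm
    · subst hd'
      simpa [jump, d.symm_ne] using hu.tendsto_dartAngle_symm_sub d
    · simpa [jump, hd, hd'] using hu.tendsto_dartAngle_sub_of_ne hd hd'
  have hsum := tendsto_finsetSum Finset.univ fun d' _ => (hjump d').mul_const (c.1 d')
  have hconst := hsum.congr' (f₂ := fun _ => hu.sideWinding d 1 c - hu.sideWinding d (-1) c) <| by
    filter_upwards [hu.eventually_add_smul_dartNormal d] with τ hτ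
    simp only [← hτ.2.1, ← hτ.2.2, winding_apply, sub_mul, Finset.sum_sub_distrib]
  rw [tendsto_nhds_unique tendsto_const_nhds hconst]
  simp only [jump, Pi.sub_apply, sub_mul, Finset.sum_sub_distrib, Pi.single_apply, ite_mul,
    zero_mul, Finset.sum_ite_eq', Finset.mem_univ, if_true, flow_symm]
  ring

theorem pos_of_map_eq_smul_hub_add_smul {d d' : G.Dart} (hfst : d'.fst = d.fst) (hne : d' ≠ d)
    {a b : ℝ} (h : u d' = a • hub u d.fst + b • u d) : 0 < a := by
  by_contra! ha
  refine hu.add_ne_smul hfst hne ((-a) • hub u d.fst)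
    (PointedCone.smul_mem _ (neg_nonneg.2 ha) (hub_mem_edgeCone u _)) b ?_
  rw [h]
  module

theorem smul_map_ne_smul_map_add_smul {d d₁ d₂ : G.Dart} (h₁ : d₁.fst = d.fst)
    (h₂ : d₂.fst = d.fst) (hne : d₁ ≠ d₂) {a b k : ℝ} (ha : 0 < a) (hk : 0 ≤ k) :
    b • u d₂ ≠ a • u d₁ + k • u d := by
  intro h
  refine hu.add_ne_smul (d := d₂) (d' := d₁) (h₁.trans h₂.symm) hne ((a⁻¹ * k) • u d)
    (h₂ ▸ PointedCone.smul_mem _ (by positivity) (map_mem_edgeCone u d)) (a⁻¹ * b) ?_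
  rw [mul_smul, mul_smul, h, smul_add, inv_smul_smul₀ ha.ne']

theorem exists_triple_product_ne_zero (d : G.Dart) :
    ∃ d' : G.Dart, d'.fst = d.fst ∧ u d' ⬝ᵥ hub u d.fst ⨯₃ u d ≠ 0 := by
  by_contra! hzero
  obtain ⟨d₁, hfst₁, hne₁, -⟩ := hu.exists_dart_snd_ne_snd_ne d.fst d.snd d.snd
  obtain ⟨d₂, hfst₂, hne₂, hne₁₂⟩ := hu.exists_dart_snd_ne_snd_ne d.fst d.snd d₁.snd
  have hcoplanar := fun d' h => exists_eq_smul_add_smul_of_triple_product_eq_zero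
    (hu.hub_cross_map_ne_zero d) (hzero d' h)
  obtain ⟨a₁, b₁, h₁⟩ := hcoplanar d₁ hfst₁
  obtain ⟨a₂, b₂, h₂⟩ := hcoplanar d₂ hfst₂
  have ha₁ := hu.pos_of_map_eq_smul_hub_add_smul hfst₁ (fun h => hne₁ (h ▸ rfl)) h₁
  have ha₂ := hu.pos_of_map_eq_smul_hub_add_smul hfst₂ (fun h => hne₂ (h ▸ rfl)) h₂
  have hd₁₂ : d₁ ≠ d₂ := fun h => hne₁₂ (h ▸ rfl)
  have hcombo : a₂ • u d₁ = a₁ • u d₂ + (a₂ * b₁ - a₁ * b₂) • u d := by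
    rw [h₁, h₂]
    module
  obtain hk | hk := le_total 0 (a₂ * b₁ - a₁ * b₂)
  · exact hu.smul_map_ne_smul_map_add_smul hfst₂ hfst₁ hd₁₂.symm ha₁ hk hcombo
  · refine hu.smul_map_ne_smul_map_add_smul hfst₁ hfst₂ hd₁₂ ha₂ (neg_nonneg.2 hk) (b := a₁) ?_
    rw [hcombo]
    module

theorem exists_triple_product_pos (d : G.Dart) {σ : ℝ} (hσ : σ ≠ 0) :
    ∃ d' : G.Dart, d'.fst = d.fst ∧ 0 < σ * (u d' ⬝ᵥ hub u d.fst ⨯₃ u d) := by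
  have hsum : ∑ d' with d'.fst = d.fst, σ * (u d' ⬝ᵥ hub u d.fst ⨯₃ u d) = 0 := by
    rw [← Finset.mul_sum, ← sum_dotProduct, ← hub, dot_self_cross, mul_zero]
  obtain ⟨d', hfst, hne⟩ := hu.exists_triple_product_ne_zero d
  obtain ⟨d', hmem, hpos⟩ := Finset.exists_pos_of_sum_zero_of_exists_nonzero _ hsum
    ⟨d', by simpa using hfst, mul_ne_zero hσ hne⟩
  exact ⟨d', by simpa using hmem, hpos⟩

theorem smul_hub_add_smul_map_add_smul_map_mem_offDrawing {d d' : G.Dart} {σ a b s : ℝ}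
    (hfst : d'.fst = d.fst) (hpos : 0 < σ * (u d' ⬝ᵥ hub u d.fst ⨯₃ u d))
    (hmax : ∀ d'' : G.Dart, d''.fst = d.fst → 0 < σ * (u d'' ⬝ᵥ hub u d.fst ⨯₃ u d) →
      dartSlope u d σ d'' ≤ dartSlope u d σ d')
    (ha : 0 < a) (hb : 0 < b) (hs : 0 < s) :
    s • hub u d.fst + (a • u d + b • u d') ∈ offDrawing u := by
  set p := s • hub u d.fst + (a • u d + b • u d')
  have hmem' : a • u d + b • u d' ∈ edgeCone u d.fst :=
    add_mem (PointedCone.smul_mem _ ha.le (map_mem_edgeCone u d))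
      (hfst ▸ PointedCone.smul_mem _ hb.le (map_mem_edgeCone u d'))
  have hmem : p ∈ edgeCone u d.fst :=
    add_mem (PointedCone.smul_mem _ hs.le (hub_mem_edgeCone u _)) hmem'
  have hne_smul : ∀ t : ℝ, p ≠ t • u d := fun t ht =>
    hs.ne' (hu.eq_zero_of_smul_hub_add_eq_smul hs.le hmem' ht)
  have hp0 : p ≠ 0 := by simpa using hne_smul 0
  intro d''
  have cone_subset : ∀ x y : ℝ, 0 ≤ x → 0 ≤ y →
      x • hub u d''.fst + y • u d'' ∈ edgeCone u d''.fst :=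
    fun x y hx hy => add_mem (PointedCone.smul_mem _ hx (hub_mem_edgeCone u _))
      (PointedCone.smul_mem _ hy (map_mem_edgeCone u d''))
  refine turn_mem_slitPlane_of_notMem_cone (hu.hub_cross_map_ne_zero d'')
    (fun x y hx hy h => ?_) (fun x y hx hy h => ?_)
  · by_cases hd'' : d''.fst = d.fst
    · rw [hd''] at h
      exact smul_add_smul_add_smul_ne_of_div_le_div (hu.hub_cross_map_ne_zero d) hpos
        (hmax d'' hd'') ha hb hy h
    · exact hp0 (Submodule.disjoint_def.1 (hu.disjoint hd'') _ (h ▸ cone_subset x y hx hy) hmem)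
  · have hneg : -p ∈ edgeCone u d''.fst := h ▸ cone_subset x y hx hy
    by_cases hd'' : d.fst = d''.fst
    · exact hp0 (hu.eq_zero_of_neg_mem hmem (hd'' ▸ hneg))
    obtain h0 | ⟨e, hefst, -, t, ht⟩ := hu.eq_smul_of_neg_mem hd'' hmem hneg
    · exact hp0 h0
    · rw [← hefst] at hmem'
      exact hs.ne' (hu.eq_zero_of_smul_hub_add_eq_smul hs.le hmem' (by rw [hefst, ← ht]))

theorem sideWinding_eq_neg_of_forall_dartSlope_le {d d' : G.Dart} {σ : ℝ}
    (hfst : d'.fst = d.fst) (hpos : 0 < σ * (u d' ⬝ᵥ hub u d.fst ⨯₃ u d))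
    (hmax : ∀ d'' : G.Dart, d''.fst = d.fst → 0 < σ * (u d'' ⬝ᵥ hub u d.fst ⨯₃ u d) →
      dartSlope u d σ d'' ≤ dartSlope u d σ d') :
    hu.sideWinding d σ = hu.sideWinding d' (-σ) := by
  let S : Set (Fin 3 → ℝ) := (fun x : ℝ × ℝ × ℝ =>
    x.1 • hub u d.fst + (x.2.1 • u d + x.2.2 • u d')) '' (Ioi 0 ×ˢ Ioi 0 ×ˢ Ioi 0)
  have hS : IsPreconnected S :=
    (isPreconnected_Ioi.prod (isPreconnected_Ioi.prod isPreconnected_Ioi)).image _ (by fun_prop)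
  have hoff : S ⊆ offDrawing u := by
    rintro _ ⟨⟨s, a, b⟩, ⟨hs, ha, hb⟩, rfl⟩
    exact hu.smul_hub_add_smul_map_add_smul_map_mem_offDrawing hfst hpos hmax ha hb hs
  have hpos' : 0 < -σ * (u d ⬝ᵥ hub u d'.fst ⨯₃ u d') := by
    rw [hfst, triple_product_permutation, triple_product_permutation, ← cross_anticomm,
      dotProduct_neg, neg_mul_neg]
    exact hpos
  obtain ⟨t, ⟨hW, hW'⟩, ht⟩ := ((((hu.tendsto_add_smul_hub_add_sq_smul d hpos).eventually
    (hu.eventually_winding_eq_sideWinding d σ)).and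
    ((hu.tendsto_add_smul_hub_add_sq_smul d' hpos').eventually
    (hu.eventually_winding_eq_sideWinding d' (-σ)))).and self_mem_nhdsWithin).exists
  have ht : 0 < t := ht
  rw [← hW, ← hW']
  refine winding_eq_of_isPreconnected hu.map_symm hS hoff ⟨(t, 1, t ^ 2), ?_, ?_⟩
    ⟨(t, t ^ 2, 1), ?_, ?_⟩
  · simp [ht]
  · simp only [one_smul]; abel
  · simp [ht]
  · simp only [one_smul, hfst]; abel

theorem exists_sideWinding_eq_neg (d : G.Dart) {σ : ℝ} (hσ : σ ≠ 0) :
    ∃ d' : G.Dart, d'.fst = d.fst ∧ d'.snd ≠ d.snd ∧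
      hu.sideWinding d σ = hu.sideWinding d' (-σ) := by
  obtain ⟨d₀, hfst₀, hpos₀⟩ := hu.exists_triple_product_pos d hσ
  obtain ⟨d', hd', hmax⟩ := Finset.exists_max_image
    {d' : G.Dart | d'.fst = d.fst ∧ 0 < σ * (u d' ⬝ᵥ hub u d.fst ⨯₃ u d)} (dartSlope u d σ)
    ⟨d₀, by simp [hfst₀, hpos₀]⟩
  simp only [Finset.mem_filter, Finset.mem_univ, true_and] at hd' hmax
  obtain ⟨hfst, hpos⟩ := hd'
  refine ⟨d', hfst, fun hsnd => ?_, hu.sideWinding_eq_neg_of_forall_dartSlope_le hfst hpos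
    fun d'' h h' => hmax d'' ⟨h, h'⟩⟩
  obtain rfl : d' = d := SimpleGraph.Dart.ext _ _ (Prod.ext hfst hsnd)
  simp at hpos

theorem card_edgeFinset_add_two_le [Nonempty V] :
    G.edgeFinset.card + 2 ≤ 2 * Fintype.card V := by
  let sign : Bool → ℝ := fun s => if s then 1 else -1
  refine card_edgeFinset_add_two_le_of_corner (w := fun x => hu.sideWinding x.1 (sign x.2))
    Real.two_pi_pos.ne' hu.sideWinding_sub_apply (fun d s => hu.sideWinding_symm d ?_)
    (fun d s => ?_)
  · cases s <;> simp [sign]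
  · have hsign : sign (!s) = -sign s := by cases s <;> simp [sign]
    simpa only [hsign] using hu.exists_sideWinding_eq_neg d (by cases s <;> simp [sign])

end IsAntipodalDrawing

end Winding

section SphericalDiameter

open scoped InnerProductSpace

variable {V E : Type*} {G : SimpleGraph V} [NormedAddCommGroup E] [InnerProductSpace ℝ E]
  {e : V → E} {c : ℝ}

/-- `G` is the diameter graph of a configuration of points `e` on the unit sphere. The diameter,
assumed less than a right angle, is encoded by its cosine `c`, a lower bound for the inner
products. -/
structure IsSphericalDiameterGraph (G : SimpleGraph V) (e : V → E) (c : ℝ) : Prop where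
  pos : 0 < c
  lt_one : c < 1
  norm_eq_one : ∀ x, ‖e x‖ = 1
  injective : Function.Injective e
  le_inner : ∀ x y, c ≤ ⟪e x, e y⟫_ℝ
  adj_iff : ∀ x y, G.Adj x y ↔ ⟪e x, e y⟫_ℝ = c

/-- The cone spanned by the neighbors of `x`. Projecting it along `e x` to the hyperplane orthogonal
to `o` gives `edgeCone (gnomonic G o e) x`. -/
def neighborCone (G : SimpleGraph V) (e : V → E) (x : V) : PointedCone ℝ E :=
  PointedCone.hull ℝ (e '' {y | G.Adj x y})

/-- The image of a dart under the gnomonic projection from the tangent space of the sphere to the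
hyperplane orthogonal to `o`: a vector in this hyperplane and in the plane of the edge. -/
noncomputable def gnomonic (G : SimpleGraph V) (o : E) (e : V → E) (d : G.Dart) : E :=
  ⟪o, e d.fst⟫_ℝ • e d.snd - ⟪o, e d.snd⟫_ℝ • e d.fst

theorem inner_gnomonic (o : E) (e : V → E) (d : G.Dart) : ⟪o, gnomonic G o e d⟫_ℝ = 0 := by
  rw [gnomonic, inner_sub_right, inner_smul_right, inner_smul_right, mul_comm, sub_self]

theorem gnomonic_symm (o : E) (e : V → E) (d : G.Dart) :
    gnomonic G o e d.symm = -gnomonic G o e d :=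
  (neg_sub _ _).symm

theorem sub_smul_eq_smul_gnomonic {o U : E} {x y : V} (hxy : G.Adj x y) (ho : ⟪o, e x⟫_ℝ ≠ 0)
    {t : ℝ} (hU : U = t • e y) : U - (⟪o, U⟫_ℝ / ⟪o, e x⟫_ℝ) • e x =
      (t / ⟪o, e x⟫_ℝ) • gnomonic G o e ⟨(x, y), hxy⟩ := by
  rw [hU, gnomonic, smul_sub, smul_smul, smul_smul, div_mul_cancel₀ _ ho, inner_smul_right,
    div_mul_eq_mul_div]

theorem exists_eq_sub_smul_of_mem_edgeCone_gnomonic {o : E} {x : V} (ho : 0 < ⟪o, e x⟫_ℝ) {p : E}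
    (hp : p ∈ edgeCone (gnomonic G o e) x) :
    ∃ U ∈ neighborCone G e x, p = U - (⟪o, U⟫_ℝ / ⟪o, e x⟫_ℝ) • e x := by
  induction hp using Submodule.span_induction with
  | mem p hp =>
    obtain ⟨d, rfl, rfl⟩ := hp
    refine ⟨⟪o, e d.fst⟫_ℝ • e d.snd,
      PointedCone.smul_mem _ ho.le (Submodule.subset_span ⟨_, d.adj, rfl⟩), ?_⟩
    rw [gnomonic, inner_smul_right, mul_div_cancel_left₀ _ ho.ne']
  | zero => exact ⟨0, zero_mem _, by simp⟩
  | add p q _ _ ihp ihq =>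
    obtain ⟨U, hU, rfl⟩ := ihp
    obtain ⟨U', hU', rfl⟩ := ihq
    refine ⟨U + U', add_mem hU hU', ?_⟩
    rw [inner_add_right, add_div]
    module
  | smul a p _ ih =>
    obtain ⟨U, hU, rfl⟩ := ih
    refine ⟨a • U, Submodule.smul_mem _ a hU, ?_⟩
    change (a : ℝ) • _ = (a : ℝ) • U - (⟪o, (a : ℝ) • U⟫_ℝ / _) • _
    rw [inner_smul_right, mul_div_assoc]
    module

/-- The Gram determinant of `U`, `x` and `y` is nonnegative. -/
theorem sq_add_sq_sub_le_mul_norm_sq {x y : E} (hx : ‖x‖ = 1) (hy : ‖y‖ = 1)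
    (hxy : ⟪x, y⟫_ℝ ^ 2 < 1) (U : E) :
    ⟪U, x⟫_ℝ ^ 2 + ⟪U, y⟫_ℝ ^ 2 - 2 * ⟪x, y⟫_ℝ * (⟪U, x⟫_ℝ * ⟪U, y⟫_ℝ) ≤
      (1 - ⟪x, y⟫_ℝ ^ 2) * ‖U‖ ^ 2 := by
  have hnonneg := real_inner_self_nonneg (x := (1 - ⟪x, y⟫_ℝ ^ 2) • U -
    (⟪U, x⟫_ℝ - ⟪x, y⟫_ℝ * ⟪U, y⟫_ℝ) • x - (⟪U, y⟫_ℝ - ⟪x, y⟫_ℝ * ⟪U, x⟫_ℝ) • y)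
  simp only [inner_sub_left, inner_sub_right, real_inner_smul_left, real_inner_smul_right,
    real_inner_comm U, real_inner_comm x y] at hnonneg
  simp only [real_inner_self_eq_norm_sq, hx, hy] at hnonneg
  refine sub_nonneg.1 (nonneg_of_mul_nonneg_right (hnonneg.trans_eq ?_) (sub_pos.2 hxy))
  ring

theorem inner_le_of_add_eq_smul_add_smul {x y U U' : E} {s s' : ℝ} (hx : ‖x‖ = 1) (hy : ‖y‖ = 1)
    (hxy : ⟪x, y⟫_ℝ ^ 2 < 1) (h : U + U' = s • x + s' • y) :
    (1 - ⟪x, y⟫_ℝ ^ 2) * ⟪U, U'⟫_ℝ ≤ ⟪U, x⟫_ℝ * ⟪U', x⟫_ℝ + ⟪U, y⟫_ℝ * ⟪U', y⟫_ℝ -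
      ⟪x, y⟫_ℝ * (⟪U, x⟫_ℝ * ⟪U', y⟫_ℝ + ⟪U, y⟫_ℝ * ⟪U', x⟫_ℝ) := by
  have hgram := sq_add_sq_sub_le_mul_norm_sq hx hy hxy U
  have hU' : U' = s • x + s' • y - U := eq_sub_of_add_eq' h
  simp only [hU', inner_add_left, inner_sub_left, inner_add_right, inner_sub_right,
    real_inner_smul_left, real_inner_smul_right, real_inner_self_eq_norm_sq, hx, hy,
    real_inner_comm x y]
  linarith

theorem mul_eq_zero_and_add_mul_add_eq_zero {a b p q x y z : ℝ} (ha : 0 ≤ a) (hb : 0 ≤ b)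
    (hp : 0 ≤ p) (hq : 0 ≤ q) (hx : 0 < x) (hy : 0 ≤ y) (hz : 0 ≤ z)
    (h : a * b * x + (a * q + p * b) * y + p * q * z ≤ 0) :
    a * b = 0 ∧ (0 < y → 0 < z → (a + p) * (b + q) = 0) := by
  have hx₀ : 0 ≤ a * b * x := by positivity
  have hy₀ : 0 ≤ (a * q + p * b) * y := by positivity
  have hz₀ : 0 ≤ p * q * z := by positivity
  have hab : a * b = 0 := (mul_eq_zero_iff_right hx.ne').1 (by linarith)
  refine ⟨hab, fun hy hz => ?_⟩
  have hcross : a * q + p * b = 0 := (mul_eq_zero_iff_right hy.ne').1 (by linarith)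
  have hpq : p * q = 0 := (mul_eq_zero_iff_right hz.ne').1 (by linarith)
  linear_combination hab + hcross + hpq

theorem eq_mul_or_eq_mul_and_eq_or_eq_zero {c d a a' b b' : ℝ} (hc : 0 < c) (hcd : c ≤ d)
    (hd : d < 1) (ha : c * a' ≤ a) (ha' : a ≤ a') (hb : c * b' ≤ b) (hb' : b ≤ b')
    (h : (1 - d ^ 2) * (a * b) ≤ c * (a * b' + a' * b - d * (a * b + a' * b'))) :
    (a = c * a' ∨ b = c * b') ∧ (d = c ∨ a = 0 ∨ b = 0) := by
  have hd' : 0 < 1 - d := sub_pos.2 hd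
  have hdc : 0 ≤ d - c := sub_nonneg.2 hcd
  have hcd' : 0 < 1 - c * d := by nlinarith
  have hcoef : 0 < (1 - d) * (d - c + (1 - c)) := by nlinarith
  have hid : (a - c * a') * (b - c * b') * ((1 - d) * (d - c + (1 - c))) +
      ((a - c * a') * (b' - b) + (a' - a) * (b - c * b')) * (c * (d - c) * (1 - d)) +
      (a' - a) * (b' - b) * (c * (d - c) * (1 - c * d)) =
      (1 - c) ^ 2 * ((1 - d ^ 2) * (a * b) -
        c * (a * b' + a' * b - d * (a * b + a' * b'))) := by
    ring
  obtain ⟨hmul, hmul'⟩ := mul_eq_zero_and_add_mul_add_eq_zero (sub_nonneg.2 ha) (sub_nonneg.2 hb)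
    (sub_nonneg.2 ha') (sub_nonneg.2 hb') hcoef
    (mul_nonneg (mul_nonneg hc.le hdc) hd'.le) (mul_nonneg (mul_nonneg hc.le hdc) hcd'.le)
    (hid.trans_le (mul_nonpos_of_nonneg_of_nonpos (sq_nonneg _) (sub_nonpos.2 h)))
  refine ⟨by simpa only [mul_eq_zero, sub_eq_zero] using hmul, ?_⟩
  obtain hcd | hcd := hcd.eq_or_lt
  · exact Or.inl hcd.symm
  have hdc' : 0 < d - c := sub_pos.2 hcd
  right
  obtain hzero | hzero := mul_eq_zero.1 (hmul' (mul_pos (mul_pos hc hdc') hd')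
    (mul_pos (mul_pos hc hdc') hcd'))
  · left
    nlinarith
  · right
    nlinarith

namespace IsSphericalDiameterGraph

variable (h : IsSphericalDiameterGraph G e c)
include h

theorem inner_self (x : V) : ⟪e x, e x⟫_ℝ = 1 := by
  rw [real_inner_self_eq_norm_sq, h.norm_eq_one, one_pow]

theorem inner_pos (x y : V) : 0 < ⟪e x, e y⟫_ℝ :=
  h.pos.trans_le (h.le_inner x y)

theorem inner_lt_one {x y : V} (hxy : x ≠ y) : ⟪e x, e y⟫_ℝ < 1 :=
  (inner_lt_one_iff_real_of_norm_eq_one (h.norm_eq_one x) (h.norm_eq_one y)).2 (h.injective.ne hxy)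

theorem inner_le_norm (U : E) (x : V) : ⟪U, e x⟫_ℝ ≤ ‖U‖ := by
  simpa [h.norm_eq_one] using real_inner_le_norm U (e x)

theorem inner_le_inner_of_mem_neighborCone {x : V} {U : E} (hU : U ∈ neighborCone G e x) (y : V) :
    ⟪U, e x⟫_ℝ ≤ ⟪U, e y⟫_ℝ := by
  induction hU using Submodule.span_induction with
  | mem U hU =>
    obtain ⟨b, hb, rfl⟩ := hU
    rw [(h.adj_iff b x).1 hb.symm]
    exact h.le_inner b y
  | zero => simp
  | add U U' _ _ ih ih' =>
    rw [inner_add_left, inner_add_left]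
    exact add_le_add ih ih'
  | smul a U _ ih =>
    change ⟪(a : ℝ) • U, _⟫_ℝ ≤ ⟪(a : ℝ) • U, _⟫_ℝ
    rw [real_inner_smul_left, real_inner_smul_left]
    exact mul_le_mul_of_nonneg_left ih a.2

theorem mul_norm_le_inner_of_mem_neighborCone {x : V} {U : E} (hU : U ∈ neighborCone G e x) :
    c * ‖U‖ ≤ ⟪U, e x⟫_ℝ := by
  induction hU using Submodule.span_induction with
  | mem U hU =>
    obtain ⟨b, hb, rfl⟩ := hU
    rw [(h.adj_iff b x).1 hb.symm, h.norm_eq_one, mul_one]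
  | zero => simp
  | add U U' _ _ ih ih' =>
    rw [inner_add_left]
    nlinarith [norm_add_le U U', h.pos]
  | smul a U _ ih =>
    change c * ‖(a : ℝ) • U‖ ≤ ⟪(a : ℝ) • U, _⟫_ℝ
    rw [real_inner_smul_left, norm_smul, Real.norm_of_nonneg a.2, mul_left_comm]
    exact mul_le_mul_of_nonneg_left ih a.2

theorem inner_nonneg_of_mem_neighborCone {x : V} {U : E} (hU : U ∈ neighborCone G e x) (y : V) :
    0 ≤ ⟪e y, U⟫_ℝ := by
  rw [real_inner_comm]
  exact (mul_nonneg h.pos.le (norm_nonneg U)).trans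
    ((h.mul_norm_le_inner_of_mem_neighborCone hU).trans (h.inner_le_inner_of_mem_neighborCone hU y))

theorem inner_mul_inner_le_of_mem_neighborCone {x y : V} {U U' : E}
    (hU : U ∈ neighborCone G e x) (hU' : U' ∈ neighborCone G e y) :
    ⟪U, e x⟫_ℝ * ⟪U', e y⟫_ℝ ≤ c * ⟪U, U'⟫_ℝ := by
  induction hU using Submodule.span_induction with
  | mem U hU =>
    obtain ⟨b, hb, rfl⟩ := hU
    rw [(h.adj_iff b x).1 hb.symm, real_inner_comm U']
    exact mul_le_mul_of_nonneg_left (h.inner_le_inner_of_mem_neighborCone hU' b) h.pos.le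
  | zero => simp
  | add U₁ U₂ _ _ ih₁ ih₂ =>
    rw [inner_add_left, inner_add_left]
    linarith
  | smul a U _ ih =>
    change ⟪(a : ℝ) • U, _⟫_ℝ * _ ≤ c * ⟪(a : ℝ) • U, _⟫_ℝ
    rw [real_inner_smul_left, real_inner_smul_left, mul_assoc, mul_left_comm c]
    exact mul_le_mul_of_nonneg_left ih a.2

theorem mul_inner_le_inner_of_mem_neighborCone {x : V} {U : E} (hU : U ∈ neighborCone G e x)
    (y : V) : c * ⟪U, e y⟫_ℝ ≤ ⟪U, e x⟫_ℝ :=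
  (mul_le_mul_of_nonneg_left (h.inner_le_norm U y) h.pos.le).trans
    (h.mul_norm_le_inner_of_mem_neighborCone hU)

theorem eq_zero_of_inner_nonpos {x y : V} {U : E} (hU : U ∈ neighborCone G e x)
    (hUy : ⟪U, e y⟫_ℝ ≤ 0) : U = 0 := by
  have hle : c * ‖U‖ ≤ 0 := (h.mul_norm_le_inner_of_mem_neighborCone hU).trans
    ((h.inner_le_inner_of_mem_neighborCone hU y).trans hUy)
  exact norm_le_zero_iff.1 (nonpos_of_mul_nonpos_right hle h.pos)

theorem eq_norm_smul_of_inner_eq_mul_inner {x y : V} {U : E} (hU : U ∈ neighborCone G e x)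
    (heq : ⟪U, e x⟫_ℝ = c * ⟪U, e y⟫_ℝ) : U = ‖U‖ • e y := by
  have hle : ‖U‖ ≤ ⟪U, e y⟫_ℝ :=
    le_of_mul_le_mul_left (heq ▸ h.mul_norm_le_inner_of_mem_neighborCone hU) h.pos
  have hinner : ⟪U, e y⟫_ℝ = ‖U‖ * ‖e y‖ := by
    rw [h.norm_eq_one, mul_one]
    exact (h.inner_le_norm U y).antisymm hle
  rw [← inner_eq_norm_mul_iff_real.1 hinner, h.norm_eq_one, one_smul]

theorem inner_le_mul_inner_of_mem_neighborCone {x y z : V} (hxy : G.Adj x y) (hyz : G.Adj y z)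
    (hzx : z ≠ x) {t s : ℝ} {U : E} (hU : U ∈ neighborCone G e x) (hUxy : U = t • e y + s • e x) :
    ⟪U, e x⟫_ℝ ≤ c * ⟪U, e y⟫_ℝ := by
  have hle := h.inner_le_inner_of_mem_neighborCone hU z
  have hcx := (h.adj_iff x y).1 hxy
  have hcy := (h.adj_iff y x).1 hxy.symm
  have hcz := (h.adj_iff y z).1 hyz
  simp only [hUxy, inner_add_left, real_inner_smul_left, h.inner_self, hcx, hcy, hcz] at hle ⊢
  have hs : s ≤ 0 := by nlinarith [h.inner_lt_one hzx.symm]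
  have hc : c ^ 2 < 1 := by nlinarith [h.pos, h.lt_one]
  nlinarith

theorem add_ne_smul_gnomonic (i : V) {d d' : G.Dart} {z : V} (hz : G.Adj d.snd z)
    (hzd : z ≠ d.fst) (hfst : d'.fst = d.fst) (hne : d' ≠ d) {q : E}
    (hq : q ∈ edgeCone (gnomonic G (e i) e) d.fst) (k : ℝ) :
    gnomonic G (e i) e d' + q ≠ k • gnomonic G (e i) e d := by
  intro heq
  have hadj : G.Adj d.fst d'.snd := hfst ▸ d'.adj
  have hsnd : d'.snd ≠ d.snd := fun hsnd => hne (SimpleGraph.Dart.ext _ _ (Prod.ext hfst hsnd))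
  have hw := h.inner_pos i d.fst
  obtain ⟨U, hU, rfl⟩ := exists_eq_sub_smul_of_mem_edgeCone_gnomonic hw hq
  rw [gnomonic, gnomonic, hfst] at heq
  set w := ⟪e i, e d.fst⟫_ℝ
  have hmem : w • e d'.snd + U ∈ neighborCone G e d.fst :=
    add_mem (PointedCone.smul_mem _ hw.le (Submodule.subset_span ⟨_, hadj, rfl⟩)) hU
  have hle := h.inner_le_mul_inner_of_mem_neighborCone d.adj hz hzd hmem
    (t := k * w) (s := ⟪e i, e d'.snd⟫_ℝ + ⟪e i, U⟫_ℝ / w - k * ⟪e i, e d.snd⟫_ℝ)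
    (by linear_combination (norm := module) heq)
  rw [inner_add_left, inner_add_left, real_inner_smul_left, real_inner_smul_left,
    (h.adj_iff _ _).1 hadj.symm] at hle
  have hlt := mul_lt_mul_of_pos_left (h.inner_lt_one hsnd) hw
  nlinarith [h.pos, h.inner_le_norm U d.snd, h.mul_norm_le_inner_of_mem_neighborCone hU]

theorem disjoint_edgeCone_gnomonic (i : V) {x y : V} (hxy : x ≠ y) :
    Disjoint (edgeCone (gnomonic G (e i) e) x) (edgeCone (gnomonic G (e i) e) y) := by
  rw [Submodule.disjoint_def]
  intro p hpx hpy
  obtain ⟨U, hU, rfl⟩ := exists_eq_sub_smul_of_mem_edgeCone_gnomonic (h.inner_pos i x) hpx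
  obtain ⟨U', hU', heq⟩ := exists_eq_sub_smul_of_mem_edgeCone_gnomonic (h.inner_pos i y) hpy
  have hs := div_nonneg (h.inner_nonneg_of_mem_neighborCone hU i) (h.inner_pos i x).le
  have hs' := div_nonneg (h.inner_nonneg_of_mem_neighborCone hU' i) (h.inner_pos i y).le
  have hx := congrArg (⟪·, e x⟫_ℝ) heq
  have hy := congrArg (⟪·, e y⟫_ℝ) heq
  simp only [inner_sub_left, real_inner_smul_left, h.inner_self, real_inner_comm (e x) (e y)]
    at hx hy
  have hzero : ⟪e i, U⟫_ℝ / ⟪e i, e x⟫_ℝ = 0 := by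
    nlinarith [h.inner_lt_one hxy, h.inner_le_inner_of_mem_neighborCone hU y,
      h.inner_le_inner_of_mem_neighborCone hU' x]
  have hinner : ⟪U, e i⟫_ℝ = 0 := by
    simpa [(h.inner_pos i x).ne', real_inner_comm] using hzero
  rw [hzero, h.eq_zero_of_inner_nonpos hU hinner.le, zero_smul, sub_zero]

theorem eq_norm_smul_of_add_eq_smul_add_smul {x y : V} (hxy : x ≠ y) {U U' : E}
    (hU : U ∈ neighborCone G e x) (hU' : U' ∈ neighborCone G e y) {s s' : ℝ}
    (hadd : U + U' = s • e x + s' • e y) :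
    U = 0 ∨ U' = 0 ∨ G.Adj x y ∧ (U = ‖U‖ • e y ∨ U' = ‖U'‖ • e x) := by
  have hpos := h.inner_pos x y
  have hlt := h.inner_lt_one hxy
  have hgram := inner_le_of_add_eq_smul_add_smul (h.norm_eq_one x) (h.norm_eq_one y)
    (by nlinarith) hadd
  have hmul := mul_le_mul_of_nonneg_left (h.inner_mul_inner_le_of_mem_neighborCone hU hU')
    (show 0 ≤ 1 - ⟪e x, e y⟫_ℝ ^ 2 by nlinarith)
  have hgram' := mul_le_mul_of_nonneg_left hgram h.pos.le
  obtain ⟨heq | heq, hc | hzero | hzero⟩ := eq_mul_or_eq_mul_and_eq_or_eq_zero h.pos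
    (h.le_inner x y) hlt (h.mul_inner_le_inner_of_mem_neighborCone hU y)
    (h.inner_le_inner_of_mem_neighborCone hU y) (h.mul_inner_le_inner_of_mem_neighborCone hU' x)
    (h.inner_le_inner_of_mem_neighborCone hU' x) (by linarith)
  · right; right
    exact ⟨(h.adj_iff x y).2 hc, Or.inl (h.eq_norm_smul_of_inner_eq_mul_inner hU heq)⟩
  · exact Or.inl (h.eq_zero_of_inner_nonpos hU hzero.le)
  · exact Or.inr (Or.inl (h.eq_zero_of_inner_nonpos hU' hzero.le))
  · right; right
    exact ⟨(h.adj_iff x y).2 hc, Or.inr (h.eq_norm_smul_of_inner_eq_mul_inner hU' heq)⟩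
  · exact Or.inl (h.eq_zero_of_inner_nonpos hU hzero.le)
  · exact Or.inr (Or.inl (h.eq_zero_of_inner_nonpos hU' hzero.le))

theorem eq_smul_gnomonic_of_neg_mem (i : V) {x y : V} (hxy : x ≠ y) {p : E}
    (hpx : p ∈ edgeCone (gnomonic G (e i) e) x) (hpy : -p ∈ edgeCone (gnomonic G (e i) e) y) :
    p = 0 ∨ ∃ d : G.Dart, d.fst = x ∧ d.snd = y ∧ ∃ t : ℝ, p = t • gnomonic G (e i) e d := by
  have hwx := h.inner_pos i x
  have hwy := h.inner_pos i y
  obtain ⟨U, hU, hp⟩ := exists_eq_sub_smul_of_mem_edgeCone_gnomonic hwx hpx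
  obtain ⟨U', hU', hneg⟩ := exists_eq_sub_smul_of_mem_edgeCone_gnomonic hwy hpy
  obtain rfl | rfl | ⟨hadj, hUy | hUx⟩ := h.eq_norm_smul_of_add_eq_smul_add_smul hxy hU hU'
    (s := ⟪e i, U⟫_ℝ / ⟪e i, e x⟫_ℝ) (s' := ⟪e i, U'⟫_ℝ / ⟪e i, e y⟫_ℝ)
    (by linear_combination (norm := module) -hp - hneg)
  · exact Or.inl (by simpa using hp)
  · exact Or.inl (by simpa using hneg)
  · refine Or.inr ⟨⟨(x, y), hadj⟩, rfl, rfl, ‖U‖ / ⟪e i, e x⟫_ℝ, ?_⟩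
    rw [hp, sub_smul_eq_smul_gnomonic hadj hwx.ne' hUy]
  · refine Or.inr ⟨⟨(x, y), hadj⟩, rfl, rfl, ‖U'‖ / ⟪e i, e y⟫_ℝ, ?_⟩
    rw [← neg_inj, hneg, ← smul_neg, ← gnomonic_symm]
    exact sub_smul_eq_smul_gnomonic hadj.symm hwy.ne' hUx

theorem isAntipodalDrawing_gnomonic [Fintype V] (hdeg : ∀ x, 3 ≤ G.degree x) (i : V) :
    IsAntipodalDrawing (gnomonic G (e i) e) where
  map_symm := gnomonic_symm (e i) e
  add_ne_smul {d d'} hfst hne q hq k := by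
    obtain ⟨z, hz, hzd⟩ := Finset.exists_mem_ne
      (Nat.lt_of_succ_lt (Nat.lt_of_succ_le (hdeg d.snd))) d.fst
    exact h.add_ne_smul_gnomonic i ((G.mem_neighborFinset _ z).1 hz) hzd hfst hne hq k
  disjoint := h.disjoint_edgeCone_gnomonic i
  eq_smul_of_neg_mem hxy _ := h.eq_smul_gnomonic_of_neg_mem i hxy
  three_le_degree := hdeg

theorem card_edgeFinset_add_two_le [Fintype V] [Nonempty V] (hdim : Module.finrank ℝ E = 4)
    (hdeg : ∀ x, 3 ≤ G.degree x) : G.edgeFinset.card + 2 ≤ 2 * Fintype.card V := by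
  obtain ⟨i⟩ := ‹Nonempty V›
  have : FiniteDimensional ℝ E := .of_finrank_pos (by omega)
  have horth : Module.finrank ℝ (ℝ ∙ e i)ᗮ = 3 := by
    have := (ℝ ∙ e i).finrank_add_finrank_orthogonal
    rw [finrank_span_singleton (norm_ne_zero_iff.1 (by simp [h.norm_eq_one])), hdim] at this
    omega
  obtain ⟨f⟩ : Nonempty ((ℝ ∙ e i)ᗮ ≃ₗ[ℝ] (Fin 3 → ℝ)) :=
    FiniteDimensional.nonempty_linearEquiv_of_finrank_eq (by simp [horth])
  obtain ⟨g, hg⟩ := f.toLinearMap.exists_extend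
  have hspan : Submodule.span ℝ (range (gnomonic G (e i) e)) ≤ (ℝ ∙ e i)ᗮ := by
    refine Submodule.span_le.2 (range_subset_iff.2 fun d => ?_)
    exact Submodule.mem_orthogonal_singleton_iff_inner_right.2 (inner_gnomonic (e i) e d)
  have hinj : Function.Injective (g ∘ₗ (ℝ ∙ e i)ᗮ.subtype) := hg ▸ f.injective
  have hinjOn : InjOn g (Submodule.span ℝ (range (gnomonic G (e i) e))) :=
    (injOn_iff_injective.2 hinj).mono hspan
  exact ((h.isAntipodalDrawing_gnomonic hdeg i).map hinjOn).card_edgeFinset_add_two_le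

end IsSphericalDiameterGraph

end SphericalDiameter

section UnitDistance

open scoped InnerProductSpace

variable {E : Type*} [NormedAddCommGroup E]

/-- The graph on `X` joining points at distance `1`, which is the diameter graph of `X` when `X` has
diameter at most `1`. -/
def unitDistanceGraph (X : Finset E) : SimpleGraph X where
  Adj x y := ‖(x : E) - y‖ = 1
  symm := ⟨fun x y h => by rwa [norm_sub_rev]⟩
  loopless := ⟨fun x => by simp⟩

theorem isSphericalDiameterGraph_unitDistanceGraph [InnerProductSpace ℝ E] {X : Finset E} {r : ℝ}
    (hr : 1 / √2 < r) (hsphere : ∀ x ∈ X, ‖x‖ = r) (hdiam : ∀ x ∈ X, ∀ y ∈ X, ‖x - y‖ ≤ 1) :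
    IsSphericalDiameterGraph (unitDistanceGraph X) (fun x => r⁻¹ • (x : E))
      (1 - 1 / (2 * r ^ 2)) := by
  have hr₀ : 0 < r := lt_trans (by positivity) hr
  have hr₂ : 1 < 2 * r ^ 2 := by
    have := pow_lt_pow_left₀ hr (by positivity) two_ne_zero
    rw [div_pow, one_pow, Real.sq_sqrt two_pos.le] at this
    linarith
  have hinner (x y : X) :
      ⟪r⁻¹ • (x : E), r⁻¹ • (y : E)⟫_ℝ = 1 - ‖(x : E) - y‖ ^ 2 / (2 * r ^ 2) := by
    rw [real_inner_smul_left, real_inner_smul_right, norm_sub_sq_real, hsphere x x.2,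
      hsphere y y.2]
    field_simp
    ring
  refine ⟨?_, ?_, fun x => ?_, ?_, fun x y => ?_, fun x y => ?_⟩
  · rwa [sub_pos, div_lt_one (by positivity)]
  · exact sub_lt_self _ (by positivity)
  · rw [norm_smul, norm_inv, Real.norm_of_nonneg hr₀.le, hsphere x x.2, inv_mul_cancel₀ hr₀.ne']
  · exact (smul_right_injective E (inv_ne_zero hr₀.ne')).comp Subtype.val_injective
  · rw [hinner]
    gcongr
    exact pow_le_one₀ (norm_nonneg _) (hdiam x x.2 y y.2)
  · rw [hinner, sub_right_inj, div_left_inj' (by positivity),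
      pow_eq_one_iff_of_nonneg (norm_nonneg _) two_ne_zero]
    rfl

end UnitDistance

section UnitPairs

variable {X : Finset (EuclideanSpace ℝ (Fin 4))}

theorem pair_mem_unitPairs_iff {x y : EuclideanSpace ℝ (Fin 4)} (hne : x ≠ y) :
    {x, y} ∈ unitPairs X ↔ x ∈ X ∧ y ∈ X ∧ ‖x - y‖ = 1 := by
  simp [unitPairs, Finset.insert_subset_iff, Finset.card_pair hne, hne, hne.symm,
    norm_sub_rev y x, and_assoc]

theorem exists_adj_of_mem_unitPairs {s : Finset (EuclideanSpace ℝ (Fin 4))}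
    (hs : s ∈ unitPairs X) :
    ∃ x y : X, (unitDistanceGraph X).Adj x y ∧ s = {↑x, ↑y} := by
  obtain ⟨x, y, hne, rfl⟩ := Finset.card_eq_two.1
    (Finset.mem_powersetCard.1 (Finset.mem_filter.1 hs).1).2
  obtain ⟨hx, hy, hxy⟩ := (pair_mem_unitPairs_iff hne).1 hs
  exact ⟨⟨x, hx⟩, ⟨y, hy⟩, hxy, rfl⟩

theorem card_unitPairs_le_card_edgeFinset :
    (unitPairs X).card ≤ (unitDistanceGraph X).edgeFinset.card := by
  refine Finset.card_le_card_of_surjOn (fun z => (z.map Subtype.val).toFinset) fun s hs => ?_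
  obtain ⟨x, y, hxy, rfl⟩ := exists_adj_of_mem_unitPairs hs
  exact ⟨s(x, y), by simpa using hxy, by simp [Sym2.toFinset_mk_eq]⟩

theorem card_unitPairs_le_card_erase_add_degree (x : X) :
    (unitPairs X).card ≤
      (unitPairs (X.erase x)).card + (unitDistanceGraph X).degree x := by
  have hsub : unitPairs X ⊆ unitPairs (X.erase x) ∪
      ((unitDistanceGraph X).neighborFinset x).image fun y => {↑x, ↑y} := by
    intro s hs
    obtain ⟨y, z, hyz, rfl⟩ := exists_adj_of_mem_unitPairs hs
    rw [Finset.mem_union, Finset.mem_image]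
    by_cases hy : y = x
    · exact Or.inr ⟨z, by simpa [hy] using hyz, by rw [hy]⟩
    by_cases hz : z = x
    · exact Or.inr ⟨y, by simpa [hz] using hyz.symm, by rw [hz, Finset.pair_comm]⟩
    · left
      rw [pair_mem_unitPairs_iff (Subtype.coe_injective.ne hyz.ne)]
      exact ⟨Finset.mem_erase.2 ⟨Subtype.coe_injective.ne hy, y.2⟩,
        Finset.mem_erase.2 ⟨Subtype.coe_injective.ne hz, z.2⟩, hyz⟩
  exact (Finset.card_le_card hsub).trans ((Finset.card_union_le _ _).trans
    (Nat.add_le_add_left Finset.card_image_le _))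

theorem card_unitPairs_add_two_le {r : ℝ} (hr : 1 / √2 < r) (hX : X.Nonempty)
    (hsphere : ∀ x ∈ X, ‖x‖ = r) (hdiam : ∀ x ∈ X, ∀ y ∈ X, ‖x - y‖ ≤ 1)
    (hdeg : ∀ x, 3 ≤ (unitDistanceGraph X).degree x) :
    (unitPairs X).card + 2 ≤ 2 * X.card := by
  have : Nonempty X := hX.to_subtype
  refine (Nat.add_le_add_right card_unitPairs_le_card_edgeFinset 2).trans ?_
  simpa using (isSphericalDiameterGraph_unitDistanceGraph hr hsphere
    hdiam).card_edgeFinset_add_two_le (by simp) hdeg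

end UnitPairs

theorem diameter_graph_sphere_edges (r : ℝ) (hr : r > 1 / Real.sqrt 2)
    (X : Finset (EuclideanSpace ℝ (Fin 4))) (n : ℕ) (hn : X.card = n)
    (hsphere : ∀ x ∈ X, ‖x‖ = r)
    (hdiam : ∀ x ∈ X, ∀ y ∈ X, ‖x - y‖ ≤ 1) :
    (unitPairs X).card ≤ 2 * n - 2 := by
  subst hn
  induction X using Finset.strongInduction with
  | H X ih =>
    obtain hcard | hcard := Nat.lt_or_ge X.card 2
    · simp [unitPairs, Finset.powersetCard_eq_empty.2 hcard]
    by_cases hdeg : ∀ x, 3 ≤ (unitDistanceGraph X).degree x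
    · exact Nat.le_sub_of_add_le
        (card_unitPairs_add_two_le hr (Finset.card_pos.1 (by omega)) hsphere hdiam hdeg)
    · obtain ⟨x, hx⟩ := not_forall.1 hdeg
      have herase := ih (X.erase x) (Finset.erase_ssubset x.2)
        (fun y hy => hsphere y (Finset.mem_of_mem_erase hy))
        (fun y hy z hz => hdiam y (Finset.mem_of_mem_erase hy) z (Finset.mem_of_mem_erase hz))
      have hdelete := card_unitPairs_le_card_erase_add_degree x
      rw [Finset.card_erase_of_mem x.2] at herase
      omega
end

section
/- For every n ≥ 52, the maximum, over all sets X of n points in Euclidean 4-space with all pairwise distances at most 1, of the number of unordered pairs {x, y} ⊆ X with ‖x − y‖ = 1, equals F₂(n), where F₂(n) = ⌊n/2⌋·⌈n/2⌉ + ⌈n/2⌉ + 1 if n is not congruent to 3 modulo 4, and F₂(n) = ⌊n/2⌋·⌈n/2⌉ + ⌈n/2⌉ if n is congruent to 3 modulo 4. In other words, every such X has at most F₂(n) unit-distance pairs, and some such X attains exactly F₂(n) unit-distance pairs. -/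
attribute [local instance] Classical.propDecidable

/-- `F₂ n = t₂(n) + ⌈n/2⌉ (+ 1 if n ≢ 3 mod 4)`, where `t₂(n) = ⌊n/2⌋⌈n/2⌉`. -/
def F₂ (n : ℕ) : ℕ :=
  if n % 4 = 3 then n / 2 * ((n + 1) / 2) + (n + 1) / 2
  else n / 2 * ((n + 1) / 2) + (n + 1) / 2 + 1

/-!
In a diameter graph in dimension four, two triples of points spanning a complete bipartite graph lie
on two circles in orthogonal planes with a common centre and radii `r₁`, `r₂` such that
`r₁ ^ 2 + r₂ ^ 2 = 1` (a Lenz configuration), and a point at distance `1` from three points of one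
circle lies on the other one. By the Kővári–Sós–Turán argument, a graph with more than about
`n ^ 2 / 4 + n / 2` edges contains a triple with many common neighbours, hence a maximal Lenz
configuration with many points. Every point outside it has at most four neighbours in it and so
contributes too few edges; hence an extremal set is itself a Lenz configuration. There, one circle
has `r ^ 2 ≥ 1 / 2` and carries at most one diameter, whereas the other one, with `a` points,
carries at most `a` diameters, and fewer than `a` when `a` is even. An odd regular polygon together
with an arc on the complementary circle attains the resulting maximum.
-/

open Finset Module

section EdgeCounts

variable {V W : Type*} (G : SimpleGraph V) {X S T : Finset V} {x : V}

/-- The neighbours of `x` inside the vertex set `X`. -/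
noncomputable def neighborsIn (X : Finset V) (x : V) : Finset V := {y ∈ X | G.Adj x y}

/-- The common neighbours of `T` inside the vertex set `X`. -/
noncomputable def commonNeighborsIn (X T : Finset V) : Finset V := {y ∈ X | ∀ a ∈ T, G.Adj y a}

/-- The edges of `G` inside the vertex set `X`, as two-element subsets of `X`
(the format of `unitPairs`). -/
noncomputable def edgesIn (X : Finset V) : Finset (Finset V) :=
  {s ∈ X.powersetCard 2 | (s : Set V).Pairwise G.Adj}

variable {G}

lemma mem_neighborsIn {y : V} : y ∈ neighborsIn G X x ↔ y ∈ X ∧ G.Adj x y := mem_filter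

lemma mem_commonNeighborsIn {y : V} :
    y ∈ commonNeighborsIn G X T ↔ y ∈ X ∧ ∀ a ∈ T, G.Adj y a := mem_filter

lemma neighborsIn_subset : neighborsIn G X x ⊆ X := filter_subset _ _

lemma commonNeighborsIn_subset : commonNeighborsIn G X T ⊆ X := filter_subset _ _

lemma pair_mem_edgesIn {a b : V} :
    ({a, b} : Finset V) ∈ edgesIn G X ↔ a ∈ X ∧ b ∈ X ∧ G.Adj a b := by
  by_cases hab : a = b
  · simp [edgesIn, hab]
  · simp [edgesIn, hab, card_pair hab, insert_subset_iff, and_assoc]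

lemma exists_eq_pair_of_mem_edgesIn {s : Finset V} (hs : s ∈ edgesIn G X) :
    ∃ a b, a ∈ X ∧ b ∈ X ∧ G.Adj a b ∧ s = {a, b} := by
  obtain ⟨a, b, -, rfl⟩ := card_eq_two.1 (mem_powersetCard.1 (mem_filter.1 hs).1).2
  obtain ⟨ha, hb, hab⟩ := pair_mem_edgesIn.1 hs
  exact ⟨a, b, ha, hb, hab, rfl⟩

variable (G)

lemma card_edgesIn_le_choose (X : Finset V) : #(edgesIn G X) ≤ (#X).choose 2 :=
  (card_filter_le _ _).trans (card_powersetCard _ _).le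

lemma sum_card_neighborsIn (S T : Finset V) :
    ∑ x ∈ S, #(neighborsIn G T x) = #(G.interedges S T) := by
  rw [SimpleGraph.interedges, Rel.interedges, card_filter, sum_product]
  exact sum_congr rfl fun x _ ↦ card_filter _ _

lemma card_interedges_self (X : Finset V) : #(G.interedges X X) = 2 * #(edgesIn G X) := by
  have hmap : Set.MapsTo (fun e : V × V ↦ ({e.1, e.2} : Finset V))
      (G.interedges X X) (edgesIn G X) := fun e he ↦
    pair_mem_edgesIn.2 (Rel.mem_interedges_iff.1 he)
  rw [card_eq_sum_card_fiberwise hmap, mul_comm]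
  refine sum_const_nat fun s hs ↦ ?_
  obtain ⟨a, b, ha, hb, hab, rfl⟩ := exists_eq_pair_of_mem_edgesIn hs
  have hfiber : {e ∈ G.interedges X X | ({e.1, e.2} : Finset V) = {a, b}} = {(a, b), (b, a)} := by
    ext ⟨x, y⟩
    rw [mem_filter, SimpleGraph.mem_interedges_iff]
    simp only [mem_insert, mem_singleton, Prod.mk.injEq]
    constructor
    · rintro ⟨⟨-, -, hxy⟩, h⟩
      rw [← coe_inj, coe_pair, coe_pair] at h
      exact Set.pair_eq_pair_iff.1 h
    · rintro (⟨rfl, rfl⟩ | ⟨rfl, rfl⟩)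
      exacts [⟨⟨ha, hb, hab⟩, rfl⟩, ⟨⟨hb, ha, hab.symm⟩, pair_comm _ _⟩]
  rw [hfiber, card_pair fun h ↦ hab.ne (Prod.ext_iff.1 h).1]

lemma sum_card_neighborsIn_self (X : Finset V) :
    ∑ x ∈ X, #(neighborsIn G X x) = 2 * #(edgesIn G X) := by
  rw [sum_card_neighborsIn, card_interedges_self]

lemma card_interedges_comm (S T : Finset V) : #(G.interedges S T) = #(G.interedges T S) :=
  have := G.symm
  Rel.card_interedges_comm S T

lemma card_interedges_union_left (h : Disjoint S T) (U : Finset V) :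
    #(G.interedges (S ∪ T) U) = #(G.interedges S U) + #(G.interedges T U) := by
  simp_rw [← sum_card_neighborsIn]
  exact sum_union h

lemma card_edgesIn_union (h : Disjoint S T) :
    #(edgesIn G (S ∪ T)) = #(edgesIn G S) + #(edgesIn G T) + #(G.interedges S T) := by
  have := card_interedges_self G (S ∪ T)
  rw [card_interedges_union_left G h, card_interedges_comm G S, card_interedges_comm G T,
    card_interedges_union_left G h, card_interedges_union_left G h, card_interedges_self,
    card_interedges_self, card_interedges_comm G T S] at this
  omega

lemma card_interedges_le_mul_of_forall_card_neighborsIn_le {k : ℕ}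
    (h : ∀ x ∈ S, #(neighborsIn G T x) ≤ k) : #(G.interedges S T) ≤ #S * k := by
  rw [← sum_card_neighborsIn]
  exact sum_le_card_nsmul _ _ _ h

lemma card_neighborsIn_eq_of_le {k : ℕ} (hle : ∀ x ∈ X, #(neighborsIn G X x) ≤ k)
    (h : #X * k ≤ 2 * #(edgesIn G X)) : ∀ x ∈ X, #(neighborsIn G X x) = k := by
  rw [← sum_card_neighborsIn_self, ← smul_eq_mul, ← sum_const] at h
  exact (sum_eq_sum_iff_of_le hle).1 ((sum_le_sum hle).antisymm h)

variable {G} in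
lemma card_interedges_of_isCompleteBetween (h : G.IsCompleteBetween S T) :
    #(G.interedges S T) = #S * #T := by
  rw [SimpleGraph.interedges, Rel.interedges, filter_true_of_mem, card_product]
  exact fun e he ↦ h (mem_product.1 he).1 (mem_product.1 he).2

variable {G} in
lemma card_edgesIn_union_of_isCompleteBetween (h : G.IsCompleteBetween S T) :
    #(edgesIn G (S ∪ T)) = #(edgesIn G S) + #(edgesIn G T) + #S * #T := by
  rw [card_edgesIn_union G (disjoint_coe.1 h.disjoint), card_interedges_of_isCompleteBetween h]

variable {G} in
lemma card_edgesIn_image {H : SimpleGraph W} {f : V → W} (hf : Set.InjOn f X)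
    (hadj : ∀ x ∈ X, ∀ y ∈ X, H.Adj (f x) (f y) ↔ G.Adj x y) :
    #(edgesIn H (X.image f)) = #(edgesIn G X) := by
  have hnbr : ∀ x ∈ X, neighborsIn H (X.image f) (f x) = (neighborsIn G X x).image f := by
    intro x hx
    rw [neighborsIn, filter_image]
    exact congrArg _ (filter_congr fun y hy ↦ hadj x hx y hy)
  have hsum : ∑ y ∈ X.image f, #(neighborsIn H (X.image f) y) = ∑ x ∈ X, #(neighborsIn G X x) := by
    rw [sum_image hf]
    refine sum_congr rfl fun x hx ↦ ?_
    rw [hnbr x hx, card_image_of_injOn (hf.mono (coe_subset.2 neighborsIn_subset))]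
  rw [sum_card_neighborsIn_self, sum_card_neighborsIn_self] at hsum
  omega

end EdgeCounts

section DoubleCounting

variable {V : Type*} (G : SimpleGraph V) {X : Finset V}

lemma sum_choose_card_neighborsIn (X : Finset V) (k : ℕ) :
    ∑ x ∈ X, (#(neighborsIn G X x)).choose k =
      ∑ T ∈ X.powersetCard k, #(commonNeighborsIn G X T) := by
  have hleft : ∀ x ∈ X, (#(neighborsIn G X x)).choose k =
      #((X.powersetCard k).bipartiteAbove (fun x T ↦ ∀ a ∈ T, G.Adj x a) x) := by
    intro x _
    rw [← card_powersetCard]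
    congr 1
    ext T
    simp only [mem_powersetCard, bipartiteAbove, mem_filter, neighborsIn, subset_iff]
    grind
  rw [sum_congr rfl hleft, sum_card_bipartiteAbove_eq_sum_card_bipartiteBelow]
  rfl

lemma exists_lt_card_commonNeighborsIn {k t : ℕ}
    (h : t * (#X).choose k < ∑ x ∈ X, (#(neighborsIn G X x)).choose k) :
    ∃ T ⊆ X, #T = k ∧ t < #(commonNeighborsIn G X T) := by
  rw [sum_choose_card_neighborsIn, ← card_powersetCard, mul_comm, ← smul_eq_mul] at h
  obtain ⟨T, hT, hlt⟩ := exists_lt_of_sum_lt ((sum_const t).trans_lt h)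
  obtain ⟨hTX, hcard⟩ := mem_powersetCard.1 hT
  exact ⟨T, hTX, hcard, hlt⟩

lemma card_mul_descPochhammer_le_sum_descFactorial {k : ℕ} (hk : k ≠ 0) {p : ℝ}
    (hp : (k - 1 : ℝ) ≤ p) (h : #X * p ≤ 2 * #(edgesIn G X)) :
    #X * (descPochhammer ℝ k).eval p ≤
      ∑ x ∈ X, ((#(neighborsIn G X x)).descFactorial k : ℝ) := by
  obtain rfl | hX := X.eq_empty_or_nonempty
  · simp
  have hpos : (0 : ℝ) < #X := Nat.cast_pos.2 hX.card_pos
  have havg : p ≤ ∑ x ∈ X, (#X : ℝ)⁻¹ * #(neighborsIn G X x) := by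
    rw [← mul_sum, ← Nat.cast_sum, sum_card_neighborsIn_self, le_inv_mul_iff₀ hpos]
    exact_mod_cast h
  rw [← le_inv_mul_iff₀ hpos, mul_sum]
  refine (monotoneOn_descPochhammer_eval k hp (hp.trans havg) havg).trans <|
    descPochhammer_eval_le_sum_descFactorial hk _ _ (fun _ _ ↦ by positivity) ?_ (hp.trans havg)
  rw [sum_const, nsmul_eq_mul, mul_inv_cancel₀ hpos.ne']

/-- The **Kővári–Sós–Turán** argument. -/
lemma exists_lt_card_commonNeighborsIn_of_descPochhammer {k t : ℕ} (hk : k ≠ 0) {p : ℝ}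
    (hp : (k - 1 : ℝ) ≤ p) (h : #X * p ≤ 2 * #(edgesIn G X))
    (ht : t * (descPochhammer ℝ k).eval (#X : ℝ) < #X * (descPochhammer ℝ k).eval p) :
    ∃ T ⊆ X, #T = k ∧ t < #(commonNeighborsIn G X T) := by
  refine exists_lt_card_commonNeighborsIn G (lt_of_mul_lt_mul_left ?_ k.factorial.zero_le)
  rw [mul_left_comm, ← Nat.descFactorial_eq_factorial_mul_choose, mul_sum]
  simp_rw [← Nat.descFactorial_eq_factorial_mul_choose]
  rw [descPochhammer_eval_eq_descFactorial] at ht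
  exact_mod_cast ht.trans_le (card_mul_descPochhammer_le_sum_descFactorial G hk hp h)

lemma exists_card_eq_three_lt_card_commonNeighborsIn {t : ℕ} {p : ℝ} (hX : X.Nonempty)
    (hp : 2 ≤ p) (h : #X * p ≤ 2 * #(edgesIn G X))
    (ht : t * ((#X - 1) * (#X - 2) : ℝ) < p * (p - 1) * (p - 2)) :
    ∃ T ⊆ X, #T = 3 ∧ t < #(commonNeighborsIn G X T) := by
  have heval (q : ℝ) : (descPochhammer ℝ 3).eval q = q * (q - 1) * (q - 2) := by
    simp [descPochhammer_succ_eval]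
  refine exists_lt_card_commonNeighborsIn_of_descPochhammer G three_ne_zero
    (by norm_num; linarith) h ?_
  rw [heval, heval]
  have hpos : (0 : ℝ) < #X := Nat.cast_pos.2 hX.card_pos
  linarith [mul_lt_mul_of_pos_left ht hpos]

lemma exists_four_lt_card_commonNeighborsIn (hX : 8 ≤ #X)
    (h : #X ^ 2 + 6 * #X + 1 ≤ 4 * #(edgesIn G X) + 4) :
    ∃ T ⊆ X, #T = 3 ∧ 4 < #(commonNeighborsIn G X T) := by
  have hne : X.Nonempty := card_pos.1 (by omega)
  rify at hX h
  refine exists_card_eq_three_lt_card_commonNeighborsIn G (p := #X / 2 + 11 / 4) hne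
    (by linarith) (by nlinarith) ?_
  have hcubic : (0 : ℝ) < 8 * #X ^ 3 - 172 * #X ^ 2 + 1030 * #X - 281 := by
    nlinarith [mul_nonneg (sub_nonneg.2 hX) (sq_nonneg (4 * #X - 55 : ℝ))]
  push_cast
  linarith

lemma exists_six_lt_card_commonNeighborsIn (hX : 45 ≤ #X)
    (h : (#X + 1) ^ 2 ≤ 4 * #(edgesIn G X)) :
    ∃ T ⊆ X, #T = 3 ∧ 6 < #(commonNeighborsIn G X T) := by
  have hne : X.Nonempty := card_pos.1 (by omega)
  rify at hX h
  refine exists_card_eq_three_lt_card_commonNeighborsIn G (p := #X / 2 + 1) hne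
    (by linarith) (by nlinarith) ?_
  have hcubic : 0 < ((#X : ℝ) - 2) * (#X * (#X + 2) - 48 * (#X - 1)) := by
    apply mul_pos <;> nlinarith
  push_cast
  linarith

end DoubleCounting

section BicliqueClosure

variable {V : Type*} {G : SimpleGraph V}

/-- A graph is `k`-biclique-closed if, whenever two `k`-sets `A` and `B` span a complete bipartite
graph, every common neighbour of `A` is adjacent to every common neighbour of `B`. This is the
combinatorial trace of the geometry of Lenz configurations. -/
def IsBicliqueClosed (G : SimpleGraph V) (k : ℕ) : Prop :=
  ∀ ⦃A B : Finset V⦄, #A = k → #B = k → G.IsCompleteBetween A B →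
    ∀ ⦃x y⦄, (∀ a ∈ A, G.Adj x a) → (∀ b ∈ B, G.Adj y b) → G.Adj x y

lemma IsBicliqueClosed.adj {k : ℕ} (hG : IsBicliqueClosed G k) {A B : Finset V}
    (hAB : G.IsCompleteBetween A B) {x y : V} (hx : k ≤ #(neighborsIn G A x)) (hB : k ≤ #B)
    (hy : ∀ b ∈ B, G.Adj y b) : G.Adj x y := by
  obtain ⟨A', hA', hcardA⟩ := exists_subset_card_eq hx
  obtain ⟨B', hB', hcardB⟩ := exists_subset_card_eq hB
  refine hG hcardA hcardB (fun a ha b hb ↦ hAB (neighborsIn_subset (hA' ha)) (hB' hb)) ?_ ?_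
  · exact fun a ha ↦ (mem_neighborsIn.1 (hA' ha)).2
  · exact fun b hb ↦ hy b (hB' hb)

lemma isCompleteBetween_commonNeighborsIn (X T : Finset V) :
    G.IsCompleteBetween (commonNeighborsIn G X T) T := fun _ hx _ hy ↦
  (mem_commonNeighborsIn.1 hx).2 _ hy

/-- The pair `(A, B)` below is a Galois-closed biclique: each side consists of the common
neighbours of the other one. -/
lemma IsBicliqueClosed.exists_biclique {k t : ℕ} (hG : IsBicliqueClosed G (k + 1))
    (hkt : k ≤ t) {X T : Finset V} (hTX : T ⊆ X) (hT : #T = k + 1)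
    (ht : t < #(commonNeighborsIn G X T)) :
    ∃ A ⊆ X, ∃ B ⊆ X, k < #A ∧ t < #B ∧ G.IsCompleteBetween A B ∧
      ∀ x ∈ X, x ∉ A ∪ B → #(neighborsIn G (A ∪ B) x) ≤ 2 * k := by
  set B := commonNeighborsIn G X T
  set A := commonNeighborsIn G X B
  have hBT : G.IsCompleteBetween B T := isCompleteBetween_commonNeighborsIn X T
  have hAB : G.IsCompleteBetween A B := isCompleteBetween_commonNeighborsIn X B
  have hTA : T ⊆ A := fun a ha ↦ mem_commonNeighborsIn.2 ⟨hTX ha, fun b hb ↦ (hBT hb ha).symm⟩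
  have hA : k < #A := by have := card_le_card hTA; omega
  refine ⟨A, commonNeighborsIn_subset, B, commonNeighborsIn_subset, hA, ht, hAB,
    fun x hx hxAB ↦ ?_⟩
  rw [notMem_union] at hxAB
  have hxB : #(neighborsIn G B x) ≤ k := by
    by_contra! hlt
    exact hxAB.1 <| mem_commonNeighborsIn.2 ⟨hx, fun b hb ↦
      hG.adj hBT hlt hT.ge fun a ha ↦ hBT hb ha⟩
  have hxA : #(neighborsIn G A x) ≤ k := by
    by_contra! hlt
    exact hxAB.2 <| mem_commonNeighborsIn.2 ⟨hx, fun a ha ↦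
      hG.adj hAB hlt (by omega) fun b hb ↦ hAB (hTA ha) hb⟩
  calc #(neighborsIn G (A ∪ B) x)
      ≤ #(neighborsIn G A x) + #(neighborsIn G B x) := by
        rw [neighborsIn, filter_union]
        exact card_union_le _ _
    _ ≤ 2 * k := by omega

end BicliqueClosure

section ExtremalNumber

lemma four_mul_F₂ (n : ℕ) :
    4 * F₂ n = (n + 1) ^ 2 + if n % 4 = 3 then 0 else if n % 4 = 1 then 4 else 3 := by
  have hn := Nat.div_add_mod n 4
  have hr : n % 4 < 4 := Nat.mod_lt _ four_pos
  have hhalf : n / 2 = 2 * (n / 4) + n % 4 / 2 := by omega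
  have hhalf' : (n + 1) / 2 = 2 * (n / 4) + (n % 4 + 1) / 2 := by omega
  rw [F₂, hhalf, hhalf']
  generalize n / 4 = k at *
  generalize n % 4 = r at *
  subst hn
  interval_cases r <;> simp <;> ring

lemma sq_le_four_mul_F₂ (n : ℕ) : (n + 1) ^ 2 ≤ 4 * F₂ n := by
  rw [four_mul_F₂]
  exact Nat.le_add_right _ _

lemma four_mul_F₂_le (n : ℕ) : 4 * F₂ n ≤ (n + 1) ^ 2 + 4 := by
  rw [four_mul_F₂]
  split_ifs <;> omega

lemma mul_add_add_one_le_F₂ {a b e : ℕ} (he : e ≤ a) (heven : Even a → e < a) :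
    a * b + e + 1 ≤ F₂ (a + b) := by
  suffices h : 4 * (a * b + e + 1) ≤ 4 * F₂ (a + b) by omega
  rw [four_mul_F₂]
  obtain ⟨D, hD⟩ : ∃ D : ℤ, D = b + 1 - a := ⟨_, rfl⟩
  have hident : 4 * ((a : ℤ) * b + a + 1) = (a + b + 1) ^ 2 + 4 - D ^ 2 := by rw [hD]; ring
  zify at he ⊢
  split_ifs with h3 h1
  · obtain ha | ⟨j, rfl⟩ := a.even_or_odd
    · have hlt : (e : ℤ) + 1 ≤ a := by exact_mod_cast heven ha
      linarith [sq_nonneg D]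
    · have hsq : 2 ^ 2 ≤ D ^ 2 := sq_le_sq.2 (le_abs'.2 (by rw [abs_two]; omega))
      linarith
  · linarith [sq_nonneg D]
  · have hsq : 1 ^ 2 ≤ D ^ 2 := sq_le_sq.2 (le_abs'.2 (by rw [abs_one]; omega))
    linarith

lemma F₂_eq_mul_add_add_one {a b : ℕ} (ha : a = 2 * ((a + b) / 4) + 1) :
    F₂ (a + b) = a * b + a + 1 := by
  suffices h : 4 * F₂ (a + b) = 4 * (a * b + a + 1) by omega
  rw [four_mul_F₂]
  obtain ⟨D, hD⟩ : ∃ D : ℤ, D = b + 1 - a := ⟨_, rfl⟩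
  have hident : 4 * ((a : ℤ) * b + a + 1) = (a + b + 1) ^ 2 + 4 - D ^ 2 := by rw [hD]; ring
  have hDr : D = ((a + b) % 4 : ℕ) - 1 := by omega
  have hr : (a + b) % 4 < 4 := Nat.mod_lt _ four_pos
  generalize (a + b) % 4 = r at hr hDr ⊢
  zify
  rw [hident, hDr]
  interval_cases r <;> norm_num <;> ring

end ExtremalNumber

section Lenz

/-- The unit distance graph of a metric space. On a set of diameter at most `1` it induces the
diameter graph. -/
def unitDistGraph (E : Type*) [PseudoMetricSpace E] : SimpleGraph E where
  Adj x y := dist x y = 1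
  symm := ⟨fun x y h ↦ by rwa [dist_comm]⟩
  loopless := ⟨fun x h ↦ by simp at h⟩

lemma unitDistGraph_adj {E : Type*} [PseudoMetricSpace E] {x y : E} :
    (unitDistGraph E).Adj x y ↔ dist x y = 1 := Iff.rfl

/-- The set `A` is isometric to a subset of the circle of radius `r` centred at `0` in `ℂ`, which
stands for an arbitrary circle of radius `r` in the ambient space. -/
def IsCircular {E : Type*} [PseudoMetricSpace E] (A : Finset E) (r : ℝ) : Prop :=
  ∃ f : E → ℂ, (∀ x ∈ A, ‖f x‖ = r) ∧ ∀ x ∈ A, ∀ y ∈ A, dist (f x) (f y) = dist x y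

variable {E : Type*} [NormedAddCommGroup E] [InnerProductSpace ℝ E]

lemma isOrtho_vectorSpan_of_isCompleteBetween {A B : Set E}
    (hAB : (unitDistGraph E).IsCompleteBetween A B) :
    vectorSpan ℝ A ⟂ vectorSpan ℝ B := by
  have hBA := hAB.symm
  refine Submodule.isOrtho_span.2 ?_
  rintro _ ⟨x, hx, y, hy, rfl⟩ _ ⟨z, hz, w, hw, rfl⟩
  exact EuclideanGeometry.inner_vsub_vsub_of_dist_eq_of_dist_eq
    (Eq.trans (hBA hw hy) (Eq.symm (hBA hz hy))) (Eq.trans (hBA hw hx) (Eq.symm (hBA hz hx)))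

lemma two_le_finrank_vectorSpan_of_dist_eq {A : Finset E} (hA : 3 ≤ #A) {c : E} {R : ℝ}
    (hc : ∀ x ∈ A, dist x c = R) : 2 ≤ finrank ℝ (vectorSpan ℝ (A : Set E)) := by
  obtain ⟨T, hTA, hT⟩ := exists_subset_card_eq hA
  let p : Fin 3 → E := fun i ↦ T.equivFin.symm (Fin.cast hT.symm i)
  have hpA : Set.range p ⊆ A := by
    rintro _ ⟨i, rfl⟩
    exact hTA (T.equivFin.symm _).2
  have hp : Function.Injective p :=
    Subtype.val_injective.comp (T.equivFin.symm.injective.comp (Fin.cast_injective _))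
  have hind : AffineIndependent ℝ p :=
    EuclideanGeometry.Cospherical.affineIndependent ⟨c, R, hc⟩ hpA hp
  have := finiteDimensional_vectorSpan_of_finite ℝ A.finite_toSet
  rw [← hind.finrank_vectorSpan (Fintype.card_fin 3)]
  exact Submodule.finrank_mono (vectorSpan_mono ℝ hpA)

variable {A B : Finset E}

lemma two_le_finrank_vectorSpan_of_isCompleteBetween
    (hAB : (unitDistGraph E).IsCompleteBetween A B) (hA : 3 ≤ #A) (hB : B.Nonempty) :
    2 ≤ finrank ℝ (vectorSpan ℝ (A : Set E)) :=
  two_le_finrank_vectorSpan_of_dist_eq hA fun _ hx ↦ hAB hx hB.choose_spec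

lemma dist_eq_one_of_inner_eq_zero {a b x y : E} (hab : dist a b = 1) (hxa : dist x a = 1)
    (hyb : dist y b = 1) (h : inner ℝ (x - b) (y - a) = 0) : dist x y = 1 := by
  have hident : ‖x - y‖ ^ 2 =
      ‖x - a‖ ^ 2 + ‖y - b‖ ^ 2 - ‖a - b‖ ^ 2 - 2 * inner ℝ (x - b) (y - a) := by
    simp only [← real_inner_self_eq_norm_sq, inner_sub_left, inner_sub_right]
    rw [real_inner_comm x y, real_inner_comm x a, real_inner_comm y b, real_inner_comm a b]
    ring
  rw [← dist_eq_norm x y, ← dist_eq_norm x a, ← dist_eq_norm y b, ← dist_eq_norm a b, hab, hxa,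
    hyb, h] at hident
  nlinarith [dist_nonneg (x := x) (y := y)]

lemma isCircular_norm_orthogonalProjection {U : Submodule ℝ E} (hU : finrank ℝ U = 2)
    [U.HasOrthogonalProjection] (hA : ∀ x ∈ A, ∀ y ∈ A, x - y ∈ U) {c : E} {R : ℝ}
    (hc : ∀ x ∈ A, dist x c = R) {a : E} (ha : a ∈ A) :
    IsCircular A ‖U.orthogonalProjectionOnto (a - c)‖ := by
  have : FiniteDimensional ℝ U := .of_finrank_pos (by omega)
  let φ : U ≃ₗᵢ[ℝ] ℂ :=
    (stdOrthonormalBasis ℝ U).equiv Complex.orthonormalBasisOneI (finCongr hU)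
  refine ⟨fun x ↦ φ (U.orthogonalProjectionOnto (x - c)), fun x hx ↦ ?_, fun x hx y hy ↦ ?_⟩
  · have hperp : Uᗮ.orthogonalProjectionOnto (x - c) = Uᗮ.orthogonalProjectionOnto (a - c) := by
      rw [← sub_eq_zero, ← map_sub, sub_sub_sub_cancel_right]
      exact Submodule.orthogonalProjectionOnto_apply_of_mem_orthogonal
        (U.le_orthogonal_orthogonal (hA x hx a ha))
    have hxc := Submodule.norm_sq_eq_add_norm_sq_projection (x - c) U
    have hac := Submodule.norm_sq_eq_add_norm_sq_projection (a - c) U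
    rw [← dist_eq_norm, hc x hx, hperp] at hxc
    rw [← dist_eq_norm, hc a ha] at hac
    rw [φ.norm_map, ← sq_eq_sq₀ (norm_nonneg _) (norm_nonneg _)]
    linarith
  · rw [φ.dist_map, dist_eq_norm, ← map_sub, sub_sub_sub_cancel_right, dist_eq_norm]
    exact (U.mem_iff_norm_starProjection _).1 (hA x hx y hy)

section DimensionFour

variable [FiniteDimensional ℝ E]

lemma vectorSpan_eq_orthogonal_of_isCompleteBetween (hE : finrank ℝ E = 4)
    (hAB : (unitDistGraph E).IsCompleteBetween A B) (hA : 3 ≤ #A) (hB : 3 ≤ #B) :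
    vectorSpan ℝ (A : Set E) = (vectorSpan ℝ (B : Set E))ᗮ := by
  have hA2 := two_le_finrank_vectorSpan_of_isCompleteBetween hAB hA (card_pos.1 (by omega))
  have hB2 := two_le_finrank_vectorSpan_of_isCompleteBetween hAB.symm hB (card_pos.1 (by omega))
  have hsum := (vectorSpan ℝ (B : Set E)).finrank_add_finrank_orthogonal
  exact Submodule.eq_of_le_of_finrank_le (isOrtho_vectorSpan_of_isCompleteBetween hAB) (by omega)

lemma finrank_vectorSpan_of_isCompleteBetween (hE : finrank ℝ E = 4)
    (hAB : (unitDistGraph E).IsCompleteBetween A B) (hA : 3 ≤ #A) (hB : 3 ≤ #B) :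
    finrank ℝ (vectorSpan ℝ (A : Set E)) = 2 := by
  have hA2 := two_le_finrank_vectorSpan_of_isCompleteBetween hAB hA (card_pos.1 (by omega))
  have hB2 := two_le_finrank_vectorSpan_of_isCompleteBetween hAB.symm hB (card_pos.1 (by omega))
  have hsum := (vectorSpan ℝ (B : Set E)).finrank_add_finrank_orthogonal
  rw [← vectorSpan_eq_orthogonal_of_isCompleteBetween hE hAB hA hB] at hsum
  omega

theorem isBicliqueClosed_unitDistGraph (hE : finrank ℝ E = 4) :
    IsBicliqueClosed (unitDistGraph E) 3 := by
  intro A B hA hB hAB x y hx hy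
  have hyA : (unitDistGraph E).IsCompleteBetween (insert y A : Finset E) B := by
    intro z hz b hb
    obtain rfl | hz := mem_insert.1 hz
    exacts [hy b hb, hAB hz hb]
  have hxB : (unitDistGraph E).IsCompleteBetween A (insert x B : Finset E) := by
    intro a ha z hz
    obtain rfl | hz := mem_insert.1 hz
    exacts [(hx a ha).symm, hAB ha hz]
  have hcardA : 3 ≤ #(insert y A) := hA.ge.trans (card_le_card (subset_insert _ _))
  have hcardB : 3 ≤ #(insert x B) := hB.ge.trans (card_le_card (subset_insert _ _))
  obtain ⟨a, ha⟩ : A.Nonempty := card_pos.1 (by omega)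
  obtain ⟨b, hb⟩ : B.Nonempty := card_pos.1 (by omega)
  have hya : y - a ∈ vectorSpan ℝ (A : Set E) := by
    rw [vectorSpan_eq_orthogonal_of_isCompleteBetween hE hAB hA.ge hB.ge,
      ← vectorSpan_eq_orthogonal_of_isCompleteBetween hE hyA hcardA hB.ge]
    exact vsub_mem_vectorSpan ℝ (mem_insert_self _ _) (mem_insert_of_mem ha)
  have hxb : x - b ∈ (vectorSpan ℝ (A : Set E))ᗮ := by
    rw [← vectorSpan_eq_orthogonal_of_isCompleteBetween hE hxB.symm hcardB hA.ge]
    exact vsub_mem_vectorSpan ℝ (mem_insert_self _ _) (mem_insert_of_mem hb)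
  exact dist_eq_one_of_inner_eq_zero (hAB ha hb) (hx a ha) (hy b hb)
    (Submodule.inner_left_of_mem_orthogonal hya hxb)

lemma exists_isCircular_of_isCompleteBetween (hE : finrank ℝ E = 4)
    (hAB : (unitDistGraph E).IsCompleteBetween A B)
    (hA : 3 ≤ #A) (hB : 3 ≤ #B) :
    ∃ r₁ r₂, r₁ ^ 2 + r₂ ^ 2 = 1 ∧ IsCircular A r₁ ∧ IsCircular B r₂ := by
  obtain ⟨a, ha⟩ : A.Nonempty := card_pos.1 (by omega)
  obtain ⟨b, hb⟩ : B.Nonempty := card_pos.1 (by omega)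
  have hBA := hAB.symm
  have hAU := vectorSpan_eq_orthogonal_of_isCompleteBetween hE hAB hA hB
  have hArank := finrank_vectorSpan_of_isCompleteBetween hE hAB hA hB
  set U := vectorSpan ℝ (B : Set E)
  refine ⟨‖Uᗮ.orthogonalProjectionOnto (a - b)‖, ‖U.orthogonalProjectionOnto (b - a)‖, ?_,
    isCircular_norm_orthogonalProjection (hAU ▸ hArank) (fun x hx y hy ↦ ?_)
      (fun x hx ↦ hAB hx hb) ha,
    isCircular_norm_orthogonalProjection
      (finrank_vectorSpan_of_isCompleteBetween hE hBA hB hA)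
      (fun x hx y hy ↦ vsub_mem_vectorSpan ℝ hx hy) (fun x hx ↦ hBA hx ha) hb⟩
  · have hsq := Submodule.norm_sq_eq_add_norm_sq_projection (a - b) U
    rw [← dist_eq_norm, hAB ha hb] at hsq
    rw [← neg_sub a b, map_neg, norm_neg]
    linarith
  · rw [← hAU]
    exact vsub_mem_vectorSpan ℝ hx hy

end DimensionFour

end Lenz

section Circle

open ComplexConjugate

lemma dist_sq_eq_of_norm_eq {r : ℝ} (hr : 0 < r) {z w : ℂ} (hz : ‖z‖ = r) (hw : ‖w‖ = r) :
    dist z w ^ 2 = 2 * r ^ 2 * (1 - (w / z).re) := by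
  have hz0 : z ≠ 0 := norm_pos_iff.1 (hz ▸ hr)
  have hwz : ‖w / z‖ = 1 := by rw [norm_div, hz, hw, div_self hr.ne']
  have hfactor : z - w = z * (1 - w / z) := by field_simp
  rw [dist_eq_norm, hfactor, norm_mul, hz, mul_pow, ← Complex.normSq_eq_norm_sq,
    Complex.normSq_sub, Complex.normSq_eq_norm_sq (w / z), hwz]
  simp only [map_one, one_mul, Complex.conj_re]
  ring

lemma dist_le_one_iff_of_norm_eq {r : ℝ} (hr : 0 < r) {z w : ℂ} (hz : ‖z‖ = r) (hw : ‖w‖ = r) :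
    dist z w ≤ 1 ↔ 1 - 1 / (2 * r ^ 2) ≤ (w / z).re := by
  rw [← sq_le_one_iff₀ dist_nonneg, dist_sq_eq_of_norm_eq hr hz hw, sub_le_comm,
    le_div_iff₀' (by positivity)]

lemma dist_eq_one_iff_of_norm_eq {r : ℝ} (hr : 0 < r) {z w : ℂ} (hz : ‖z‖ = r) (hw : ‖w‖ = r) :
    dist z w = 1 ↔ (w / z).re = 1 - 1 / (2 * r ^ 2) := by
  rw [← pow_eq_one_iff_of_nonneg dist_nonneg two_ne_zero, dist_sq_eq_of_norm_eq hr hz hw,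
    eq_sub_iff_add_eq', ← eq_sub_iff_add_eq, div_eq_iff (by positivity), mul_comm (1 - _), eq_comm]

lemma card_edgesIn_le_one_of_abs_sub {V : Type*} {G : SimpleGraph V} {X : Finset V} {θ : V → ℝ}
    {φ : ℝ} (hθ : Set.InjOn θ X) (hle : ∀ x ∈ X, ∀ y ∈ X, |θ x - θ y| ≤ φ)
    (hadj : ∀ x ∈ X, ∀ y ∈ X, G.Adj x y → |θ x - θ y| = φ) : #(edgesIn G X) ≤ 1 := by
  -- The endpoints of an edge are the minimum and the maximum of `θ` on `X`.
  have hpair : ∀ s ∈ edgesIn G X, ∃ a ∈ X, ∃ b ∈ X, s = {a, b} ∧ θ b = θ a + φ := by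
    intro s hs
    obtain ⟨a, b, ha, hb, hab, rfl⟩ := exists_eq_pair_of_mem_edgesIn hs
    have h := hadj a ha b hb hab
    obtain hlt | hlt := le_total (θ a) (θ b)
    · rw [abs_of_nonpos (by linarith)] at h
      exact ⟨a, ha, b, hb, rfl, by linarith⟩
    · rw [abs_of_nonneg (by linarith)] at h
      exact ⟨b, hb, a, ha, pair_comm a b, by linarith⟩
  refine card_le_one.2 fun s hs t ht ↦ ?_
  obtain ⟨a, ha, b, hb, rfl, hab⟩ := hpair s hs
  obtain ⟨c, hc, d, hd, rfl, hcd⟩ := hpair t ht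
  have had := abs_le.1 (hle a ha d hd)
  have hbc := abs_le.1 (hle b hb c hc)
  rw [hθ ha hc (by linarith), hθ hb hd (by linarith)]

lemma re_div_eq_cos_arg_sub {u z w : ℂ} (hu : u ≠ 0) (hz : ‖z‖ = ‖u‖) (hw : ‖w‖ = ‖u‖) :
    (w / z).re = Real.cos ((z / u).arg - (w / u).arg) := by
  have hexp {x : ℂ} (hx : ‖x‖ = ‖u‖) : Complex.exp ((x / u).arg * Complex.I) = x / u := by
    have h := Complex.norm_mul_exp_arg_mul_I (x / u)
    rwa [norm_div, hx, div_self (norm_ne_zero_iff.2 hu), Complex.ofReal_one, one_mul] at h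
  have hquot : w / z =
      Complex.exp ((w / u).arg * Complex.I) / Complex.exp ((z / u).arg * Complex.I) := by
    rw [hexp hw, hexp hz, div_div_div_cancel_right₀ hu]
  rw [hquot, ← Complex.exp_sub, ← sub_mul, ← Complex.ofReal_sub,
    Complex.exp_ofReal_mul_I_re, ← Real.cos_neg, neg_sub]

/-- A set of diameter at most `1` on a circle of radius at least `√2 / 2` lies in a half circle,
where chord lengths are monotone in the angle. -/
theorem card_edgesIn_le_one_of_half_le_sq {P : Finset ℂ} {r : ℝ} (hr : 0 < r)
    (hr2 : 1 / 2 ≤ r ^ 2) (hP : ∀ z ∈ P, ‖z‖ = r) (hd : ∀ z ∈ P, ∀ w ∈ P, dist z w ≤ 1) :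
    #(edgesIn (unitDistGraph ℂ) P) ≤ 1 := by
  obtain rfl | ⟨u, hu⟩ := P.eq_empty_or_nonempty
  · exact (card_edgesIn_le_choose _ _).trans zero_le_one
  have hu0 : u ≠ 0 := norm_pos_iff.1 (hP u hu ▸ hr)
  set θ : ℂ → ℝ := fun z ↦ (z / u).arg
  have hcos : ∀ z ∈ P, ∀ w ∈ P, (w / z).re = Real.cos (θ z - θ w) := fun z hz w hw ↦
    re_div_eq_cos_arg_sub hu0 ((hP z hz).trans (hP u hu).symm) ((hP w hw).trans (hP u hu).symm)
  have hquarter : ∀ z ∈ P, |θ z| ≤ Real.pi / 2 := by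
    intro z hz
    rw [Complex.abs_arg_le_pi_div_two_iff]
    have h := (dist_le_one_iff_of_norm_eq hr (hP u hu) (hP z hz)).1 (hd u hu z hz)
    have : 1 / (2 * r ^ 2) ≤ 1 := (div_le_one (by positivity)).2 (by linarith)
    linarith
  have harccos : ∀ z ∈ P, ∀ w ∈ P, |θ z - θ w| = Real.arccos (w / z).re := by
    intro z hz w hw
    rw [hcos z hz w hw, ← Real.cos_abs, Real.arccos_cos (abs_nonneg _)]
    linarith [abs_sub (θ z) (θ w), hquarter z hz, hquarter w hw]
  refine card_edgesIn_le_one_of_abs_sub (θ := θ) (φ := Real.arccos (1 - 1 / (2 * r ^ 2)))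
    (fun z hz w hw h ↦ ?_) (fun z hz w hw ↦ ?_) (fun z hz w hw hzw ↦ ?_)
  · refine (div_left_inj' hu0).1 (Complex.ext_norm_arg ?_ h)
    simp only [norm_div, hP z hz, hP w hw]
  · rw [harccos z hz w hw]
    exact Real.antitone_arccos
      ((dist_le_one_iff_of_norm_eq hr (hP z hz) (hP w hw)).1 (hd z hz w hw))
  · rw [harccos z hz w hw, (dist_eq_one_iff_of_norm_eq hr (hP z hz) (hP w hw)).1 hzw]

lemma eq_or_eq_conj_of_norm_eq_of_re_eq {z w : ℂ} (hnorm : ‖z‖ = ‖w‖) (hre : z.re = w.re) :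
    z = w ∨ z = conj w := by
  have him : z.im ^ 2 = w.im ^ 2 := by
    have h := congrArg (· ^ 2) hnorm
    simp only [Complex.sq_norm, Complex.normSq_apply, hre] at h
    linarith
  exact (sq_eq_sq_iff_eq_or_eq_neg.1 him).imp (Complex.ext hre) (Complex.ext hre)

lemma im_mul_nonneg_of_re_le {ρ z : ℂ} (hnorm : ‖ρ‖ = ‖z‖) (hρ : 0 ≤ ρ.im) (hz : z.im ≤ 0)
    (hre : ρ.re ≤ z.re) : 0 ≤ (ρ * z).im := by
  have hsq : ρ.re ^ 2 + ρ.im ^ 2 = z.re ^ 2 + z.im ^ 2 := by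
    have h := congrArg (· ^ 2) hnorm
    simp only [Complex.sq_norm, Complex.normSq_apply] at h
    linarith
  rw [Complex.mul_im]
  obtain hx | hx := le_total 0 z.re
  · obtain hc | hc := le_total 0 ρ.re
    · have : -z.im ≤ ρ.im := (sq_le_sq₀ (neg_nonneg.2 hz) hρ).1 (by nlinarith)
      nlinarith
    · nlinarith [mul_nonneg_of_nonpos_of_nonpos hc hz, mul_nonneg hρ hx]
  · have : ρ.im ≤ -z.im := (sq_le_sq₀ hρ (neg_nonneg.2 hz)).1 (by nlinarith)
    nlinarith

/-- A rotation by `ρ` maps the points of `S` in the closed lower half plane to those in the closed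
upper half plane, and the inverse rotation maps them back. -/
lemma odd_card_of_mul_mem {S : Finset ℂ} {ρ : ℂ} (hρ : ‖ρ‖ = 1) (him : 0 < ρ.im)
    (hS : ∀ z ∈ S, ‖z‖ = 1) (hre : ∀ z ∈ S, ρ.re ≤ z.re) (h1 : 1 ∈ S)
    (hmul : ∀ z ∈ S, ρ * z ∈ S) (hconj : ∀ z ∈ S, conj ρ * z ∈ S) : Odd #S := by
  have hρ0 : ρ ≠ 0 := norm_ne_zero_iff.1 (hρ ▸ one_ne_zero)
  have hinter : {z ∈ S | z.im ≤ 0} ∩ {z ∈ S | 0 ≤ z.im} = {1} := by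
    ext z
    simp only [mem_inter, mem_filter, mem_singleton]
    constructor
    · rintro ⟨⟨hz, hz1⟩, -, hz2⟩
      have hz0 : z.im = 0 := le_antisymm hz1 hz2
      have habs : |z.re| = 1 := (Complex.abs_re_eq_norm.2 hz0).trans (hS z hz)
      have hlt : |ρ.re| < 1 := (Complex.abs_re_lt_norm.2 him.ne').trans_eq hρ
      have hpos : -1 < z.re := (abs_lt.1 hlt).1.trans_le (hre z hz)
      exact Complex.ext ((eq_or_eq_neg_of_abs_eq habs).resolve_right hpos.ne') hz0
    · rintro rfl
      simp [h1]
  have hcard : #{z ∈ S | z.im ≤ 0} = #{z ∈ S | 0 ≤ z.im} := by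
    refine le_antisymm (card_le_card_of_injOn (ρ * ·) (fun z hz ↦ ?_)
      (mul_right_injective₀ hρ0).injOn) (card_le_card_of_injOn (conj ρ * ·) (fun z hz ↦ ?_)
      (mul_right_injective₀ ((map_ne_zero _).2 hρ0)).injOn)
    · obtain ⟨hz, hz0⟩ := mem_filter.1 hz
      exact mem_filter.2 ⟨hmul z hz,
        im_mul_nonneg_of_re_le (hρ.trans (hS z hz).symm) him.le hz0 (hre z hz)⟩
    · obtain ⟨hz, hz0⟩ := mem_filter.1 hz
      have h : 0 ≤ (ρ * conj z).im := im_mul_nonneg_of_re_le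
        (by rw [hρ, RCLike.norm_conj, hS z hz]) him.le (neg_nonpos.2 hz0) (hre z hz)
      refine mem_filter.2 ⟨hconj z hz, ?_⟩
      simp only [Complex.mul_im, Complex.conj_re, Complex.conj_im] at h ⊢
      linarith
  have hunion : {z ∈ S | z.im ≤ 0} ∪ {z ∈ S | 0 ≤ z.im} = S := by
    rw [← filter_or, filter_true_of_mem fun z _ ↦ le_total _ _]
  have hsum := card_union_add_card_inter {z ∈ S | z.im ≤ 0} {z ∈ S | 0 ≤ z.im}
  rw [hunion, hinter, card_singleton, hcard] at hsum
  exact ⟨#{z ∈ S | 0 ≤ z.im} - 1, by omega⟩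

variable {P : Finset ℂ} {r : ℝ}

lemma neighborsIn_subset_pair_of_norm_eq (hr : 0 < r) (hP : ∀ z ∈ P, ‖z‖ = r) {ρ : ℂ}
    (hρ : ‖ρ‖ = 1) (hre : ρ.re = 1 - 1 / (2 * r ^ 2)) {z : ℂ} (hz : z ∈ P) :
    neighborsIn (unitDistGraph ℂ) P z ⊆ {ρ * z, conj ρ * z} := by
  intro w hw
  obtain ⟨hwP, hzw⟩ := mem_neighborsIn.1 hw
  have hz0 : z ≠ 0 := norm_pos_iff.1 (hP z hz ▸ hr)
  have hnorm : ‖w / z‖ = ‖ρ‖ := by rw [norm_div, hP w hwP, hP z hz, div_self hr.ne', hρ]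
  rw [mem_insert, mem_singleton, ← div_eq_iff hz0, ← div_eq_iff hz0]
  exact eq_or_eq_conj_of_norm_eq_of_re_eq hnorm
    (((dist_eq_one_iff_of_norm_eq hr (hP z hz) (hP w hwP)).1 hzw).trans hre.symm)

lemma exists_rotation_of_mem_neighborsIn (hr : 0 < r) (hP : ∀ z ∈ P, ‖z‖ = r) {z w : ℂ}
    (hz : z ∈ P) (hw : w ∈ neighborsIn (unitDistGraph ℂ) P z) :
    ∃ ρ : ℂ, ‖ρ‖ = 1 ∧ 0 ≤ ρ.im ∧ ρ.re = 1 - 1 / (2 * r ^ 2) := by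
  obtain ⟨hwP, hzw⟩ := mem_neighborsIn.1 hw
  have hnorm : ‖w / z‖ = 1 := by rw [norm_div, hP w hwP, hP z hz, div_self hr.ne']
  have hre := (dist_eq_one_iff_of_norm_eq hr (hP z hz) (hP w hwP)).1 hzw
  obtain him | him := le_total 0 (w / z).im
  · exact ⟨w / z, hnorm, him, hre⟩
  · exact ⟨conj (w / z), (RCLike.norm_conj _).trans hnorm, neg_nonneg.2 him, hre⟩

lemma card_neighborsIn_le_two_of_norm_eq (hr : 0 < r) (hP : ∀ z ∈ P, ‖z‖ = r) {z : ℂ}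
    (hz : z ∈ P) : #(neighborsIn (unitDistGraph ℂ) P z) ≤ 2 := by
  obtain h | ⟨w, hw⟩ := (neighborsIn (unitDistGraph ℂ) P z).eq_empty_or_nonempty
  · simp [h]
  · obtain ⟨ρ, hρ, -, hre⟩ := exists_rotation_of_mem_neighborsIn hr hP hz hw
    exact (card_le_card (neighborsIn_subset_pair_of_norm_eq hr hP hρ hre hz)).trans card_le_two

theorem card_edgesIn_le_card_of_norm_eq (hr : 0 < r) (hP : ∀ z ∈ P, ‖z‖ = r) :
    #(edgesIn (unitDistGraph ℂ) P) ≤ #P := by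
  have h := card_interedges_le_mul_of_forall_card_neighborsIn_le (unitDistGraph ℂ)
    fun z hz ↦ card_neighborsIn_le_two_of_norm_eq hr hP hz
  rw [card_interedges_self] at h
  omega

lemma card_edgesIn_eq_card_of_two_le_card_neighborsIn (hr : 0 < r) (hP : ∀ z ∈ P, ‖z‖ = r)
    (h : ∀ z ∈ P, 2 ≤ #(neighborsIn (unitDistGraph ℂ) P z)) :
    #(edgesIn (unitDistGraph ℂ) P) = #P := by
  have hsum := card_nsmul_le_sum P _ 2 h
  rw [sum_card_neighborsIn_self, smul_eq_mul] at hsum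
  exact (card_edgesIn_le_card_of_norm_eq hr hP).antisymm (by omega)

/-- If there are as many edges as points, every point has both of its possible neighbours, so that
`P` is invariant under rotation by the angle that a unit chord subtends. -/
theorem card_edgesIn_lt_card_of_even (hr : 0 < r) (hP : ∀ z ∈ P, ‖z‖ = r)
    (hd : ∀ z ∈ P, ∀ w ∈ P, dist z w ≤ 1) (hne : P.Nonempty) (heven : Even #P) :
    #(edgesIn (unitDistGraph ℂ) P) < #P := by
  by_contra! hle
  obtain ⟨u, hu⟩ := hne
  have hu0 : u ≠ 0 := norm_pos_iff.1 (hP u hu ▸ hr)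
  have hdeg : ∀ z ∈ P, #(neighborsIn (unitDistGraph ℂ) P z) = 2 :=
    card_neighborsIn_eq_of_le _ (fun z hz ↦ card_neighborsIn_le_two_of_norm_eq hr hP hz)
      (by omega)
  obtain ⟨w, hw⟩ := card_pos.1 (hdeg u hu ▸ two_pos)
  obtain ⟨ρ, hρ, him, hre⟩ := exists_rotation_of_mem_neighborsIn hr hP hu hw
  have hnbr : ∀ z ∈ P, neighborsIn (unitDistGraph ℂ) P z = {ρ * z, conj ρ * z} := fun z hz ↦
    eq_of_subset_of_card_le (neighborsIn_subset_pair_of_norm_eq hr hP hρ hre hz)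
      (card_le_two.trans (hdeg z hz).ge)
  have him' : 0 < ρ.im := by
    refine him.lt_of_ne' fun h ↦ ?_
    have hconj : conj ρ = ρ := Complex.conj_eq_iff_im.2 h
    have := hdeg u hu
    rw [hnbr u hu, hconj, pair_eq_singleton, card_singleton] at this
    omega
  have hmul : ∀ z ∈ P, ρ * z ∈ P ∧ conj ρ * z ∈ P := fun z hz ↦
    ⟨neighborsIn_subset (hnbr z hz ▸ mem_insert_self _ _),
      neighborsIn_subset (hnbr z hz ▸ mem_insert_of_mem (mem_singleton_self _))⟩
  have hodd : Odd #(P.image (· / u)) := by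
    refine odd_card_of_mul_mem hρ him' ?_ ?_ (mem_image.2 ⟨u, hu, div_self hu0⟩) ?_ ?_ <;>
      rw [forall_mem_image] <;> intro z hz
    · rw [norm_div, hP z hz, hP u hu, div_self hr.ne']
    · exact hre.trans_le ((dist_le_one_iff_of_norm_eq hr (hP u hu) (hP z hz)).1 (hd u hu z hz))
    · exact mem_image.2 ⟨ρ * z, (hmul z hz).1, mul_div_assoc _ _ _⟩
    · exact mem_image.2 ⟨conj ρ * z, (hmul z hz).2, mul_div_assoc _ _ _⟩
  rw [card_image_of_injective _ fun _ _ ↦ (div_left_inj' hu0).1] at hodd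
  exact Nat.not_odd_iff_even.2 heven hodd

end Circle

section UpperBound

lemma IsCircular.pos {E : Type*} [MetricSpace E] {A : Finset E} {r : ℝ} (hA : IsCircular A r)
    (hcard : 1 < #A) : 0 < r := by
  obtain ⟨f, hf, hdist⟩ := hA
  obtain ⟨x, hx, y, hy, hxy⟩ := one_lt_card.1 hcard
  refine (hf x hx ▸ norm_nonneg _).lt_of_ne' fun hr ↦ hxy (dist_eq_zero.1 ?_)
  rw [← hdist x hx y hy, norm_eq_zero.1 ((hf x hx).trans hr), norm_eq_zero.1 ((hf y hy).trans hr),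
    dist_self]

lemma IsCircular.exists_finset_complex {E : Type*} [MetricSpace E] {A : Finset E} {r : ℝ}
    (hA : IsCircular A r) (hd : ∀ x ∈ A, ∀ y ∈ A, dist x y ≤ 1) :
    ∃ P : Finset ℂ, #P = #A ∧ #(edgesIn (unitDistGraph ℂ) P) = #(edgesIn (unitDistGraph E) A) ∧
      (∀ z ∈ P, ‖z‖ = r) ∧ ∀ z ∈ P, ∀ w ∈ P, dist z w ≤ 1 := by
  obtain ⟨f, hf, hdist⟩ := hA
  have hinj : Set.InjOn f A := fun x hx y hy hxy ↦
    dist_eq_zero.1 ((hdist x hx y hy).symm.trans (dist_eq_zero.2 hxy))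
  refine ⟨A.image f, card_image_of_injOn hinj, card_edgesIn_image hinj fun x hx y hy ↦ ?_,
    forall_mem_image.2 hf, ?_⟩
  · rw [unitDistGraph_adj, unitDistGraph_adj, hdist x hx y hy]
  · simp only [forall_mem_image]
    exact fun x hx y hy ↦ (hdist x hx y hy).trans_le (hd x hx y hy)

lemma card_edgesIn_circles_le_F₂ {P Q : Finset ℂ} {r₁ r₂ : ℝ} (hr₁ : 0 < r₁) (hr₂ : 0 < r₂)
    (hr : 1 / 2 ≤ r₂ ^ 2) (hP : ∀ z ∈ P, ‖z‖ = r₁) (hQ : ∀ z ∈ Q, ‖z‖ = r₂)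
    (hPd : ∀ z ∈ P, ∀ w ∈ P, dist z w ≤ 1) (hQd : ∀ z ∈ Q, ∀ w ∈ Q, dist z w ≤ 1)
    (hne : P.Nonempty) :
    #(edgesIn (unitDistGraph ℂ) P) + #(edgesIn (unitDistGraph ℂ) Q) + #P * #Q ≤
      F₂ (#P + #Q) := by
  have h₁ := mul_add_add_one_le_F₂ (b := #Q) (card_edgesIn_le_card_of_norm_eq hr₁ hP)
    (card_edgesIn_lt_card_of_even hr₁ hP hPd hne)
  have h₂ := card_edgesIn_le_one_of_half_le_sq hr₂ hr hQ hQd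
  omega

variable {E : Type*} [NormedAddCommGroup E] [InnerProductSpace ℝ E] [FiniteDimensional ℝ E]

theorem card_edgesIn_union_le_F₂ (hE : finrank ℝ E = 4) {A B : Finset E}
    (hAB : (unitDistGraph E).IsCompleteBetween A B) (hA : 3 ≤ #A) (hB : 3 ≤ #B)
    (hAd : ∀ x ∈ A, ∀ y ∈ A, dist x y ≤ 1) (hBd : ∀ x ∈ B, ∀ y ∈ B, dist x y ≤ 1) :
    #(edgesIn (unitDistGraph E) (A ∪ B)) ≤ F₂ #(A ∪ B) := by
  obtain ⟨r₁, r₂, hr, hAr, hBr⟩ := exists_isCircular_of_isCompleteBetween hE hAB hA hB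
  have hr₁ : 0 < r₁ := hAr.pos (by omega)
  have hr₂ : 0 < r₂ := hBr.pos (by omega)
  obtain ⟨P, hPcard, hPe, hP, hPd⟩ := hAr.exists_finset_complex hAd
  obtain ⟨Q, hQcard, hQe, hQ, hQd⟩ := hBr.exists_finset_complex hBd
  rw [card_edgesIn_union_of_isCompleteBetween hAB,
    card_union_of_disjoint (disjoint_coe.1 hAB.disjoint), ← hPe, ← hQe, ← hPcard, ← hQcard]
  obtain hhalf | hhalf : 1 / 2 ≤ r₂ ^ 2 ∨ 1 / 2 ≤ r₁ ^ 2 := by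
    by_contra! h
    linarith
  · exact card_edgesIn_circles_le_F₂ hr₁ hr₂ hhalf hP hQ hPd hQd (card_pos.1 (by omega))
  · rw [add_comm #(edgesIn _ P), mul_comm #P, add_comm #P]
    exact card_edgesIn_circles_le_F₂ hr₂ hr₁ hhalf hQ hP hQd hPd (card_pos.1 (by omega))

variable {X : Finset E} {t : ℕ}

/-- The set `Y` is a maximal Lenz configuration, in which each outside point has at most four
neighbours. -/
lemma exists_card_edgesIn_le_F₂_add (hE : finrank ℝ E = 4)
    (hd : ∀ x ∈ X, ∀ y ∈ X, dist x y ≤ 1) (ht : 2 ≤ t)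
    (hT : ∃ T ⊆ X, #T = 3 ∧ t < #(commonNeighborsIn (unitDistGraph E) X T)) :
    ∃ Y ⊆ X, t + 4 ≤ #Y ∧ #(edgesIn (unitDistGraph E) X) ≤
      F₂ #Y + 4 * #(X \ Y) + #(edgesIn (unitDistGraph E) (X \ Y)) := by
  obtain ⟨T, hTX, hT, hcommon⟩ := hT
  obtain ⟨A, hAX, B, hBX, hA, hB, hAB, hout⟩ :=
    (isBicliqueClosed_unitDistGraph hE).exists_biclique ht hTX hT hcommon
  have hYX : A ∪ B ⊆ X := union_subset hAX hBX
  refine ⟨A ∪ B, hYX, ?_, ?_⟩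
  · rw [card_union_of_disjoint (disjoint_coe.1 hAB.disjoint)]
    omega
  have hY := card_edgesIn_union_le_F₂ hE hAB (by omega) (by omega)
    (fun x hx y hy ↦ hd x (hAX hx) y (hAX hy)) fun x hx y hy ↦ hd x (hBX hx) y (hBX hy)
  have hcross := card_interedges_le_mul_of_forall_card_neighborsIn_le (unitDistGraph E)
    (S := X \ (A ∪ B)) fun x hx ↦ hout x (mem_sdiff.1 hx).1 (mem_sdiff.1 hx).2
  have hsplit := card_edgesIn_union (unitDistGraph E) (sdiff_disjoint (t := X) (s := A ∪ B))
  rw [sdiff_union_of_subset hYX] at hsplit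
  omega

theorem four_mul_card_edgesIn_add_four_le (hE : finrank ℝ E = 4) (X : Finset E)
    (hd : ∀ x ∈ X, ∀ y ∈ X, dist x y ≤ 1) (hX : X.Nonempty) :
    4 * #(edgesIn (unitDistGraph E) X) + 4 ≤ #X ^ 2 + 6 * #X := by
  induction X using Finset.strongInduction with | H X ih =>
  by_contra! hlt
  have hcard : 8 ≤ #X := by
    by_contra! hsmall
    have hchoose := card_edgesIn_le_choose (unitDistGraph E) X
    rw [Nat.choose_two_right] at hchoose
    have := hX.card_pos
    interval_cases #X <;> omega
  obtain ⟨Y, hYX, hY, hle⟩ := exists_card_edgesIn_le_F₂_add hE hd (by norm_num)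
    (exists_four_lt_card_commonNeighborsIn (unitDistGraph E) hcard hlt)
  have hsplit : #(X \ Y) + #Y = #X := card_sdiff_add_card_eq_card hYX
  have hF := four_mul_F₂_le #Y
  obtain hW | hW := (X \ Y).eq_empty_or_nonempty
  · have hempty := card_edgesIn_le_choose (unitDistGraph E) (X \ Y)
    simp only [hW, card_empty, Nat.choose_zero_succ] at hle hempty hsplit
    nlinarith
  · have hih := ih (X \ Y) (sdiff_ssubset hYX (card_pos.1 (by omega)))
      (fun x hx y hy ↦ hd x (mem_sdiff.1 hx).1 y (mem_sdiff.1 hy).1) hW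
    nlinarith [Nat.mul_le_mul_right #(X \ Y) hY]

theorem card_edgesIn_le_F₂ (hE : finrank ℝ E = 4) (hd : ∀ x ∈ X, ∀ y ∈ X, dist x y ≤ 1)
    (hX : 45 ≤ #X) : #(edgesIn (unitDistGraph E) X) ≤ F₂ #X := by
  by_contra! hlt
  have hsq := sq_le_four_mul_F₂ #X
  obtain ⟨Y, hYX, hY, hle⟩ := exists_card_edgesIn_le_F₂_add hE hd (by norm_num)
    (exists_six_lt_card_commonNeighborsIn (unitDistGraph E) hX (by omega))
  have hsplit : #(X \ Y) + #Y = #X := card_sdiff_add_card_eq_card hYX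
  have hF := four_mul_F₂_le #Y
  obtain hW | hW := (X \ Y).eq_empty_or_nonempty
  · have hempty := card_edgesIn_le_choose (unitDistGraph E) (X \ Y)
    simp only [hW, card_empty, Nat.choose_zero_succ, zero_add] at hle hempty hsplit
    rw [hsplit] at hle
    omega
  · have hcrude := four_mul_card_edgesIn_add_four_le hE (X \ Y)
      (fun x hx y hy ↦ hd x (mem_sdiff.1 hx).1 y (mem_sdiff.1 hy).1) hW
    nlinarith [Nat.mul_le_mul_right #(X \ Y) hY]

end UpperBound

section Construction

open Polynomial (nthRootsFinset)

lemma re_circleMap_div {r : ℝ} (hr : r ≠ 0) (θ θ' : ℝ) :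
    (circleMap 0 r θ' / circleMap 0 r θ).re = Real.cos (θ' - θ) := by
  rw [circleMap_zero, circleMap_zero, mul_div_mul_left _ _ (Complex.ofReal_ne_zero.2 hr),
    ← Complex.exp_sub, ← sub_mul, ← Complex.ofReal_sub, Complex.exp_ofReal_mul_I_re]

lemma exists_subset_Icc_card_eq {φ : ℝ} (hφ : 0 < φ) {b : ℕ} (hb : 2 ≤ b) :
    ∃ Θ : Finset ℝ, #Θ = b ∧ 0 ∈ Θ ∧ φ ∈ Θ ∧ ∀ θ ∈ Θ, 0 ≤ θ ∧ θ ≤ φ := by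
  obtain ⟨Θ, hΘ, hcard⟩ := (Set.Ioo_infinite hφ).exists_subset_card_eq (b - 2)
  refine ⟨insert 0 (insert φ Θ), ?_, mem_insert_self _ _,
    mem_insert_of_mem (mem_insert_self _ _), ?_⟩
  · rw [card_insert_of_notMem, card_insert_of_notMem fun h ↦ (hΘ h).2.false, hcard]
    · omega
    · rw [mem_insert, not_or]
      exact ⟨hφ.ne, fun h ↦ (hΘ h).1.false⟩
  · simp only [mem_insert, forall_eq_or_imp]
    exact ⟨⟨le_rfl, hφ.le⟩, ⟨hφ.le, le_rfl⟩, fun θ hθ ↦ ⟨(hΘ hθ).1.le, (hΘ hθ).2.le⟩⟩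

lemma exists_arc {b : ℕ} (hb : 2 ≤ b) {r : ℝ} (hr : 0 < r) (hr2 : 1 / 2 ≤ r ^ 2) :
    ∃ Q : Finset ℂ, #Q = b ∧ (∀ z ∈ Q, ‖z‖ = r) ∧ (∀ z ∈ Q, ∀ w ∈ Q, dist z w ≤ 1) ∧
      #(edgesIn (unitDistGraph ℂ) Q) = 1 := by
  -- `φ` is the angle subtended by a unit chord.
  set c := 1 - 1 / (2 * r ^ 2) with hc
  have hc0 : 0 ≤ c := sub_nonneg.2 ((div_le_one (by positivity)).2 (by linarith))
  have hc1 : c < 1 := sub_lt_self _ (by positivity)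
  set φ := Real.arccos c
  have hcos : Real.cos φ = c := Real.cos_arccos (by linarith) hc1.le
  have hnorm : ∀ θ, ‖circleMap 0 r θ‖ = r := fun θ ↦ by rw [norm_circleMap_zero, abs_of_pos hr]
  obtain ⟨Θ, hΘcard, h0Θ, hφΘ, hΘ⟩ := exists_subset_Icc_card_eq (Real.arccos_pos.2 hc1) hb
  have hinj : Set.InjOn (circleMap 0 r) Θ := by
    refine (injOn_circleMap_of_abs_sub_le hr.ne' (a := -Real.pi) (b := Real.pi) ?_).mono
      fun θ hθ ↦ ?_
    · rw [← neg_add', abs_neg, abs_of_pos (by positivity), two_mul]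
    · rw [Set.uIoc_of_le (by linarith [Real.pi_pos])]
      exact ⟨by linarith [Real.pi_pos, (hΘ θ hθ).1], (hΘ θ hθ).2.trans (Real.arccos_le_pi c)⟩
  have hnormQ : ∀ z ∈ Θ.image (circleMap 0 r), ‖z‖ = r := forall_mem_image.2 fun θ _ ↦ hnorm θ
  have hdist : ∀ z ∈ Θ.image (circleMap 0 r), ∀ w ∈ Θ.image (circleMap 0 r), dist z w ≤ 1 := by
    simp only [forall_mem_image]
    intro θ hθ θ' hθ'
    rw [dist_le_one_iff_of_norm_eq hr (hnorm θ) (hnorm θ'), re_circleMap_div hr.ne', ← hc, ← hcos,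
      ← Real.cos_abs (_ - _)]
    refine Real.cos_le_cos_of_nonneg_of_le_pi (abs_nonneg _) (Real.arccos_le_pi c) (abs_le.2 ?_)
    constructor <;> linarith [hΘ θ hθ, hΘ θ' hθ']
  have hadj : (unitDistGraph ℂ).Adj (circleMap 0 r 0) (circleMap 0 r φ) := by
    rw [unitDistGraph_adj, dist_eq_one_iff_of_norm_eq hr (hnorm _) (hnorm _),
      re_circleMap_div hr.ne', sub_zero, hcos]
  have hedge := pair_mem_edgesIn.2
    ⟨mem_image_of_mem (circleMap 0 r) h0Θ, mem_image_of_mem (circleMap 0 r) hφΘ, hadj⟩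
  exact ⟨_, (card_image_of_injOn hinj).trans hΘcard, hnormQ, hdist,
    (card_edgesIn_le_one_of_half_le_sq hr hr2 hnormQ hdist).antisymm (card_pos.2 ⟨_, hedge⟩)⟩

lemma norm_one_sub_exp_pow (n j : ℕ) :
    ‖1 - Complex.exp (2 * Real.pi * Complex.I / n) ^ j‖ = 2 * |Real.sin (j * (Real.pi / n))| := by
  have hexp : Complex.exp (2 * Real.pi * Complex.I / n) ^ j =
      Complex.exp (Complex.I * (2 * (j * (Real.pi / n)) : ℝ)) := by
    rw [← Complex.exp_nat_mul]
    congr 1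
    push_cast
    ring
  rw [norm_sub_rev, hexp, Complex.norm_exp_I_mul_ofReal_sub_one, mul_div_cancel_left₀ _ two_ne_zero,
    norm_mul, Real.norm_two, Real.norm_eq_abs]

lemma abs_sin_mul_pi_div_le {m j : ℕ} (hj : j < 2 * m + 1) :
    |Real.sin (j * (Real.pi / (2 * m + 1 : ℕ)))| ≤
      |Real.sin (m * (Real.pi / (2 * m + 1 : ℕ)))| := by
  have hθ : (2 * m + 1) * (Real.pi / (2 * m + 1 : ℕ)) = Real.pi := by
    push_cast
    field_simp
  set θ := Real.pi / (2 * m + 1 : ℕ)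
  have hθ0 : 0 < θ := by positivity
  have hmono : ∀ k : ℕ, k ≤ m → |Real.sin (k * θ)| ≤ |Real.sin (m * θ)| := by
    intro k hk
    have hk' : k * θ ≤ m * θ := by gcongr
    have hk0 : 0 ≤ k * θ := by positivity
    refine abs_le_abs_of_nonneg (Real.sin_nonneg_of_nonneg_of_le_pi hk0 (by linarith)) ?_
    exact Real.sin_le_sin_of_le_of_le_pi_div_two (by linarith) (by linarith) hk'
  obtain hjm | hjm := le_or_gt j m
  · exact hmono j hjm
  · have hrefl : Real.pi - j * θ = (2 * m + 1 - j : ℕ) * θ := by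
      rw [Nat.cast_sub hj.le, ← hθ]
      push_cast
      ring
    rw [← Real.sin_pi_sub, hrefl]
    exact hmono _ (by omega)

lemma norm_sub_le_of_pow_eq_one {m : ℕ} {η ξ : ℂ} (hη : η ^ (2 * m + 1) = 1)
    (hξ : ξ ^ (2 * m + 1) = 1) :
    ‖η - ξ‖ ≤ ‖1 - Complex.exp (2 * Real.pi * Complex.I / (2 * m + 1 : ℕ)) ^ m‖ := by
  have hη1 : ‖η‖ = 1 := Complex.norm_eq_one_of_pow_eq_one hη (Nat.succ_ne_zero _)
  have hη0 : η ≠ 0 := norm_ne_zero_iff.1 (hη1 ▸ one_ne_zero)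
  obtain ⟨j, hj, hjξ⟩ := (Complex.isPrimitiveRoot_exp (2 * m + 1)
    (Nat.succ_ne_zero _)).eq_pow_of_pow_eq_one (ξ := ξ / η) (by rw [div_pow, hη, hξ, div_one])
  calc ‖η - ξ‖ = ‖η * (1 - ξ / η)‖ := by rw [mul_sub, mul_one, mul_div_cancel₀ _ hη0]
    _ = ‖1 - ξ / η‖ := by rw [norm_mul, hη1, one_mul]
    _ ≤ _ := by
      rw [← hjξ, norm_one_sub_exp_pow, norm_one_sub_exp_pow]
      exact mul_le_mul_of_nonneg_left (abs_sin_mul_pi_div_le hj) zero_le_two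

lemma norm_one_sub_pow_eq_of_pow_add_eq_one {ζ : ℂ} {k l : ℕ} (hl : l ≠ 0)
    (hζ : ζ ^ (k + l) = 1) : ‖1 - ζ ^ k‖ = ‖1 - ζ ^ l‖ := by
  have hζ1 : ‖ζ‖ = 1 := Complex.norm_eq_one_of_pow_eq_one hζ (by omega)
  have hpow : 1 - ζ ^ k = -(ζ ^ k * (1 - ζ ^ l)) := by
    rw [mul_sub, ← pow_add, hζ]
    ring
  rw [hpow, norm_neg, norm_mul, norm_pow, hζ1, one_pow, one_mul]

lemma exists_ne_norm_sub_eq {m : ℕ} (hm : m ≠ 0) {ζ η : ℂ} (hζ : IsPrimitiveRoot ζ (2 * m + 1))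
    (hη : η ^ (2 * m + 1) = 1) :
    ∃ ξ ξ' : ℂ, ξ ≠ ξ' ∧ (ξ ^ (2 * m + 1) = 1 ∧ ‖η - ξ‖ = ‖1 - ζ ^ m‖) ∧
      ξ' ^ (2 * m + 1) = 1 ∧ ‖η - ξ'‖ = ‖1 - ζ ^ m‖ := by
  have hη1 : ‖η‖ = 1 := Complex.norm_eq_one_of_pow_eq_one hη (Nat.succ_ne_zero _)
  have hη0 : η ≠ 0 := norm_ne_zero_iff.1 (hη1 ▸ one_ne_zero)
  have hpow : ∀ k, (η * ζ ^ k) ^ (2 * m + 1) = 1 := fun k ↦ by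
    rw [mul_pow, hη, ← pow_mul', pow_mul, hζ.pow_eq_one, one_pow, one_mul]
  have hnorm : ∀ k, ‖η - η * ζ ^ k‖ = ‖1 - ζ ^ k‖ := fun k ↦ by
    rw [← mul_one_sub, norm_mul, hη1, one_mul]
  have hsymm : ‖1 - ζ ^ (m + 1)‖ = ‖1 - ζ ^ m‖ :=
    norm_one_sub_pow_eq_of_pow_add_eq_one hm (by rw [← hζ.pow_eq_one]; ring)
  refine ⟨η * ζ ^ m, η * ζ ^ (m + 1), fun h ↦ ?_, ⟨hpow m, hnorm m⟩,
    hpow (m + 1), (hnorm (m + 1)).trans hsymm⟩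
  have := hζ.pow_inj (by omega) (by omega) (mul_left_cancel₀ hη0 h)
  omega

/-- The regular `(2 * m + 1)`-gon whose longest diagonals have length `1`. -/
lemma exists_polygon {m : ℕ} (hm : m ≠ 0) :
    ∃ (P : Finset ℂ) (r : ℝ), 0 < r ∧ #P = 2 * m + 1 ∧ (∀ z ∈ P, ‖z‖ = r) ∧
      (∀ z ∈ P, ∀ w ∈ P, dist z w ≤ 1) ∧ #(edgesIn (unitDistGraph ℂ) P) = #P := by
  have hζ := Complex.isPrimitiveRoot_exp (2 * m + 1) (Nat.succ_ne_zero _)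
  have hle := fun {η ξ} ↦ norm_sub_le_of_pow_eq_one (m := m) (η := η) (ξ := ξ)
  set ζ := Complex.exp (2 * Real.pi * Complex.I / (2 * m + 1 : ℕ))
  have hnbr := fun {η} ↦ exists_ne_norm_sub_eq (η := η) hm hζ
  set d := ‖1 - ζ ^ m‖
  have hd : 0 < d :=
    norm_pos_iff.2 (sub_ne_zero.2 (hζ.pow_ne_one_of_pos_of_lt hm (by omega)).symm)
  have hinj : Function.Injective fun z : ℂ ↦ z / d := fun _ _ ↦
    (div_left_inj' (Complex.ofReal_ne_zero.2 hd.ne')).1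
  have hdist : ∀ η ξ : ℂ, dist (η / d) (ξ / d) = ‖η - ξ‖ / d := fun η ξ ↦ by
    rw [dist_eq_norm, ← sub_div, norm_div, Complex.norm_real, Real.norm_of_nonneg hd.le]
  have hmem {η : ℂ} : η ∈ nthRootsFinset (2 * m + 1) (1 : ℂ) ↔ η ^ (2 * m + 1) = 1 :=
    Polynomial.mem_nthRootsFinset (Nat.succ_pos _) 1
  set P := (nthRootsFinset (2 * m + 1) (1 : ℂ)).image (· / (d : ℂ))
  have hP : ∀ z ∈ P, ‖z‖ = 1 / d := forall_mem_image.2 fun η hη ↦ by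
    rw [norm_div, Complex.norm_eq_one_of_pow_eq_one (hmem.1 hη) (Nat.succ_ne_zero _),
      Complex.norm_real, Real.norm_of_nonneg hd.le]
  have hdeg : ∀ z ∈ P, 2 ≤ #(neighborsIn (unitDistGraph ℂ) P z) := by
    refine forall_mem_image.2 fun η hη ↦ ?_
    have hadj : ∀ ξ, ξ ^ (2 * m + 1) = 1 ∧ ‖η - ξ‖ = d →
        ξ / d ∈ neighborsIn (unitDistGraph ℂ) P (η / d) := fun ξ ⟨hξ, hηξ⟩ ↦
      mem_neighborsIn.2 ⟨mem_image_of_mem _ (hmem.2 hξ),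
        unitDistGraph_adj.2 (by rw [hdist, hηξ, div_self hd.ne'])⟩
    obtain ⟨ξ, ξ', hne, hξ, hξ'⟩ := hnbr (hmem.1 hη)
    exact one_lt_card.2 ⟨_, hadj ξ hξ, _, hadj ξ' hξ', hinj.ne hne⟩
  refine ⟨P, 1 / d, by positivity, ?_, hP, ?_,
    card_edgesIn_eq_card_of_two_le_card_neighborsIn (by positivity) hP hdeg⟩
  · rw [card_image_of_injective _ hinj, hζ.card_nthRootsFinset]
  · simp only [P, forall_mem_image, hdist]
    exact fun η hη ξ hξ ↦ (div_le_one hd).2 (hle (hmem.1 hη) (hmem.1 hξ))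

variable {E : Type*} [NormedAddCommGroup E] [InnerProductSpace ℝ E] [FiniteDimensional ℝ E]

lemma exists_isometry_isometry (hE : finrank ℝ E = 4) :
    ∃ f g : ℂ → E, Isometry f ∧ Isometry g ∧ ∀ z w, dist (f z) (g w) ^ 2 = ‖z‖ ^ 2 + ‖w‖ ^ 2 := by
  have hfinrank : finrank ℝ (WithLp 2 (ℂ × ℂ)) = finrank ℝ E := by
    rw [(WithLp.linearEquiv 2 ℝ (ℂ × ℂ)).finrank_eq, finrank_prod, Complex.finrank_real_complex, hE]
  let φ : WithLp 2 (ℂ × ℂ) ≃ₗᵢ[ℝ] E :=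
    (stdOrthonormalBasis ℝ _).equiv (stdOrthonormalBasis ℝ E) (finCongr hfinrank)
  refine ⟨fun z ↦ φ (WithLp.toLp 2 (z, 0)), fun w ↦ φ (WithLp.toLp 2 (0, w)),
    φ.isometry.comp (.of_dist_eq (WithLp.dist_toLp_fst 2 ℂ ℂ)),
    φ.isometry.comp (.of_dist_eq (WithLp.dist_toLp_snd 2 ℂ ℂ)), fun z w ↦ ?_⟩
  rw [φ.dist_map, dist_eq_norm, WithLp.prod_norm_sq_eq_of_L2]
  simp

lemma exists_card_edgesIn_eq_of_circles (hE : finrank ℝ E = 4) {P Q : Finset ℂ} {r₁ r₂ : ℝ}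
    (hr : r₁ ^ 2 + r₂ ^ 2 = 1) (hP : ∀ z ∈ P, ‖z‖ = r₁) (hQ : ∀ z ∈ Q, ‖z‖ = r₂)
    (hPd : ∀ z ∈ P, ∀ w ∈ P, dist z w ≤ 1) (hQd : ∀ z ∈ Q, ∀ w ∈ Q, dist z w ≤ 1) :
    ∃ X : Finset E, #X = #P + #Q ∧ (∀ x ∈ X, ∀ y ∈ X, dist x y ≤ 1) ∧
      #(edgesIn (unitDistGraph E) X) =
        #(edgesIn (unitDistGraph ℂ) P) + #(edgesIn (unitDistGraph ℂ) Q) + #P * #Q := by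
  obtain ⟨f, g, hf, hg, hfg⟩ := exists_isometry_isometry hE
  have hdist : ∀ z ∈ P, ∀ w ∈ Q, dist (f z) (g w) = 1 := fun z hz w hw ↦
    (pow_eq_one_iff_of_nonneg dist_nonneg two_ne_zero).1 (by rw [hfg, hP z hz, hQ w hw, hr])
  have hcomplete : (unitDistGraph E).IsCompleteBetween (P.image f : Finset E) (Q.image g) := by
    intro x hx y hy
    obtain ⟨z, hz, rfl⟩ := mem_image.1 hx
    obtain ⟨w, hw, rfl⟩ := mem_image.1 hy
    exact hdist z hz w hw
  have himage {S : Finset ℂ} {h : ℂ → E} (hh : Isometry h) :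
      #(edgesIn (unitDistGraph E) (S.image h)) = #(edgesIn (unitDistGraph ℂ) S) :=
    card_edgesIn_image hh.injective.injOn fun z _ w _ ↦ by
      rw [unitDistGraph_adj, unitDistGraph_adj, hh.dist_eq]
  refine ⟨P.image f ∪ Q.image g, ?_, ?_, ?_⟩
  · rw [card_union_of_disjoint (disjoint_coe.1 hcomplete.disjoint),
      card_image_of_injective _ hf.injective, card_image_of_injective _ hg.injective]
  · simp only [forall_mem_union, forall_mem_image, hf.dist_eq, hg.dist_eq]
    exact ⟨fun z hz ↦ ⟨hPd z hz, fun w hw ↦ (hdist z hz w hw).le⟩, fun w hw ↦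
      ⟨fun z hz ↦ (dist_comm _ _).trans_le (hdist z hz w hw).le, hQd w hw⟩⟩
  · rw [card_edgesIn_union_of_isCompleteBetween hcomplete, himage hf, himage hg,
      card_image_of_injective _ hf.injective, card_image_of_injective _ hg.injective]

theorem exists_card_edgesIn_eq_F₂ (hE : finrank ℝ E = 4) {n : ℕ} (hn : 5 ≤ n) :
    ∃ X : Finset E, #X = n ∧ (∀ x ∈ X, ∀ y ∈ X, dist x y ≤ 1) ∧
      #(edgesIn (unitDistGraph E) X) = F₂ n := by
  obtain ⟨P, r, hr, hPcard, hP, hPd, hPe⟩ := exists_polygon (m := n / 4) (by omega)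
  have hr2 : r ^ 2 < 1 / 2 := by
    by_contra! hhalf
    have := card_edgesIn_le_one_of_half_le_sq hr hhalf hP hPd
    omega
  have hs : √(1 - r ^ 2) ^ 2 = 1 - r ^ 2 := Real.sq_sqrt (by linarith)
  obtain ⟨Q, hQcard, hQ, hQd, hQe⟩ := exists_arc (b := n - #P) (by omega)
    (r := √(1 - r ^ 2)) (Real.sqrt_pos.2 (by linarith)) (by linarith)
  obtain ⟨X, hXcard, hXd, hXe⟩ :=
    exists_card_edgesIn_eq_of_circles hE (by linarith) hP hQ hPd hQd
  have hn' : #P + #Q = n := by omega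
  refine ⟨X, hXcard.trans hn', hXd, ?_⟩
  rw [hXe, ← hn', F₂_eq_mul_add_add_one (by rw [hn', hPcard]), hPe, hQe]
  ring

end Construction

theorem max_edges_diameter_graph_R4_general {E : Type*} [NormedAddCommGroup E]
    [InnerProductSpace ℝ E] (hE : finrank ℝ E = 4) {n : ℕ} (hn : 45 ≤ n) :
    (∀ X : Finset E, #X = n → (∀ x ∈ X, ∀ y ∈ X, dist x y ≤ 1) →
      #(edgesIn (unitDistGraph E) X) ≤ F₂ n) ∧
    (∃ X : Finset E, #X = n ∧ (∀ x ∈ X, ∀ y ∈ X, dist x y ≤ 1) ∧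
      #(edgesIn (unitDistGraph E) X) = F₂ n) :=
  have : FiniteDimensional ℝ E := .of_finrank_pos (by omega)
  ⟨fun _ hX hd ↦ hX ▸ card_edgesIn_le_F₂ hE hd (hX ▸ hn),
    exists_card_edgesIn_eq_F₂ hE (by omega)⟩

lemma unitPairs_eq_edgesIn (X : Finset (EuclideanSpace ℝ (Fin 4))) :
    unitPairs X = edgesIn (unitDistGraph _) X := by
  rw [unitPairs, edgesIn]
  simp only [Set.Pairwise, unitDistGraph_adj, dist_eq_norm, mem_coe]

theorem max_edges_diameter_graph_R4 (n : ℕ) (hn : n ≥ 52) :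
    (∀ X : Finset (EuclideanSpace ℝ (Fin 4)), X.card = n →
      (∀ x ∈ X, ∀ y ∈ X, ‖x - y‖ ≤ 1) → (unitPairs X).card ≤ F₂ n) ∧
    (∃ X : Finset (EuclideanSpace ℝ (Fin 4)), X.card = n ∧
      (∀ x ∈ X, ∀ y ∈ X, ‖x - y‖ ≤ 1) ∧ (unitPairs X).card = F₂ n) := by
  have h := max_edges_diameter_graph_R4_general (E := EuclideanSpace ℝ (Fin 4))
    finrank_euclideanSpace_fin (le_trans (by norm_num) hn)
  simpa only [unitPairs_eq_edgesIn, dist_eq_norm] using h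
end
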